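/- There exist positive numerical constants ρ_r ≤ 1/10, ρ_s, and c such that the following holds. Under the observation model with incoherence parameter ν, if r ≤ ρ_r · n2 · ν⁻¹ · (log n1)⁻² and m ≤ ρ_s · n1 · n2, then with probability at least 1 − c·n1^{−10} over the random support Ω and the random signs, there exist matrices W, F, H ∈ ℝ^{n1×n2} such that, with λ = 1/√n1: UVᵀ + W = λ(sign(S0) + F + P_Ω H), W ∈ T⊥, ‖W‖ ≤ 1/2, P_Ω F = 0, ‖F‖_∞ ≤ 1/2, and ‖P_Ω H‖_F ≤ 1/(260√2). -/

import Mathlib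

open Matrix
open scoped BigOperators

/-- Frobenius norm of a real matrix. -/
noncomputable def frob {n1 n2 : ℕ} (A : Matrix (Fin n1) (Fin n2) ℝ) : ℝ :=
  Real.sqrt (∑ i, ∑ j, A i j ^ 2)

/-- Entrywise ℓ¹ norm. -/
noncomputable def l1norm {n1 n2 : ℕ} (A : Matrix (Fin n1) (Fin n2) ℝ) : ℝ :=
  ∑ i, ∑ j, |A i j|

/-- Trace inner product ⟨A,B⟩ = trace(AᵀB). -/
noncomputable def minner {n1 n2 : ℕ} (A B : Matrix (Fin n1) (Fin n2) ℝ) : ℝ :=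
  ∑ i, ∑ j, A i j * B i j

/-- Spectral norm (largest singular value), as the ℓ²→ℓ² operator norm. -/
noncomputable def spec {n1 n2 : ℕ} (A : Matrix (Fin n1) (Fin n2) ℝ) : ℝ :=
  sSup {c : ℝ | ∃ x : Fin n2 → ℝ, (∑ j, x j ^ 2) ≤ 1 ∧
    c = Real.sqrt (∑ i, (∑ j, A i j * x j) ^ 2)}

/-- Nuclear norm (sum of singular values), via duality with the spectral norm. -/
noncomputable def nuc {n1 n2 : ℕ} (A : Matrix (Fin n1) (Fin n2) ℝ) : ℝ :=
  sSup {c : ℝ | ∃ B : Matrix (Fin n1) (Fin n2) ℝ, spec B ≤ 1 ∧ c = minner A B}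

/-- P_Ω: the matrix agreeing with `M` on `Ω` and zero off `Ω`. -/
noncomputable def projS {n1 n2 : ℕ} (Ω : Finset (Fin n1 × Fin n2))
    (M : Matrix (Fin n1) (Fin n2) ℝ) : Matrix (Fin n1) (Fin n2) ℝ :=
  Matrix.of fun i j => if (i, j) ∈ Ω then M i j else 0

/-- Entrywise sign matrix. -/
noncomputable def signM {n1 n2 : ℕ} (A : Matrix (Fin n1) (Fin n2) ℝ) :
    Matrix (Fin n1) (Fin n2) ℝ :=
  Matrix.of fun i j => Real.sign (A i j)

/-- The tangent space T = {UQᵀ + RVᵀ}. -/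
def memT {n1 n2 r : ℕ} (U : Matrix (Fin n1) (Fin r) ℝ) (V : Matrix (Fin n2) (Fin r) ℝ)
    (M : Matrix (Fin n1) (Fin n2) ℝ) : Prop :=
  ∃ (Q : Matrix (Fin n2) (Fin r) ℝ) (R : Matrix (Fin n1) (Fin r) ℝ), M = U * Qᵀ + R * Vᵀ

/-- Membership in T⊥, the orthogonal complement of the tangent space. -/
def memTperp {n1 n2 r : ℕ} (U : Matrix (Fin n1) (Fin r) ℝ) (V : Matrix (Fin n2) (Fin r) ℝ)
    (W : Matrix (Fin n1) (Fin n2) ℝ) : Prop :=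
  ∀ M, memT U V M → minner W M = 0

/-- (L̂, Ŝ) is a global minimizer of the √PCP objective
`‖L‖_* + λ‖S‖₁ + μ‖L + S − D‖_F`. -/
def IsRootPCPMin {n1 n2 : ℕ} (D : Matrix (Fin n1) (Fin n2) ℝ) (lam mu : ℝ)
    (Lh Sh : Matrix (Fin n1) (Fin n2) ℝ) : Prop :=
  ∀ L S : Matrix (Fin n1) (Fin n2) ℝ,
    nuc Lh + lam * l1norm Sh + mu * frob (Lh + Sh - D) ≤
      nuc L + lam * l1norm S + mu * frob (L + S - D)

/-- (L̂, Ŝ) is a minimizer of StablePCP_c(δ):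
minimize `‖L‖_* + λ‖S‖₁` subject to `‖L + S − D‖_F ≤ δ`. -/
def IsStablePCPMin {n1 n2 : ℕ} (D : Matrix (Fin n1) (Fin n2) ℝ) (lam δ : ℝ)
    (Lh Sh : Matrix (Fin n1) (Fin n2) ℝ) : Prop :=
  frob (Lh + Sh - D) ≤ δ ∧
    ∀ L S : Matrix (Fin n1) (Fin n2) ℝ, frob (L + S - D) ≤ δ →
      nuc Lh + lam * l1norm Sh ≤ nuc L + lam * l1norm S

/-- Frobenius distance between pairs: ‖(L,S) − (L',S')‖_F. -/
noncomputable def pairDist {n1 n2 : ℕ} (L S L' S' : Matrix (Fin n1) (Fin n2) ℝ) : ℝ :=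
  Real.sqrt (frob (L - L') ^ 2 + frob (S - S') ^ 2)

/-- Sample space of the random sparsity model: a uniformly random support of
cardinality m together with iid uniform random signs. -/
abbrev SampleSpace (n1 n2 m : ℕ) : Type :=
  {Ω : Finset (Fin n1 × Fin n2) // Ω.card = m} × ((Fin n1 × Fin n2) → Bool)

/-- The sparse matrix S0 built from fixed magnitudes `a` and a random sample:
S0 vanishes off Ω and equals ±a on Ω according to the random signs. -/
noncomputable def sparseOf {n1 n2 m : ℕ} (a : Fin n1 × Fin n2 → ℝ) (ω : SampleSpace n1 n2 m) :
    Matrix (Fin n1) (Fin n2) ℝ :=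
  Matrix.of fun i j =>
    if (i, j) ∈ ω.1.1 then (if ω.2 (i, j) then a (i, j) else -a (i, j)) else 0

open Classical in
/-- Uniform probability of an event on a finite sample space. -/
noncomputable def unifProb {α : Type*} [Fintype α] (E : α → Prop) : ℝ :=
  ((Finset.univ.filter fun a => E a).card : ℝ) / (Fintype.card α : ℝ)

/-!
The certificate is `W = W₁ + W₂`. The golfing part is `W₁ = P_{T⊥} Y`, where `Y` vanishes on `Ω`
and `P_T Y` is very close to `UVᵀ`: for a matrix `Z` in `T` and a random set `Γ` to which every
entry belongs with probability `1 / Q`, the residual `Z - Q P_T P_Γ Z` has entries at most half as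
large as those of `Z`, and `⌈log₂ n₁⌉` such corrections with independent sets suffice. Working with
sets `Γ` sampled independently of `Ω` costs a factor two: the law of their union is invariant under
permutations of the entries, and the union leaves room for a set of cardinality `m` with
probability at least `1 / 2`, so a uniform `Ω` may be drawn from its complement.

The sign part is `W₂ = λ P_{T⊥} X` with `X = (1 - P_Ω P_T P_Ω)⁻¹ sign(S₀)`, which makes
`P_Ω P_{T⊥} X = sign(S₀)`. The inverse exists once `‖P_Ω P_T‖ < 1`; by incoherence this reduces to
bounds for random sums of rank-one matrices, one for each row and each column of the support, in
which the trace exponential can be controlled one increment at a time, without the Golden–Thompson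
inequality. Spectral norms of random matrices are bounded on a finite net of integer points.
-/

section UniformProbability

variable {α β : Type*} [Fintype α] [Fintype β]

theorem unifProb_eq_expect (E : α → Prop) [DecidablePred E] :
    unifProb E = 𝔼 a, if E a then (1 : ℝ) else 0 := by
  rw [Fintype.expect_eq_sum_div_card, Finset.sum_boole, unifProb]
  congr!

theorem unifProb_nonneg (E : α → Prop) : 0 ≤ unifProb E := by
  unfold unifProb
  positivity

theorem unifProb_le_one (E : α → Prop) : unifProb E ≤ 1 :=
  div_le_one_of_le₀ (Nat.cast_le.mpr (Finset.card_le_univ _)) (Nat.cast_nonneg _)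

theorem unifProb_le_expect {E : α → Prop} {f : α → ℝ} (hf : ∀ a, 0 ≤ f a)
    (hEf : ∀ a, E a → 1 ≤ f a) : unifProb E ≤ 𝔼 a, f a := by
  classical
  rw [unifProb_eq_expect]
  refine Finset.expect_le_expect fun a _ => ?_
  split_ifs with ha
  exacts [hEf a ha, hf a]

theorem unifProb_mono {E F : α → Prop} (h : ∀ a, E a → F a) : unifProb E ≤ unifProb F := by
  classical
  rw [unifProb_eq_expect F]
  exact unifProb_le_expect (fun a => by positivity) fun a ha => by simp [h a ha]

theorem unifProb_or_le (E F : α → Prop) :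
    unifProb (fun a => E a ∨ F a) ≤ unifProb E + unifProb F := by
  classical
  rw [unifProb_eq_expect E, unifProb_eq_expect F, ← Finset.expect_add_distrib]
  refine unifProb_le_expect (fun a => by positivity) fun a ha => ?_
  by_cases hE : E a <;> by_cases hF : F a <;> simp_all

theorem unifProb_exists_le {ι : Type*} (s : Finset ι) (E : ι → α → Prop) :
    unifProb (fun a => ∃ i ∈ s, E i a) ≤ ∑ i ∈ s, unifProb (E i) := by
  classical
  simp_rw [fun i => unifProb_eq_expect (E i)]
  rw [← Finset.expect_sum_comm]
  refine unifProb_le_expect (fun a => by positivity) ?_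
  rintro a ⟨i, hi, hE⟩
  calc (1 : ℝ) = if E i a then 1 else 0 := by rw [if_pos hE]
    _ ≤ ∑ i ∈ s, if E i a then 1 else 0 :=
        Finset.single_le_sum (f := fun i => if E i a then (1 : ℝ) else 0)
          (fun i _ => by positivity) hi

theorem unifProb_exists_le_card_mul {ι : Type*} (s : Finset ι) (E : ι → α → Prop) {δ : ℝ}
    (h : ∀ i ∈ s, unifProb (E i) ≤ δ) :
    unifProb (fun a => ∃ i ∈ s, E i a) ≤ s.card * δ := by
  simpa only [nsmul_eq_mul] using (unifProb_exists_le s E).trans (Finset.sum_le_card_nsmul s _ δ h)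

theorem unifProb_add_unifProb_not [Nonempty α] (E : α → Prop) :
    unifProb E + unifProb (fun a => ¬ E a) = 1 := by
  classical
  rw [unifProb_eq_expect, unifProb_eq_expect, ← Finset.expect_add_distrib,
    ← Fintype.expect_const (ι := α) (1 : ℝ)]
  refine Finset.expect_congr rfl fun a _ => ?_
  by_cases ha : E a <;> simp [ha]

theorem unifProb_equiv (e : α ≃ β) (E : β → Prop) : unifProb (fun a => E (e a)) = unifProb E := by
  classical
  rw [unifProb_eq_expect, unifProb_eq_expect]
  exact Fintype.expect_equiv e _ _ fun _ => rfl

theorem unifProb_prod (E : α × β → Prop) :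
    unifProb E = 𝔼 a, unifProb fun b => E (a, b) := by
  classical
  simp_rw [unifProb_eq_expect]
  exact Finset.expect_product _ _ _

theorem unifProb_prod_le {E : α × β → Prop} {B : α → Prop} {δ : ℝ} (hδ : 0 ≤ δ)
    (h : ∀ a, ¬ B a → unifProb (fun b => E (a, b)) ≤ δ) : unifProb E ≤ unifProb B + δ := by
  classical
  rcases isEmpty_or_nonempty α with hα | hα
  · simpa [unifProb] using hδ
  rw [unifProb_prod, unifProb_eq_expect B, ← Fintype.expect_const (ι := α) δ,
    ← Finset.expect_add_distrib]
  refine Finset.expect_le_expect fun a _ => ?_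
  by_cases ha : B a
  · simpa [ha] using (unifProb_le_one _).trans (le_add_of_nonneg_right hδ)
  · simpa [ha] using h a ha

theorem expect_pi_prod {ι : Type*} [Fintype ι] [DecidableEq ι] (f : ι → α → ℝ) :
    𝔼 x : ι → α, ∏ i, f i (x i) = ∏ i, 𝔼 a, f i a := by
  simp_rw [Fintype.expect_eq_sum_div_card]
  rw [Finset.prod_div_distrib, Finset.prod_univ_sum, Fintype.piFinset_univ]
  simp

theorem expect_pi_eval {ι : Type*} [Fintype ι] [DecidableEq ι] [Nonempty α] (f : α → ℝ) (i : ι) :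
    𝔼 x : ι → α, f (x i) = 𝔼 a, f a := by
  have hprod := expect_pi_prod fun j a => if j = i then f a else 1
  rw [Fintype.prod_eq_single (M := ℝ) i fun j hj => by simp [hj]] at hprod
  simpa only [Finset.prod_ite_eq', Finset.mem_univ, if_true] using hprod

theorem unifProb_le_exp_of_mgf_le {X : α → ℝ} {s θ b : ℝ} (hθ : 0 ≤ θ)
    (h : 𝔼 a, Real.exp (θ * X a) ≤ Real.exp b) :
    unifProb (fun a => s ≤ X a) ≤ Real.exp (b - θ * s) := by
  calc unifProb (fun a => s ≤ X a)
      ≤ 𝔼 a, Real.exp (θ * X a) * Real.exp (-(θ * s)) := by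
        refine unifProb_le_expect (fun a => by positivity) fun a ha => ?_
        rw [← Real.exp_add]
        exact Real.one_le_exp (by nlinarith [mul_le_mul_of_nonneg_left ha hθ])
    _ ≤ Real.exp (b - θ * s) := by
        rw [← Finset.expect_mul, sub_eq_add_neg, Real.exp_add]
        gcongr

end UniformProbability

section MomentGeneratingFunctions

variable {ι α : Type*} [Fintype ι] [DecidableEq ι] [Fintype α]

theorem unifProb_le_sum_le_exp_of_mgf_le {φ : α → ℝ} {κ v s : ℝ} (hκ : 0 < κ) (hv : 0 < v)
    (hs : 0 ≤ s) {c : ι → ℝ} (hc : ∑ i, c i ^ 2 ≤ v)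
    (hφ : ∀ i, 𝔼 a, Real.exp (φ a * (s / (2 * κ * v) * c i)) ≤
      Real.exp (κ * (s / (2 * κ * v) * c i) ^ 2)) :
    unifProb (fun x : ι → α => s ≤ ∑ i, φ (x i) * c i) ≤ Real.exp (-(s ^ 2 / (4 * κ * v))) := by
  -- Exponential Markov at the parameter minimizing `κ θ² v - θ s`.
  set θ := s / (2 * κ * v) with hθ
  have hmgf : 𝔼 x : ι → α, Real.exp (θ * ∑ i, φ (x i) * c i) ≤ Real.exp (κ * θ ^ 2 * v) := calc
    _ = ∏ i, 𝔼 a, Real.exp (φ a * (θ * c i)) := by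
        simp_rw [Finset.mul_sum, mul_left_comm θ, Real.exp_sum]
        exact expect_pi_prod fun i a => Real.exp (φ a * (θ * c i))
    _ ≤ ∏ i, Real.exp (κ * (θ * c i) ^ 2) :=
        Finset.prod_le_prod (fun i _ => Finset.expect_nonneg fun a _ => (Real.exp_pos _).le)
          fun i _ => hφ i
    _ = Real.exp (κ * θ ^ 2 * ∑ i, c i ^ 2) := by
        simp_rw [← Real.exp_sum, Finset.mul_sum, mul_pow, mul_assoc]
    _ ≤ Real.exp (κ * θ ^ 2 * v) := by gcongr
  refine (unifProb_le_exp_of_mgf_le (by positivity) hmgf).trans_eq (congrArg Real.exp ?_)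
  rw [hθ]
  field_simp
  ring

/-- The sign `±1` encoded by a boolean, as in the sample space of the random sparsity model. -/
def boolSign (b : Bool) : ℝ := if b then 1 else -1

theorem expect_exp_boolSign_mul (c : ℝ) : 𝔼 b, Real.exp (boolSign b * c) = Real.cosh c := by
  rw [Fintype.expect_eq_sum_div_card]
  simp [boolSign, Real.cosh_eq]

theorem expect_exp_sum_boolSign_mul (c : ι → ℝ) :
    𝔼 ε : ι → Bool, Real.exp (∑ i, boolSign (ε i) * c i) = ∏ i, Real.cosh (c i) := by
  simp_rw [Real.exp_sum, ← expect_exp_boolSign_mul]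
  exact expect_pi_prod fun i b => Real.exp (boolSign b * c i)

theorem unifProb_le_sum_boolSign_mul_le (c : ι → ℝ) {s v : ℝ} (hv : 0 < v) (hs : 0 ≤ s)
    (hc : ∑ i, c i ^ 2 ≤ v) :
    unifProb (fun ε : ι → Bool => s ≤ ∑ i, boolSign (ε i) * c i) ≤
      Real.exp (-(s ^ 2 / (2 * v))) := by
  have htail := unifProb_le_sum_le_exp_of_mgf_le (φ := boolSign) (κ := 1 / 2) (by norm_num) hv hs
    hc fun i => by
      rw [expect_exp_boolSign_mul]
      exact (Real.cosh_le_exp_half_sq _).trans_eq (by ring_nf)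
  exact htail.trans_eq (by ring_nf)

/-- The centred and rescaled indicator of an event of probability `1 / Q`, realised as the event
`x = 0` for `x` uniform in `Fin Q`. -/
def selector (Q : ℕ) (x : Fin Q) : ℝ := (if x.val = 0 then (Q : ℝ) else 0) - 1

variable {Q : ℕ}

theorem abs_selector_le (x : Fin Q) : |selector Q x| ≤ Q := by
  have hQ : (1 : ℝ) ≤ Q := by exact_mod_cast Fin.pos x
  unfold selector
  split_ifs <;> rw [abs_le] <;> constructor <;> linarith

theorem expect_ite_val_eq_zero (hQ : 0 < Q) (c : ℝ) :
    𝔼 x : Fin Q, (if x.val = 0 then c else 0) = c / Q := by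
  have : NeZero Q := ⟨hQ.ne'⟩
  rw [Fintype.expect_eq_sum_div_card]
  simp [Fin.val_eq_zero_iff]

theorem expect_selector (hQ : 0 < Q) : 𝔼 x, selector Q x = 0 := by
  have : Nonempty (Fin Q) := ⟨⟨0, hQ⟩⟩
  have hQ' : (Q : ℝ) ≠ 0 := by exact_mod_cast hQ.ne'
  simp_rw [selector, Finset.expect_sub_distrib, expect_ite_val_eq_zero hQ, Fintype.expect_const,
    div_self hQ', sub_self]

theorem expect_selector_sq_le (hQ : 0 < Q) : 𝔼 x, selector Q x ^ 2 ≤ Q := by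
  have : Nonempty (Fin Q) := ⟨⟨0, hQ⟩⟩
  have : (0 : ℝ) < Q := by exact_mod_cast hQ
  have hsq (x : Fin Q) :
      selector Q x ^ 2 = (if x.val = 0 then (Q : ℝ) ^ 2 - 2 * Q else 0) + 1 := by
    unfold selector
    split_ifs <;> ring
  simp_rw [hsq, Finset.expect_add_distrib, expect_ite_val_eq_zero hQ, Fintype.expect_const]
  field_simp
  linarith

theorem expect_exp_selector_mul_le (hQ : 0 < Q) (c : ℝ) :
    𝔼 x, Real.exp (selector Q x * c) ≤ Real.exp (Q ^ 2 / 2 * c ^ 2) := by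
  have : Nonempty (Fin Q) := ⟨⟨0, hQ⟩⟩
  have hQ' : (0 : ℝ) < Q := by exact_mod_cast hQ
  have hchord (x : Fin Q) :
      Real.exp (selector Q x * c) ≤ Real.cosh (Q * c) + Real.sinh (Q * c) / Q * selector Q x := by
    have hle : |selector Q x / Q| ≤ 1 := by
      rw [abs_div, abs_of_pos hQ', div_le_one hQ']
      exact abs_selector_le x
    calc Real.exp (selector Q x * c) = Real.exp (selector Q x / Q * (Q * c)) := by field_simp
      _ ≤ Real.cosh (Q * c) + selector Q x / Q * Real.sinh (Q * c) :=
          Real.exp_mul_le_cosh_add_mul_sinh hle _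
      _ = _ := by ring
  calc 𝔼 x, Real.exp (selector Q x * c)
      ≤ 𝔼 x, (Real.cosh (Q * c) + Real.sinh (Q * c) / Q * selector Q x) :=
        Finset.expect_le_expect fun x _ => hchord x
    _ = Real.cosh (Q * c) := by
        rw [Finset.expect_add_distrib, ← Finset.mul_expect, expect_selector hQ,
          Fintype.expect_const, mul_zero, add_zero]
    _ ≤ Real.exp (Q ^ 2 / 2 * c ^ 2) := (Real.cosh_le_exp_half_sq _).trans_eq (by ring_nf)

theorem expect_exp_selector_mul_le_of_mul_abs_le_one (hQ : 0 < Q) {c : ℝ} (hc : Q * |c| ≤ 1) :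
    𝔼 x, Real.exp (selector Q x * c) ≤ Real.exp (Q * c ^ 2) := by
  have : Nonempty (Fin Q) := ⟨⟨0, hQ⟩⟩
  have hquad (x : Fin Q) :
      Real.exp (selector Q x * c) ≤ 1 + c * selector Q x + c ^ 2 * selector Q x ^ 2 := by
    have hle : |selector Q x * c| ≤ 1 := by
      rw [abs_mul]
      exact (mul_le_mul_of_nonneg_right (abs_selector_le x) (abs_nonneg _)).trans hc
    linarith [(abs_le.mp (Real.abs_exp_sub_one_sub_id_le hle)).2, mul_pow (selector Q x) c 2]
  calc 𝔼 x, Real.exp (selector Q x * c)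
      ≤ 𝔼 x, (1 + c * selector Q x + c ^ 2 * selector Q x ^ 2) :=
        Finset.expect_le_expect fun x _ => hquad x
    _ = 1 + c ^ 2 * 𝔼 x, selector Q x ^ 2 := by
        rw [Finset.expect_add_distrib, Finset.expect_add_distrib, ← Finset.mul_expect,
          ← Finset.mul_expect, expect_selector hQ, Fintype.expect_const, mul_zero, add_zero]
    _ ≤ Q * c ^ 2 + 1 := by
        linarith [mul_le_mul_of_nonneg_left (expect_selector_sq_le hQ) (sq_nonneg c)]
    _ ≤ Real.exp (Q * c ^ 2) := Real.add_one_le_exp _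

theorem unifProb_le_sum_selector_mul_le (hQ : 0 < Q) (c : ι → ℝ) {s v : ℝ} (hv : 0 < v)
    (hs : 0 ≤ s) (hc : ∑ i, c i ^ 2 ≤ v) :
    unifProb (fun γ : ι → Fin Q => s ≤ ∑ i, selector Q (γ i) * c i) ≤
      Real.exp (-(s ^ 2 / (2 * (Q ^ 2 * v)))) := by
  have : (0 : ℝ) < Q := by exact_mod_cast hQ
  have htail := unifProb_le_sum_le_exp_of_mgf_le (φ := selector Q) (κ := Q ^ 2 / 2)
    (by positivity) hv hs hc fun i => expect_exp_selector_mul_le hQ _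
  exact htail.trans_eq (by ring_nf)

theorem unifProb_le_sum_selector_mul_le_of_abs_le (hQ : 0 < Q) {c : ι → ℝ} {b s : ℝ} (hb : 0 < b)
    (hs : 0 ≤ s) (hs2 : s ≤ 2) (hc : ∑ i, c i ^ 2 ≤ b) (hcb : ∀ i, |c i| ≤ b) :
    unifProb (fun γ : ι → Fin Q => s ≤ ∑ i, selector Q (γ i) * c i) ≤
      Real.exp (-(s ^ 2 / (4 * Q * b))) := by
  have hQ' : (0 : ℝ) < Q := by exact_mod_cast hQ
  refine unifProb_le_sum_le_exp_of_mgf_le hQ' hb hs hc fun i =>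
    expect_exp_selector_mul_le_of_mul_abs_le_one hQ ?_
  calc Q * |s / (2 * Q * b) * c i| = Q * (s / (2 * Q * b) * |c i|) := by
        rw [abs_mul, abs_of_nonneg (by positivity)]
    _ ≤ Q * (s / (2 * Q * b) * b) := by gcongr; exact hcb i
    _ = s / 2 := by field_simp
    _ ≤ 1 := by linarith

theorem unifProb_lt_abs_sum_selector_mul_le (hQ : 0 < Q) {c : ι → ℝ} {b s : ℝ} (hb : 0 < b)
    (hs : 0 ≤ s) (hs2 : s ≤ 2) (hc : ∑ i, c i ^ 2 ≤ b) (hcb : ∀ i, |c i| ≤ b) :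
    unifProb (fun γ : ι → Fin Q => s < |∑ i, selector Q (γ i) * c i|) ≤
      2 * Real.exp (-(s ^ 2 / (4 * Q * b))) := by
  have hpos := unifProb_le_sum_selector_mul_le_of_abs_le hQ hb hs hs2 hc hcb
  have hneg := unifProb_le_sum_selector_mul_le_of_abs_le hQ (c := -c) hb hs hs2
    (by simpa using hc) (by simpa using hcb)
  refine (unifProb_mono fun γ hγ => (lt_abs.mp hγ).imp le_of_lt fun h => ?_).trans
    ((unifProb_or_le _ _).trans ((add_le_add hpos hneg).trans_eq (two_mul _).symm))
  simpa using h.le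

end MomentGeneratingFunctions

section RandomSubsets

variable {ι : Type*} [Fintype ι] {m : ℕ} {ρ : ℝ}

theorem descFactorial_mul_pow_le {m N : ℕ} (h : m ≤ N) (a : ℕ) :
    m.descFactorial a * N ^ a ≤ N.descFactorial a * m ^ a := by
  induction a with
  | zero => simp
  | succ k ih =>
    have hfactor : (m - k) * N ≤ (N - k) * m := by
      rw [Nat.sub_mul, Nat.sub_mul, mul_comm m N]
      exact Nat.sub_le_sub_left (Nat.mul_le_mul_left k h) _
    calc m.descFactorial (k + 1) * N ^ (k + 1)
        = ((m - k) * N) * (m.descFactorial k * N ^ k) := by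
          rw [Nat.descFactorial_succ]; ring
      _ ≤ ((N - k) * m) * (N.descFactorial k * m ^ k) := Nat.mul_le_mul hfactor ih
      _ = N.descFactorial (k + 1) * m ^ (k + 1) := by rw [Nat.descFactorial_succ]; ring

theorem choose_mul_pow_le {m N : ℕ} (h : m ≤ N) (a : ℕ) :
    m.choose a * N ^ a ≤ N.choose a * m ^ a := by
  have hdesc := descFactorial_mul_pow_le h a
  rw [Nat.descFactorial_eq_factorial_mul_choose, Nat.descFactorial_eq_factorial_mul_choose,
    mul_assoc, mul_assoc] at hdesc
  exact Nat.le_of_mul_le_mul_left hdesc a.factorial_pos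

theorem choose_sub_sub_le_pow_mul_choose {a N : ℕ} (ha : a ≤ m) (hN : m ≤ N)
    (hm : (m : ℝ) ≤ ρ * N) :
    ((N - a).choose (m - a) : ℝ) ≤ ρ ^ a * N.choose m := by
  have hsplit : (N.choose m : ℝ) * m.choose a = N.choose a * (N - a).choose (m - a) := by
    exact_mod_cast Nat.choose_mul ha
  have hratio : (m.choose a : ℝ) * N ^ a ≤ N.choose a * m ^ a := by
    exact_mod_cast choose_mul_pow_le hN a
  have hNa : (0 : ℝ) < N.choose a := by exact_mod_cast Nat.choose_pos (ha.trans hN)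
  have hNpow : (0 : ℝ) < (N : ℝ) ^ a := by
    rcases Nat.eq_zero_or_pos N with rfl | hpos
    · simp [show a = 0 by omega]
    · positivity
  have hchoose : (m.choose a : ℝ) ≤ ρ ^ a * N.choose a := by
    refine le_of_mul_le_mul_right ?_ hNpow
    calc (m.choose a : ℝ) * N ^ a ≤ N.choose a * m ^ a := hratio
      _ ≤ N.choose a * (ρ * N) ^ a := by gcongr
      _ = ρ ^ a * N.choose a * N ^ a := by ring
  refine le_of_mul_le_mul_left ?_ hNa
  calc (N.choose a : ℝ) * (N - a).choose (m - a) = N.choose m * m.choose a := hsplit.symm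
    _ ≤ N.choose m * (ρ ^ a * N.choose a) := by gcongr
    _ = N.choose a * (ρ ^ a * N.choose m) := by ring

theorem card_filter_superset_le [DecidableEq ι] (A : Finset ι) (m : ℕ) :
    (Finset.univ.filter fun Ω : {Ω : Finset ι // Ω.card = m} => A ⊆ Ω.1).card ≤
      (Fintype.card ι - A.card).choose (m - A.card) := by
  rw [← Finset.card_compl, ← Finset.card_powersetCard]
  refine Finset.card_le_card_of_injOn (fun Ω => Ω.1 \ A) (fun Ω hΩ => ?_) fun Ω hΩ Ω' hΩ' h => ?_
  · rw [Finset.mem_coe, Finset.mem_filter_univ] at hΩ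
    rw [Finset.mem_coe, Finset.mem_powersetCard, Finset.card_sdiff_of_subset hΩ, Ω.2]
    exact ⟨fun i hi => Finset.mem_compl.mpr (Finset.mem_sdiff.mp hi).2, rfl⟩
  · rw [Finset.mem_coe, Finset.mem_filter_univ] at hΩ hΩ'
    exact Subtype.ext (by
      rw [← Finset.sdiff_union_of_subset hΩ, show Ω.1 \ A = Ω'.1 \ A from h,
        Finset.sdiff_union_of_subset hΩ'])

theorem unifProb_subset_le (A : Finset ι) (hρ : 0 ≤ ρ) (hN : m ≤ Fintype.card ι)
    (hm : (m : ℝ) ≤ ρ * Fintype.card ι) :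
    unifProb (fun Ω : {Ω : Finset ι // Ω.card = m} => A ⊆ Ω.1) ≤ ρ ^ A.card := by
  classical
  rcases lt_or_ge m A.card with hlt | hA
  · have hempty (Ω : {Ω : Finset ι // Ω.card = m}) : ¬ A ⊆ Ω.1 := fun h =>
      ((Finset.card_le_card h).trans_eq Ω.2).not_gt hlt
    simp_rw [unifProb_eq_expect, if_neg (hempty _), Finset.expect_const_zero]
    positivity
  · have hpos : (0 : ℝ) < (Fintype.card ι).choose m := by exact_mod_cast Nat.choose_pos hN
    rw [unifProb, Fintype.card_finset_len, div_le_iff₀ hpos]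
    refine le_trans ?_ (choose_sub_sub_le_pow_mul_choose hA hN hm)
    exact_mod_cast (le_of_eq (by congr!)).trans (card_filter_superset_le A m)

/- Expanding the product over subsets `A` reduces the claim to `P (A ⊆ Ω) ≤ ρ ^ |A|`, which the
independent model attains. -/
theorem expect_prod_subset_le {c : ι → ℝ} (hc : ∀ i, 1 ≤ c i) (hρ : 0 ≤ ρ)
    (hN : m ≤ Fintype.card ι) (hm : (m : ℝ) ≤ ρ * Fintype.card ι) :
    𝔼 Ω : {Ω : Finset ι // Ω.card = m}, ∏ i ∈ Ω.1, c i ≤ ∏ i, (1 + ρ * (c i - 1)) := by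
  classical
  have hexpand (Ω : {Ω : Finset ι // Ω.card = m}) : ∏ i ∈ Ω.1, c i =
      ∑ A : Finset ι, (∏ i ∈ A, (c i - 1)) * (if A ⊆ Ω.1 then 1 else 0) := calc
    _ = ∏ i ∈ Ω.1, (1 + (c i - 1)) := Finset.prod_congr rfl fun i _ => by ring
    _ = ∑ A ∈ Ω.1.powerset, ∏ i ∈ A, (c i - 1) := Finset.prod_one_add _
    _ = _ := by
        simp_rw [mul_ite, mul_one, mul_zero]
        rw [← Finset.sum_filter]
        exact Finset.sum_congr (by ext A; simp) fun _ _ => rfl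
  simp_rw [hexpand, Finset.expect_sum_comm, Finset.prod_one_add, Finset.powerset_univ]
  refine Finset.sum_le_sum fun A _ => ?_
  rw [← Finset.mul_expect, ← unifProb_eq_expect, Finset.prod_mul_distrib, Finset.prod_const,
    mul_comm]
  exact mul_le_mul_of_nonneg_right (unifProb_subset_le A hρ hN hm)
    (Finset.prod_nonneg fun i _ => by linarith [hc i])

theorem cosh_sub_one_le (t : ℝ) : Real.cosh t - 1 ≤ t ^ 2 / 2 * Real.exp (t ^ 2 / 2) := by
  have hinv : Real.exp (-(t ^ 2 / 2)) * Real.exp (t ^ 2 / 2) = 1 := by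
    rw [← Real.exp_add, neg_add_cancel, Real.exp_zero]
  have hlin := mul_le_mul_of_nonneg_right (Real.add_one_le_exp (-(t ^ 2 / 2)))
    (Real.exp_pos (t ^ 2 / 2)).le
  linarith [Real.cosh_le_exp_half_sq t]

theorem cosh_le_exp_abs (t : ℝ) : Real.cosh t ≤ Real.exp |t| := by
  have : Real.exp (-|t|) ≤ Real.exp |t| := Real.exp_le_exp.mpr (by linarith [abs_nonneg t])
  rw [← Real.cosh_abs, Real.cosh_eq]
  linarith

theorem one_add_mul_cosh_sub_one_le {κ : ℝ} (hκ : 0 < κ) (hρ1 : ρ ≤ 1)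
    (hρ : ρ ≤ κ * Real.exp (-(1 / (2 * κ ^ 2)))) (t : ℝ) :
    1 + ρ * (Real.cosh t - 1) ≤ Real.exp (κ * t ^ 2) := by
  have hcosh := Real.one_le_cosh t
  rcases le_or_gt (κ * |t|) 1 with hsmall | hlarge
  · have ht : t ^ 2 / 2 ≤ 1 / (2 * κ ^ 2) := by
      have hsq : (κ * |t|) ^ 2 ≤ 1 := pow_le_one₀ (by positivity) hsmall
      rw [mul_pow, sq_abs] at hsq
      rw [div_le_div_iff₀ (by norm_num) (by positivity)]
      linarith
    have hcosh' : Real.cosh t - 1 ≤ t ^ 2 / 2 * Real.exp (1 / (2 * κ ^ 2)) :=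
      (cosh_sub_one_le t).trans (by gcongr)
    have hquad : ρ * (Real.cosh t - 1) ≤ κ * t ^ 2 := by
      calc ρ * (Real.cosh t - 1)
          ≤ (κ * Real.exp (-(1 / (2 * κ ^ 2)))) * (t ^ 2 / 2 * Real.exp (1 / (2 * κ ^ 2))) :=
            mul_le_mul hρ hcosh' (by linarith) (by positivity)
        _ = κ * (t ^ 2 / 2) * (Real.exp (-(1 / (2 * κ ^ 2))) * Real.exp (1 / (2 * κ ^ 2))) := by
            ring
        _ = κ * (t ^ 2 / 2) := by rw [← Real.exp_add, neg_add_cancel, Real.exp_zero, mul_one]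
        _ ≤ κ * t ^ 2 := by gcongr; nlinarith [sq_nonneg t]
    linarith [Real.add_one_le_exp (κ * t ^ 2)]
  · have habs : |t| ≤ κ * t ^ 2 := by
      rw [← sq_abs]
      nlinarith [abs_nonneg t]
    calc 1 + ρ * (Real.cosh t - 1) ≤ 1 + 1 * (Real.cosh t - 1) := by gcongr
      _ = Real.cosh t := by ring
      _ ≤ Real.exp |t| := cosh_le_exp_abs t
      _ ≤ Real.exp (κ * t ^ 2) := Real.exp_le_exp.mpr habs

theorem expect_exp_sparse_boolSign_le [DecidableEq ι] (c : ι → ℝ) {κ : ℝ} (hκ : 0 < κ)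
    (hρ0 : 0 ≤ ρ) (hρ1 : ρ ≤ 1) (hρ : ρ ≤ κ * Real.exp (-(1 / (2 * κ ^ 2))))
    (hN : m ≤ Fintype.card ι) (hm : (m : ℝ) ≤ ρ * Fintype.card ι) :
    𝔼 ω : {Ω : Finset ι // Ω.card = m} × (ι → Bool),
        Real.exp (∑ i, boolSign (ω.2 i) * (if i ∈ ω.1.1 then c i else 0)) ≤
      Real.exp (κ * ∑ i, c i ^ 2) := by
  have hcond (Ω : {Ω : Finset ι // Ω.card = m}) :
      𝔼 ε : ι → Bool, Real.exp (∑ i, boolSign (ε i) * (if i ∈ Ω.1 then c i else 0)) =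
        ∏ i ∈ Ω.1, Real.cosh (c i) := by
    rw [expect_exp_sum_boolSign_mul fun i => if i ∈ Ω.1 then c i else 0]
    simp_rw [apply_ite Real.cosh, Real.cosh_zero, Finset.prod_ite_mem, Finset.univ_inter]
  rw [← Finset.univ_product_univ, Finset.expect_product]
  simp_rw [hcond]
  refine (expect_prod_subset_le (fun i => Real.one_le_cosh (c i)) hρ0 hN hm).trans ?_
  rw [Finset.mul_sum, Real.exp_sum]
  refine Finset.prod_le_prod (fun i _ => ?_) fun i _ => one_add_mul_cosh_sub_one_le hκ hρ1 hρ _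
  have hcosh := Real.one_le_cosh (c i)
  linarith [mul_nonneg hρ0 (sub_nonneg.mpr hcosh)]

end RandomSubsets

section SpectralNorm

open scoped Matrix.Norms.L2Operator

variable {ι κ : Type*} [Fintype ι] [DecidableEq ι] [Fintype κ]

theorem sum_sq_mulVec_le (A : Matrix κ ι ℝ) (x : ι → ℝ) :
    ∑ i, (A *ᵥ x) i ^ 2 ≤ ‖A‖ ^ 2 * ∑ j, x j ^ 2 := by
  have h := pow_le_pow_left₀ (norm_nonneg _) (A.l2_opNorm_mulVec (WithLp.toLp 2 x)) 2
  rw [mul_pow, EuclideanSpace.real_norm_sq_eq, EuclideanSpace.real_norm_sq_eq] at h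
  exact h

theorem norm_le_of_sqrt_sum_sq_mulVec_le {A : Matrix κ ι ℝ} {s : ℝ} (hs : 0 ≤ s)
    (h : ∀ x : ι → ℝ, ∑ j, x j ^ 2 ≤ 1 → √(∑ i, (A *ᵥ x) i ^ 2) ≤ s) : ‖A‖ ≤ s := by
  rw [Matrix.l2_opNorm_def]
  refine ContinuousLinearMap.opNorm_le_of_unit_norm hs fun x hx => ?_
  have hAx := h (WithLp.ofLp x) (by rw [← EuclideanSpace.real_norm_sq_eq, hx, one_pow])
  rw [EuclideanSpace.norm_eq]
  simpa using hAx

theorem spec_eq_l2_opNorm {n1 n2 : ℕ} (A : Matrix (Fin n1) (Fin n2) ℝ) : spec A = ‖A‖ := by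
  have hbound : ∀ x : Fin n2 → ℝ, ∑ j, x j ^ 2 ≤ 1 → √(∑ i, (A *ᵥ x) i ^ 2) ≤ ‖A‖ :=
    fun x hx => Real.sqrt_le_iff.mpr ⟨norm_nonneg A, (sum_sq_mulVec_le A x).trans
      (mul_le_of_le_one_right (sq_nonneg _) hx)⟩
  have hbdd : BddAbove {c : ℝ | ∃ x : Fin n2 → ℝ, ∑ j, x j ^ 2 ≤ 1 ∧
      c = √(∑ i, (∑ j, A i j * x j) ^ 2)} := by
    refine ⟨‖A‖, ?_⟩
    rintro _ ⟨x, hx, rfl⟩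
    exact hbound x hx
  refine le_antisymm (csSup_le ⟨_, 0, by simp, rfl⟩ ?_) (norm_le_of_sqrt_sum_sq_mulVec_le
    (le_csSup hbdd ⟨0, by simp, by simp⟩) fun x hx => le_csSup hbdd ⟨x, hx, rfl⟩)
  rintro _ ⟨x, hx, rfl⟩
  exact hbound x hx

theorem norm_le_of_dotProduct_mulVec_le {M : Matrix κ ι ℝ} {s : ℝ}
    (h : ∀ (y : κ → ℝ) (x : ι → ℝ), ∑ i, y i ^ 2 ≤ 1 → ∑ j, x j ^ 2 ≤ 1 →
      y ⬝ᵥ M *ᵥ x ≤ s) : ‖M‖ ≤ s := by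
  have hs : 0 ≤ s := by simpa using h 0 0 (by simp) (by simp)
  refine norm_le_of_sqrt_sum_sq_mulVec_le hs fun x hx => ?_
  set b := M *ᵥ x
  set l := √(∑ i, b i ^ 2)
  have hsq : l ^ 2 = ∑ i, b i ^ 2 := Real.sq_sqrt (by positivity)
  rcases eq_or_ne l 0 with hl0 | hl0
  · rwa [hl0]
  have hunit : ∑ i, (b i / l) ^ 2 ≤ 1 := by
    simp_rw [div_pow, ← Finset.sum_div, hsq]
    exact div_self_le_one _
  calc l = l ^ 2 / l := by field_simp
    _ = (fun i => b i / l) ⬝ᵥ b := by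
        simp_rw [hsq, Finset.sum_div, dotProduct, sq, mul_div_right_comm]
    _ ≤ s := h _ x hunit hx

variable (ι) in
/-- The integer points of squared length at most `4 |ι|`. -/
noncomputable def latticeBall : Finset (ι → ℤ) :=
  (Fintype.piFinset fun _ : ι => Finset.Icc (-(2 * Fintype.card ι : ℤ)) (2 * Fintype.card ι)).filter
    fun z => ∑ i, z i ^ 2 ≤ 4 * Fintype.card ι

theorem mem_latticeBall {z : ι → ℤ} : z ∈ latticeBall ι ↔ ∑ i, z i ^ 2 ≤ 4 * Fintype.card ι := by
  refine ⟨fun hz => (Finset.mem_filter.mp hz).2, fun hz =>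
    Finset.mem_filter.mpr ⟨Fintype.mem_piFinset.mpr fun i => Finset.mem_Icc.mpr ?_, hz⟩⟩
  have hcoord : z i ^ 2 ≤ 4 * Fintype.card ι :=
    (Finset.single_le_sum (f := fun i => z i ^ 2) (fun _ _ => sq_nonneg _)
      (Finset.mem_univ i)).trans hz
  have hcard : (1 : ℤ) ≤ Fintype.card ι := by exact_mod_cast Fintype.card_pos_iff.mpr ⟨i⟩
  exact abs_le_of_sq_le_sq' (by nlinarith) (by positivity)

theorem sum_range_exp_neg_sq_le (M : ℕ) :
    ∑ k ∈ Finset.range M, Real.exp (-(k : ℝ) ^ 2) ≤ 2 := by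
  refine (Finset.sum_le_sum fun k _ => ?_).trans (sum_geometric_two_le M)
  have hsq : (k : ℝ) ≤ (k : ℝ) ^ 2 := by exact_mod_cast Nat.le_self_pow two_ne_zero k
  calc Real.exp (-(k : ℝ) ^ 2) ≤ Real.exp ((k : ℝ) * (-1)) := Real.exp_le_exp.mpr (by linarith)
    _ = Real.exp (-1) ^ k := Real.exp_nat_mul _ k
    _ ≤ (1 / 2) ^ k := by
        gcongr
        rw [Real.exp_neg, one_div]
        exact inv_anti₀ two_pos (by linarith [Real.add_one_le_exp (1 : ℝ)])

theorem sum_Icc_exp_neg_sq_le (M : ℕ) :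
    ∑ k ∈ Finset.Icc (-(M : ℤ)) M, Real.exp (-(k : ℝ) ^ 2) ≤ 4 := by
  set P := (Finset.range (M + 1)).image fun k : ℕ => (k : ℤ) with hP
  set N := (Finset.range (M + 1)).image fun k : ℕ => -(k : ℤ) with hN
  have hsub : Finset.Icc (-(M : ℤ)) M ⊆ P ∪ N := by
    intro k hk
    rw [Finset.mem_Icc] at hk
    simp only [hP, hN, Finset.mem_union, Finset.mem_image, Finset.mem_range]
    rcases le_total 0 k with h | h
    · exact Or.inl ⟨k.toNat, by omega, by omega⟩
    · exact Or.inr ⟨(-k).toNat, by omega, by omega⟩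
  have hsumP : ∑ k ∈ P, Real.exp (-(k : ℝ) ^ 2) ≤ 2 := by
    rw [hP, Finset.sum_image (by intro a _ b _ h; simpa using h)]
    exact_mod_cast sum_range_exp_neg_sq_le (M + 1)
  have hsumN : ∑ k ∈ N, Real.exp (-(k : ℝ) ^ 2) ≤ 2 := by
    rw [hN, Finset.sum_image (by intro a _ b _ h; simpa using h)]
    simpa using sum_range_exp_neg_sq_le (M + 1)
  have hinter : 0 ≤ ∑ k ∈ P ∩ N, Real.exp (-(k : ℝ) ^ 2) :=
    Finset.sum_nonneg fun _ _ => (Real.exp_pos _).le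
  have hunion := Finset.sum_union_inter (s₁ := P) (s₂ := N)
    (f := fun k : ℤ => Real.exp (-(k : ℝ) ^ 2))
  calc ∑ k ∈ Finset.Icc (-(M : ℤ)) M, Real.exp (-(k : ℝ) ^ 2)
      ≤ ∑ k ∈ P ∪ N, Real.exp (-(k : ℝ) ^ 2) :=
        Finset.sum_le_sum_of_subset_of_nonneg hsub fun _ _ _ => (Real.exp_pos _).le
    _ ≤ 4 := by linarith

theorem four_le_exp_three_halves : (4 : ℝ) ≤ Real.exp (3 / 2) := by
  have hquad := Real.quadratic_le_exp_of_nonneg (x := 3 / 4) (by norm_num)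
  rw [show (3 / 2 : ℝ) = 3 / 4 + 3 / 4 by norm_num, Real.exp_add]
  nlinarith

/- A Gaussian weight `exp (-|z|²)`, at least `exp (-4 |ι|)` on the ball, makes the count factor over
the coordinates. -/
theorem card_latticeBall_le :
    ((latticeBall ι).card : ℝ) ≤ Real.exp (11 / 2 * Fintype.card ι) := by
  set n := Fintype.card ι with hn
  have hweight : ∀ z ∈ latticeBall ι, 1 ≤ Real.exp (4 * n) * ∏ i, Real.exp (-(z i : ℝ) ^ 2) := by
    intro z hz
    have hz' : ∑ i, (z i : ℝ) ^ 2 ≤ 4 * n := by exact_mod_cast mem_latticeBall.mp hz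
    rw [← Real.exp_sum, ← Real.exp_add, Finset.sum_neg_distrib]
    exact Real.one_le_exp (by linarith)
  have hcoord : ∑ k ∈ Finset.Icc (-(2 * n : ℤ)) (2 * n), Real.exp (-(k : ℝ) ^ 2) ≤ 4 := by
    exact_mod_cast sum_Icc_exp_neg_sq_le (2 * n)
  calc ((latticeBall ι).card : ℝ)
      ≤ ∑ z ∈ latticeBall ι, Real.exp (4 * n) * ∏ i, Real.exp (-(z i : ℝ) ^ 2) := by
        rw [Finset.cast_card]
        exact Finset.sum_le_sum hweight
    _ ≤ ∑ z ∈ Fintype.piFinset fun _ : ι => Finset.Icc (-(2 * n : ℤ)) (2 * n),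
          Real.exp (4 * n) * ∏ i, Real.exp (-(z i : ℝ) ^ 2) :=
        Finset.sum_le_sum_of_subset_of_nonneg (Finset.filter_subset _ _)
          fun _ _ _ => by positivity
    _ = Real.exp (4 * n) *
          (∑ k ∈ Finset.Icc (-(2 * n : ℤ)) (2 * n), Real.exp (-(k : ℝ) ^ 2)) ^ n := by
        rw [← Finset.mul_sum, Finset.sum_prod_piFinset (Finset.Icc (-(2 * n : ℤ)) (2 * n))
          (fun _ (k : ℤ) => Real.exp (-(k : ℝ) ^ 2)), Finset.prod_const, Finset.card_univ]
    _ ≤ Real.exp (4 * n) * Real.exp (3 / 2) ^ n := by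
        gcongr
        exact hcoord.trans four_le_exp_three_halves
    _ = Real.exp (11 / 2 * n) := by
        rw [← Real.exp_nat_mul, ← Real.exp_add]
        ring_nf

variable (ι) in
/-- A finite net of the Euclidean unit ball: integer points scaled by `1 / √|ι|`. Its convex hull
contains the ball, so it norms linear functionals without loss. -/
noncomputable def ballNet : Finset (ι → ℝ) :=
  (latticeBall ι).image fun z i => z i / √(Fintype.card ι)

theorem card_ballNet_le : ((ballNet ι).card : ℝ) ≤ Real.exp (11 / 2 * Fintype.card ι) :=
  le_trans (by exact_mod_cast Finset.card_image_le) card_latticeBall_le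

theorem sum_sq_le_of_mem_ballNet {z : ι → ℝ} (hz : z ∈ ballNet ι) : ∑ i, z i ^ 2 ≤ 4 := by
  obtain ⟨w, hw, rfl⟩ := Finset.mem_image.mp hz
  have hw' : ∑ i, (w i : ℝ) ^ 2 ≤ 4 * Fintype.card ι := by exact_mod_cast mem_latticeBall.mp hw
  simp_rw [div_pow, Real.sq_sqrt (Nat.cast_nonneg (Fintype.card ι)), ← Finset.sum_div]
  exact div_le_of_le_mul₀ (Nat.cast_nonneg _) (by norm_num) hw'

theorem exists_mem_ballNet_dotProduct_le (c : ι → ℝ) {x : ι → ℝ} (hx : ∑ i, x i ^ 2 ≤ 1) :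
    ∃ z ∈ ballNet ι, c ⬝ᵥ x ≤ c ⬝ᵥ z := by
  set R := √(Fintype.card ι : ℝ)
  have hR2 : R ^ 2 = Fintype.card ι := Real.sq_sqrt (Nat.cast_nonneg _)
  -- Round `R x` in the direction of the sign of `c`.
  set z : ι → ℤ := fun i => if 0 ≤ c i then ⌈R * x i⌉ else ⌊R * x i⌋ with hz
  have hround (i : ι) : |(z i : ℝ) - R * x i| ≤ 1 := by
    rw [abs_le, hz]
    dsimp only
    split_ifs
    · constructor <;> linarith [Int.le_ceil (R * x i), Int.ceil_lt_add_one (R * x i)]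
    · constructor <;> linarith [Int.floor_le (R * x i), Int.lt_floor_add_one (R * x i)]
  have hsign (i : ι) : c i * (R * x i) ≤ c i * z i := by
    rw [hz]
    dsimp only
    split_ifs with hc
    · exact mul_le_mul_of_nonneg_left (Int.le_ceil _) hc
    · exact mul_le_mul_of_nonpos_left (Int.floor_le _) (not_le.mp hc).le
  refine ⟨fun i => z i / R, Finset.mem_image.mpr ⟨z, mem_latticeBall.mpr ?_, rfl⟩,
    Finset.sum_le_sum fun i _ => ?_⟩
  · have hsum : ∑ i, (z i : ℝ) ^ 2 ≤ 4 * Fintype.card ι := calc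
      _ ≤ ∑ i, (2 * (R ^ 2 * x i ^ 2) + 2) := Finset.sum_le_sum fun i _ => by
          nlinarith [(sq_le_one_iff_abs_le_one _).mpr (hround i),
            sq_nonneg ((z i : ℝ) - 2 * (R * x i))]
      _ = 2 * (R ^ 2 * ∑ i, x i ^ 2) + 2 * Fintype.card ι := by
          rw [Finset.sum_add_distrib, ← Finset.mul_sum, ← Finset.mul_sum, Finset.sum_const,
            Finset.card_univ, nsmul_eq_mul, mul_comm (Fintype.card ι : ℝ)]
      _ ≤ 2 * (R ^ 2 * 1) + 2 * Fintype.card ι := by gcongr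
      _ = 4 * Fintype.card ι := by rw [hR2]; ring
    exact_mod_cast hsum
  · have : 0 < R := Real.sqrt_pos.mpr (by exact_mod_cast Fintype.card_pos_iff.mpr ⟨i⟩)
    rw [mul_div_assoc', le_div_iff₀ this, mul_assoc, mul_comm (x i)]
    exact hsign i

variable [DecidableEq κ]

theorem sum_mul_sq_le_of_mem_ballNet {w : κ → ℝ} {z : ι → ℝ} (hw : w ∈ ballNet κ)
    (hz : z ∈ ballNet ι) : ∑ p : κ × ι, (w p.1 * z p.2) ^ 2 ≤ 16 := by
  calc ∑ p : κ × ι, (w p.1 * z p.2) ^ 2 = (∑ i, w i ^ 2) * ∑ j, z j ^ 2 := by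
        simp_rw [mul_pow, Fintype.sum_prod_type, Finset.sum_mul_sum]
    _ ≤ 4 * 4 := mul_le_mul (sum_sq_le_of_mem_ballNet hw) (sum_sq_le_of_mem_ballNet hz)
        (by positivity) (by norm_num)
    _ = 16 := by norm_num

theorem norm_le_of_ballNet {M : Matrix κ ι ℝ} {s : ℝ}
    (h : ∀ w ∈ ballNet κ, ∀ z ∈ ballNet ι, ∑ p : κ × ι, M p.1 p.2 * (w p.1 * z p.2) ≤ s) :
    ‖M‖ ≤ s := by
  refine norm_le_of_dotProduct_mulVec_le fun y x hy hx => ?_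
  obtain ⟨w, hw, hyw⟩ := exists_mem_ballNet_dotProduct_le (M *ᵥ x) hy
  obtain ⟨z, hz, hxz⟩ := exists_mem_ballNet_dotProduct_le (w ᵥ* M) hx
  calc y ⬝ᵥ M *ᵥ x ≤ w ⬝ᵥ M *ᵥ x := by rwa [dotProduct_comm, dotProduct_comm w]
    _ ≤ w ⬝ᵥ M *ᵥ z := by rwa [Matrix.dotProduct_mulVec, Matrix.dotProduct_mulVec]
    _ = ∑ p : κ × ι, M p.1 p.2 * (w p.1 * z p.2) := by
        simp_rw [dotProduct, Matrix.mulVec, dotProduct, Finset.mul_sum, Fintype.sum_prod_type,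
          mul_left_comm (w _)]
    _ ≤ s := h w hw z hz

theorem unifProb_lt_norm_le {α : Type*} [Fintype α] {X : α → Matrix κ ι ℝ} {s δ : ℝ}
    (hδ : 0 ≤ δ) (h : ∀ w ∈ ballNet κ, ∀ z ∈ ballNet ι,
      unifProb (fun a => s ≤ ∑ p : κ × ι, X a p.1 p.2 * (w p.1 * z p.2)) ≤ δ) :
    unifProb (fun a => s < ‖X a‖) ≤
      Real.exp (11 / 2 * Fintype.card κ + 11 / 2 * Fintype.card ι) * δ := by
  have hnet : ∀ a, s < ‖X a‖ → ∃ q ∈ ballNet κ ×ˢ ballNet ι,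
      s ≤ ∑ p : κ × ι, X a p.1 p.2 * (q.1 p.1 * q.2 p.2) := by
    intro a ha
    contrapose! ha
    exact norm_le_of_ballNet fun w hw z hz => (ha (w, z) (Finset.mk_mem_product hw hz)).le
  calc unifProb (fun a => s < ‖X a‖)
      ≤ (ballNet κ ×ˢ ballNet ι).card * δ :=
        (unifProb_mono hnet).trans <| unifProb_exists_le_card_mul _ _ fun q hq =>
          h q.1 (Finset.mem_product.mp hq).1 q.2 (Finset.mem_product.mp hq).2
    _ ≤ Real.exp (11 / 2 * Fintype.card κ + 11 / 2 * Fintype.card ι) * δ := by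
        rw [Finset.card_product, Nat.cast_mul, Real.exp_add]
        gcongr <;> exact card_ballNet_le

end SpectralNorm

section TangentSpace

open scoped Matrix.Norms.L2Operator

section FrobeniusNorm

variable {ι κ η : Type*} [Fintype ι] [Fintype κ] [Fintype η]

/-- The squared Frobenius norm, for arbitrary finite index types. -/
def frobSq (M : Matrix ι κ ℝ) : ℝ := ∑ i, ∑ j, M i j ^ 2

theorem frobSq_nonneg (M : Matrix ι κ ℝ) : 0 ≤ frobSq M :=
  Finset.sum_nonneg fun _ _ => Finset.sum_nonneg fun _ _ => sq_nonneg _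

theorem frobSq_transpose (M : Matrix ι κ ℝ) : frobSq Mᵀ = frobSq M :=
  Finset.sum_comm

theorem frobSq_add_le (M N : Matrix ι κ ℝ) : frobSq (M + N) ≤ 2 * (frobSq M + frobSq N) := by
  simp_rw [frobSq, ← Finset.sum_add_distrib, Finset.mul_sum]
  exact Finset.sum_le_sum fun i _ => Finset.sum_le_sum fun j _ => add_sq_le

theorem frobSq_mul_le [DecidableEq ι] (A : Matrix η ι ℝ) (M : Matrix ι κ ℝ) :
    frobSq (A * M) ≤ ‖A‖ ^ 2 * frobSq M := by
  rw [← frobSq_transpose, ← frobSq_transpose M, frobSq, frobSq, Finset.mul_sum]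
  exact Finset.sum_le_sum fun j _ => sum_sq_mulVec_le A fun i => M i j

theorem frobSq_mul_le_of_norm_le_one [DecidableEq ι] {A : Matrix η ι ℝ} (hA : ‖A‖ ≤ 1)
    (M : Matrix ι κ ℝ) : frobSq (A * M) ≤ frobSq M :=
  (frobSq_mul_le A M).trans
    (mul_le_of_le_one_left (frobSq_nonneg M) (pow_le_one₀ (norm_nonneg A) hA))

end FrobeniusNorm

section RangeProjection

variable {ι κ : Type*} [Fintype ι] [Fintype κ] [DecidableEq κ] {U : Matrix ι κ ℝ}

theorem isStarProjection_mul_transpose (hU : Uᵀ * U = 1) : IsStarProjection (U * Uᵀ) where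
  isIdempotentElem := by
    rw [IsIdempotentElem, Matrix.mul_assoc, ← Matrix.mul_assoc Uᵀ, hU, Matrix.one_mul]
  isSelfAdjoint := by
    rw [IsSelfAdjoint, Matrix.star_eq_conjTranspose, Matrix.conjTranspose_eq_transpose_of_trivial,
      Matrix.transpose_mul, Matrix.transpose_transpose]

variable [DecidableEq ι]

theorem norm_one_sub_mul_transpose_le_one (hU : Uᵀ * U = 1) : ‖1 - U * Uᵀ‖ ≤ 1 :=
  (isStarProjection_mul_transpose hU).one_sub.norm_le

theorem norm_transpose_le_one (hU : Uᵀ * U = 1) : ‖Uᵀ‖ ≤ 1 := by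
  refine abs_le_one_iff_mul_self_le_one.mpr ?_ |> (abs_of_nonneg (norm_nonneg Uᵀ)).ge.trans
  rw [← Matrix.l2_opNorm_conjTranspose_mul_self, Matrix.conjTranspose_eq_transpose_of_trivial,
    Matrix.transpose_transpose]
  exact (isStarProjection_mul_transpose hU).norm_le

end RangeProjection

variable {n1 n2 r : ℕ}

theorem minner_eq_trace (A B : Matrix (Fin n1) (Fin n2) ℝ) : minner A B = (Aᵀ * B).trace := by
  simp_rw [minner, Matrix.trace, Matrix.diag_apply, Matrix.mul_apply, Matrix.transpose_apply]
  exact Finset.sum_comm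

theorem minner_comm (A B : Matrix (Fin n1) (Fin n2) ℝ) : minner A B = minner B A := by
  simp_rw [minner, mul_comm]

theorem minner_add_left (A B C : Matrix (Fin n1) (Fin n2) ℝ) :
    minner (A + B) C = minner A C + minner B C := by
  simp [minner_eq_trace, Matrix.add_mul]

theorem minner_add_right (A B C : Matrix (Fin n1) (Fin n2) ℝ) :
    minner A (B + C) = minner A B + minner A C := by
  simp [minner_eq_trace, Matrix.mul_add]

theorem minner_sub_left (A B C : Matrix (Fin n1) (Fin n2) ℝ) :
    minner (A - B) C = minner A C - minner B C := by
  simp [minner_eq_trace, Matrix.sub_mul]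

theorem minner_sub_right (A B C : Matrix (Fin n1) (Fin n2) ℝ) :
    minner A (B - C) = minner A B - minner A C := by
  simp [minner_eq_trace, Matrix.mul_sub]

theorem minner_self (A : Matrix (Fin n1) (Fin n2) ℝ) : minner A A = frobSq A := by
  simp_rw [minner, frobSq, sq]

theorem minner_mul_mul {P : Matrix (Fin n1) (Fin n1) ℝ} {R : Matrix (Fin n2) (Fin n2) ℝ}
    (hP : Pᵀ = P) (hR : Rᵀ = R) (A B : Matrix (Fin n1) (Fin n2) ℝ) :
    minner (P * A * R) B = minner A (P * B * R) := by
  rw [minner_eq_trace, minner_eq_trace, Matrix.transpose_mul, Matrix.transpose_mul, hP, hR,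
    Matrix.mul_assoc R, Matrix.trace_mul_comm R]
  simp only [Matrix.mul_assoc]

theorem minner_single (A : Matrix (Fin n1) (Fin n2) ℝ) (i : Fin n1) (j : Fin n2) :
    minner A (Matrix.single i j 1) = A i j := by
  rw [minner_eq_trace, Matrix.trace_mul_single]
  simp

theorem minner_eq_sum_prod (A B : Matrix (Fin n1) (Fin n2) ℝ) :
    minner A B = ∑ p : Fin n1 × Fin n2, A p.1 p.2 * B p.1 p.2 :=
  (Fintype.sum_prod_type' fun i j => A i j * B i j).symm

theorem minner_sq_le (A B : Matrix (Fin n1) (Fin n2) ℝ) :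
    minner A B ^ 2 ≤ frobSq A * frobSq B := by
  rw [minner_eq_sum_prod, frobSq, frobSq, ← Fintype.sum_prod_type' fun i j => A i j ^ 2,
    ← Fintype.sum_prod_type' fun i j => B i j ^ 2]
  exact Finset.sum_mul_sq_le_sq_mul_sq _ _ _

/-- The orthogonal projection `P_T` onto the tangent space
`T = {UQᵀ + RVᵀ}`, for `U` and `V` with orthonormal columns. -/
def tangentProj (U : Matrix (Fin n1) (Fin r) ℝ) (V : Matrix (Fin n2) (Fin r) ℝ) :
    Matrix (Fin n1) (Fin n2) ℝ →ₗ[ℝ] Matrix (Fin n1) (Fin n2) ℝ where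
  toFun M := U * Uᵀ * M + (1 - U * Uᵀ) * M * (V * Vᵀ)
  map_add' M N := by
    simp only [Matrix.mul_add, Matrix.add_mul]
    abel
  map_smul' c M := by simp

variable {U : Matrix (Fin n1) (Fin r) ℝ} {V : Matrix (Fin n2) (Fin r) ℝ}

theorem tangentProj_apply (M : Matrix (Fin n1) (Fin n2) ℝ) :
    tangentProj U V M = U * Uᵀ * M + (1 - U * Uᵀ) * M * (V * Vᵀ) := rfl

theorem sub_tangentProj (M : Matrix (Fin n1) (Fin n2) ℝ) :
    M - tangentProj U V M = (1 - U * Uᵀ) * M * (1 - V * Vᵀ) := by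
  simp only [tangentProj_apply, Matrix.mul_sub, Matrix.sub_mul, Matrix.mul_one, Matrix.one_mul]
  abel

theorem minner_tangentProj_left (M N : Matrix (Fin n1) (Fin n2) ℝ) :
    minner (tangentProj U V M) N = minner M (tangentProj U V N) := by
  have hcompl := minner_mul_mul (P := 1 - U * Uᵀ) (R := 1 - V * Vᵀ) (by simp) (by simp) M N
  rw [← sub_tangentProj, ← sub_tangentProj, minner_sub_left, minner_sub_right] at hcompl
  linarith

theorem memT_tangentProj (M : Matrix (Fin n1) (Fin n2) ℝ) : memT U V (tangentProj U V M) :=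
  ⟨(Uᵀ * M)ᵀ, (1 - U * Uᵀ) * M * V, by
    simp only [tangentProj_apply, Matrix.transpose_transpose, Matrix.mul_assoc]⟩

section OrthonormalColumns

variable (hU : Uᵀ * U = 1) (hV : Vᵀ * V = 1)
include hU hV

theorem tangentProj_of_memT {M : Matrix (Fin n1) (Fin n2) ℝ} (hM : memT U V M) :
    tangentProj U V M = M := by
  obtain ⟨Q, R, rfl⟩ := hM
  have hcomplU : (1 - U * Uᵀ) * U = 0 := by
    rw [Matrix.sub_mul, Matrix.one_mul, Matrix.mul_assoc, hU, Matrix.mul_one, sub_self]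
  have hcomplV : Vᵀ * (1 - V * Vᵀ) = 0 := by
    rw [Matrix.mul_sub, Matrix.mul_one, ← Matrix.mul_assoc, hV, Matrix.one_mul, sub_self]
  refine (sub_eq_zero.mp ?_).symm
  rw [sub_tangentProj, Matrix.mul_add, Matrix.add_mul, ← Matrix.mul_assoc, hcomplU,
    Matrix.zero_mul, Matrix.zero_mul, Matrix.mul_assoc, Matrix.mul_assoc, hcomplV,
    Matrix.mul_zero, Matrix.mul_zero, add_zero]

theorem tangentProj_tangentProj (M : Matrix (Fin n1) (Fin n2) ℝ) :
    tangentProj U V (tangentProj U V M) = tangentProj U V M :=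
  tangentProj_of_memT hU hV (memT_tangentProj M)

theorem memTperp_sub_tangentProj (M : Matrix (Fin n1) (Fin n2) ℝ) :
    memTperp U V (M - tangentProj U V M) := by
  intro N hN
  rw [minner_sub_left, minner_tangentProj_left, tangentProj_of_memT hU hV hN, sub_self]

theorem norm_sub_tangentProj_le (M : Matrix (Fin n1) (Fin n2) ℝ) :
    ‖M - tangentProj U V M‖ ≤ ‖M‖ := by
  rw [sub_tangentProj]
  calc ‖(1 - U * Uᵀ) * M * (1 - V * Vᵀ)‖ ≤ ‖1 - U * Uᵀ‖ * ‖M‖ * ‖1 - V * Vᵀ‖ :=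
        (Matrix.l2_opNorm_mul _ _).trans
          (mul_le_mul_of_nonneg_right (Matrix.l2_opNorm_mul _ _) (norm_nonneg _))
    _ ≤ 1 * ‖M‖ * 1 := by
        gcongr
        · exact norm_one_sub_mul_transpose_le_one hU
        · exact norm_one_sub_mul_transpose_le_one hV
    _ = ‖M‖ := by ring

end OrthonormalColumns

theorem tangentProj_single_apply_self (i : Fin n1) (j : Fin n2) :
    tangentProj U V (Matrix.single i j 1) i j =
      ∑ k, U i k ^ 2 + (1 - ∑ k, U i k ^ 2) * ∑ k, V j k ^ 2 := by
  have hUi : (U * Uᵀ) i i = ∑ k, U i k ^ 2 := by simp [Matrix.mul_apply, sq]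
  have hVj : (V * Vᵀ) j j = ∑ k, V j k ^ 2 := by simp [Matrix.mul_apply, sq]
  rw [tangentProj_apply, Matrix.add_apply, Matrix.mul_single_apply_same, mul_one, hUi,
    Matrix.mul_apply, Finset.sum_eq_single j, Matrix.mul_single_apply_same, mul_one, hVj,
    Matrix.sub_apply, Matrix.one_apply_eq, hUi]
  · intro b _ hb
    rw [Matrix.mul_single_apply_of_ne _ _ _ _ _ hb, zero_mul]
  · simp

theorem tangentProj_apply_eq_sum (M : Matrix (Fin n1) (Fin n2) ℝ) (i : Fin n1) (j : Fin n2) :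
    tangentProj U V M i j =
      ∑ p : Fin n1 × Fin n2, M p.1 p.2 * tangentProj U V (Matrix.single i j 1) p.1 p.2 := by
  rw [← minner_single (tangentProj U V M), minner_tangentProj_left, minner_eq_sum_prod]

section Incoherence

variable (hU : Uᵀ * U = 1) (hV : Vᵀ * V = 1) {μ : ℝ}
  (hUi : ∀ i, ∑ k, U i k ^ 2 ≤ μ) (hVj : ∀ j, ∑ k, V j k ^ 2 ≤ μ)
include hU hV hUi hVj

theorem frobSq_tangentProj_single_le (i : Fin n1) (j : Fin n2) :
    frobSq (tangentProj U V (Matrix.single i j 1)) ≤ 2 * μ := by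
  rw [← minner_self, minner_tangentProj_left, tangentProj_tangentProj hU hV, minner_comm,
    minner_single, tangentProj_single_apply_self]
  have hUi0 : 0 ≤ ∑ k, U i k ^ 2 := by positivity
  have hVj0 : 0 ≤ ∑ k, V j k ^ 2 := by positivity
  nlinarith [hUi i, hVj j]

theorem abs_tangentProj_single_le (i a : Fin n1) (j b : Fin n2) :
    |tangentProj U V (Matrix.single i j 1) a b| ≤ 2 * μ := by
  have hμ : 0 ≤ 2 * μ :=
    (frobSq_nonneg _).trans (frobSq_tangentProj_single_le hU hV hUi hVj i j)
  refine abs_le_of_sq_le_sq ?_ hμ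
  calc tangentProj U V (Matrix.single i j 1) a b ^ 2
      = minner (tangentProj U V (Matrix.single i j 1))
          (tangentProj U V (Matrix.single a b 1)) ^ 2 := by
        rw [← minner_tangentProj_left, tangentProj_tangentProj hU hV, minner_single]
    _ ≤ 2 * μ * (2 * μ) := (minner_sq_le _ _).trans
        (mul_le_mul (frobSq_tangentProj_single_le hU hV hUi hVj i j)
          (frobSq_tangentProj_single_le hU hV hUi hVj a b) (frobSq_nonneg _) hμ)
    _ = (2 * μ) ^ 2 := (sq _).symm

end Incoherence

theorem projS_add (Ω : Finset (Fin n1 × Fin n2)) (M N : Matrix (Fin n1) (Fin n2) ℝ) :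
    projS Ω (M + N) = projS Ω M + projS Ω N := by
  ext i j
  simp only [projS, Matrix.of_apply, Matrix.add_apply]
  split_ifs <;> simp

section RestrictedProjection

variable {τ : ℝ} {Ω : Finset (Fin n1 × Fin n2)}

theorem frobSq_projS_mul_le
    (hcol : ∀ j, ∀ x : Fin r → ℝ,
      ∑ i, (if (i, j) ∈ Ω then (∑ k, U i k * x k) ^ 2 else 0) ≤ τ * ∑ k, x k ^ 2)
    (N : Matrix (Fin r) (Fin n2) ℝ) : frobSq (projS Ω (U * N)) ≤ τ * frobSq N := by
  rw [← frobSq_transpose, ← frobSq_transpose N, frobSq, frobSq, Finset.mul_sum]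
  refine Finset.sum_le_sum fun j _ => le_of_eq_of_le ?_ (hcol j fun k => N k j)
  simp [projS, Matrix.mul_apply, ite_pow]

theorem frobSq_projS_mul_transpose_le
    (hrow : ∀ i, ∀ x : Fin r → ℝ,
      ∑ j, (if (i, j) ∈ Ω then (∑ k, V j k * x k) ^ 2 else 0) ≤ τ * ∑ k, x k ^ 2)
    (N : Matrix (Fin n1) (Fin r) ℝ) : frobSq (projS Ω (N * Vᵀ)) ≤ τ * frobSq N := by
  rw [frobSq, frobSq, Finset.mul_sum]
  refine Finset.sum_le_sum fun i _ => le_of_eq_of_le ?_ (hrow i fun k => N i k)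
  simp [projS, Matrix.mul_apply, ite_pow, mul_comm]

theorem frobSq_projS_tangentProj_le (hU : Uᵀ * U = 1) (hV : Vᵀ * V = 1) (hτ : 0 ≤ τ)
    (hcol : ∀ j, ∀ x : Fin r → ℝ,
      ∑ i, (if (i, j) ∈ Ω then (∑ k, U i k * x k) ^ 2 else 0) ≤ τ * ∑ k, x k ^ 2)
    (hrow : ∀ i, ∀ x : Fin r → ℝ,
      ∑ j, (if (i, j) ∈ Ω then (∑ k, V j k * x k) ^ 2 else 0) ≤ τ * ∑ k, x k ^ 2)
    (M : Matrix (Fin n1) (Fin n2) ℝ) :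
    frobSq (projS Ω (tangentProj U V M)) ≤ 4 * τ * frobSq M := by
  have hleft : frobSq (Uᵀ * M) ≤ frobSq M :=
    frobSq_mul_le_of_norm_le_one (norm_transpose_le_one hU) M
  have hright : frobSq ((1 - U * Uᵀ) * M * V) ≤ frobSq M := by
    rw [← frobSq_transpose, Matrix.transpose_mul]
    refine (frobSq_mul_le_of_norm_le_one (norm_transpose_le_one hV) _).trans ?_
    rw [frobSq_transpose]
    exact frobSq_mul_le_of_norm_le_one (norm_one_sub_mul_transpose_le_one hU) M
  have hsplit : tangentProj U V M = U * (Uᵀ * M) + (1 - U * Uᵀ) * M * V * Vᵀ := by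
    simp only [tangentProj_apply, Matrix.mul_assoc]
  calc frobSq (projS Ω (tangentProj U V M))
      ≤ 2 * (frobSq (projS Ω (U * (Uᵀ * M))) +
          frobSq (projS Ω ((1 - U * Uᵀ) * M * V * Vᵀ))) := by
        rw [hsplit, projS_add]
        exact frobSq_add_le _ _
    _ ≤ 2 * (τ * frobSq (Uᵀ * M) + τ * frobSq ((1 - U * Uᵀ) * M * V)) := by
        gcongr
        · exact frobSq_projS_mul_le hcol _
        · exact frobSq_projS_mul_transpose_le hrow _
    _ ≤ 2 * (τ * frobSq M + τ * frobSq M) := by gcongr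
    _ = 4 * τ * frobSq M := by ring

end RestrictedProjection

end TangentSpace

section MatrixChernoff

variable {κ : Type*}

theorem posSemidef_vecMulVec_self [Finite κ] (v : κ → ℝ) : (vecMulVec v v).PosSemidef := by
  simpa using Matrix.posSemidef_vecMulVec_self_star v

variable [Fintype κ]

theorem sum_mul_sum_mul_le_of_monovary {w f g : κ → ℝ} (hw : ∀ l, 0 ≤ w l) (hfg : Monovary f g) :
    (∑ l, f l * w l) * (∑ l, g l * w l) ≤ (∑ l, w l) * ∑ l, f l * g l * w l := by
  have hpairs : 0 ≤ ∑ k, ∑ l, w k * w l * ((f k - f l) * (g k - g l)) :=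
    Finset.sum_nonneg fun k _ => Finset.sum_nonneg fun l _ =>
      mul_nonneg (mul_nonneg (hw k) (hw l)) (hfg.sub_mul_sub_nonneg l k)
  have hexpand : ∑ k, ∑ l, w k * w l * ((f k - f l) * (g k - g l)) =
      ((∑ l, f l * g l * w l) * (∑ l, w l) + (∑ l, w l) * ∑ l, f l * g l * w l) -
        ((∑ l, f l * w l) * (∑ l, g l * w l) + (∑ l, g l * w l) * ∑ l, f l * w l) := by
    simp only [Fintype.sum_mul_sum, ← Finset.sum_add_distrib, ← Finset.sum_sub_distrib]
    exact Finset.sum_congr rfl fun k _ => Finset.sum_congr rfl fun l _ => by ring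
  linarith [mul_comm (∑ l, w l) (∑ l, f l * g l * w l),
    mul_comm (∑ l, f l * w l) (∑ l, g l * w l)]

theorem dotProduct_mulVec_eq_trace (M : Matrix κ κ ℝ) (v : κ → ℝ) :
    v ⬝ᵥ (M *ᵥ v) = (M * vecMulVec v v).trace := by
  rw [Matrix.mul_vecMulVec, Matrix.trace_vecMulVec, dotProduct_comm]

theorem dotProduct_mul_vecMulVec_mul_mulVec (B A : Matrix κ κ ℝ) (v : κ → ℝ) :
    v ⬝ᵥ ((B * vecMulVec v v * A) *ᵥ v) = (v ⬝ᵥ (B *ᵥ v)) * (v ⬝ᵥ (A *ᵥ v)) := by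
  rw [← Matrix.mulVec_mulVec, ← Matrix.mulVec_mulVec, Matrix.vecMulVec_mulVec,
    Matrix.mulVec_smul, op_smul_eq_smul, dotProduct_smul, smul_eq_mul, mul_comm]

variable [DecidableEq κ]

section Diagonalization

theorem exists_eq_conj_diagonal {A : Matrix κ κ ℝ} (hA : A.PosSemidef) :
    ∃ (P : Matrix κ κ ℝ) (d : κ → ℝ), Pᵀ * P = 1 ∧ (∀ l, 0 ≤ d l) ∧ A = P * diagonal d * Pᵀ := by
  refine ⟨hA.1.eigenvectorUnitary, hA.1.eigenvalues, ?_, hA.eigenvalues_nonneg, ?_⟩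
  · have hunitary := Matrix.mem_unitaryGroup_iff'.mp hA.1.eigenvectorUnitary.2
    rwa [Matrix.star_eq_conjTranspose, Matrix.conjTranspose_eq_transpose_of_trivial] at hunitary
  · have hspectral := hA.1.spectral_theorem
    rwa [Unitary.conjStarAlgAut_apply, Matrix.star_eq_conjTranspose,
      Matrix.conjTranspose_eq_transpose_of_trivial] at hspectral

variable {P : Matrix κ κ ℝ}

theorem dotProduct_conj_diagonal_mulVec (P : Matrix κ κ ℝ) (f v : κ → ℝ) :
    v ⬝ᵥ ((P * diagonal f * Pᵀ) *ᵥ v) = ∑ l, f l * (Pᵀ *ᵥ v) l ^ 2 := by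
  rw [← Matrix.mulVec_mulVec, ← Matrix.mulVec_mulVec, Matrix.dotProduct_mulVec,
    ← Matrix.mulVec_transpose]
  simp only [dotProduct, Matrix.mulVec_diagonal]
  exact Finset.sum_congr rfl fun l _ => by ring

section Orthogonal

variable (hP : Pᵀ * P = 1)
include hP

theorem conj_diagonal_const (c : ℝ) :
    P * diagonal (fun _ => c) * Pᵀ = c • (1 : Matrix κ κ ℝ) := by
  rw [← Matrix.smul_one_eq_diagonal, Matrix.mul_smul, Matrix.mul_one, Matrix.smul_mul,
    mul_eq_one_comm.mp hP]

theorem conj_diagonal_mul (f g : κ → ℝ) :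
    P * diagonal f * Pᵀ * (P * diagonal g * Pᵀ) = P * diagonal (fun l => f l * g l) * Pᵀ := by
  calc P * diagonal f * Pᵀ * (P * diagonal g * Pᵀ)
      = P * diagonal f * (Pᵀ * P) * diagonal g * Pᵀ := by simp only [Matrix.mul_assoc]
    _ = _ := by rw [hP, Matrix.mul_one, Matrix.mul_assoc P, Matrix.diagonal_mul_diagonal]

theorem conj_diagonal_pow (f : κ → ℝ) (p : ℕ) :
    (P * diagonal f * Pᵀ) ^ p = P * diagonal (fun l => f l ^ p) * Pᵀ := by
  induction p with
  | zero => simp [mul_eq_one_comm.mp hP]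
  | succ p ih => simp only [pow_succ, ih, conj_diagonal_mul hP]

theorem trace_conj_diagonal (f : κ → ℝ) : (P * diagonal f * Pᵀ).trace = ∑ l, f l := by
  rw [Matrix.trace_mul_comm, ← Matrix.mul_assoc, hP, Matrix.one_mul, Matrix.trace_diagonal]

theorem conj_diagonal_add_smul_one (f : κ → ℝ) (μ : ℝ) :
    P * diagonal f * Pᵀ + μ • (1 : Matrix κ κ ℝ) = P * diagonal (fun l => f l + μ) * Pᵀ := by
  rw [← conj_diagonal_const hP μ, ← Matrix.add_mul, ← Matrix.mul_add, Matrix.diagonal_add]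

theorem dotProduct_shift_pow_mul_pow_mulVec (d v : κ → ℝ) (μ : ℝ) (j i : ℕ) :
    v ⬝ᵥ (((P * diagonal d * Pᵀ + μ • (1 : Matrix κ κ ℝ)) ^ j * (P * diagonal d * Pᵀ) ^ i) *ᵥ v) =
      ∑ l, (d l + μ) ^ j * d l ^ i * (Pᵀ *ᵥ v) l ^ 2 := by
  rw [conj_diagonal_add_smul_one hP, conj_diagonal_pow hP, conj_diagonal_pow hP,
    conj_diagonal_mul hP, dotProduct_conj_diagonal_mulVec]

end Orthogonal

end Diagonalization

theorem dotProduct_rankOne_pow_succ_mul_pow_mulVec (A : Matrix κ κ ℝ) (v : κ → ℝ) (j i : ℕ) :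
    v ⬝ᵥ (((A + vecMulVec v v) ^ (j + 1) * A ^ i) *ᵥ v) =
      v ⬝ᵥ (((A + vecMulVec v v) ^ j * A ^ (i + 1)) *ᵥ v) +
        (v ⬝ᵥ (((A + vecMulVec v v) ^ j) *ᵥ v)) * (v ⬝ᵥ ((A ^ i) *ᵥ v)) := by
  rw [← dotProduct_mul_vecMulVec_mul_mulVec, ← dotProduct_add, ← Matrix.add_mulVec, pow_succ,
    pow_succ' A]
  noncomm_ring

section RankOneUpdate

variable {A : Matrix κ κ ℝ} (hA : A.PosSemidef) {μ : ℝ}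
include hA

theorem dotProduct_pow_mulVec_nonneg (v : κ → ℝ) (i : ℕ) : 0 ≤ v ⬝ᵥ ((A ^ i) *ᵥ v) := by
  simpa using (hA.pow i).dotProduct_mulVec_nonneg v

theorem dotProduct_shift_pow_mul_pow_mulVec_nonneg (v : κ → ℝ) (hμ : 0 ≤ μ) (j i : ℕ) :
    0 ≤ v ⬝ᵥ (((A + μ • (1 : Matrix κ κ ℝ)) ^ j * A ^ i) *ᵥ v) := by
  obtain ⟨P, d, hP, hd, rfl⟩ := exists_eq_conj_diagonal hA
  rw [dotProduct_shift_pow_mul_pow_mulVec hP]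
  exact Finset.sum_nonneg fun l _ => mul_nonneg
    (mul_nonneg (pow_nonneg (add_nonneg (hd l) hμ) _) (pow_nonneg (hd l) _)) (sq_nonneg _)

theorem dotProduct_shift_pow_mulVec_mul_le
 (v : κ → ℝ) (hμ : 0 ≤ μ) (j i : ℕ) :
    (v ⬝ᵥ (((A + μ • (1 : Matrix κ κ ℝ)) ^ j) *ᵥ v)) * (v ⬝ᵥ ((A ^ i) *ᵥ v)) ≤
      (v ⬝ᵥ v) * (v ⬝ᵥ (((A + μ • (1 : Matrix κ κ ℝ)) ^ j * A ^ i) *ᵥ v)) := by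
  obtain ⟨P, d, hP, hd, rfl⟩ := exists_eq_conj_diagonal hA
  have hmoment := dotProduct_shift_pow_mul_pow_mulVec hP d v μ
  have hshift := hmoment j 0
  have hpow := hmoment 0 i
  have hone := hmoment 0 0
  simp only [pow_zero, mul_one, one_mul, Matrix.one_mulVec] at hshift hpow hone
  rw [hshift, hpow, hone, hmoment]
  refine sum_mul_sum_mul_le_of_monovary (fun l => sq_nonneg _) fun k l hkl => ?_
  have hdkl : d k ≤ d l := (lt_of_pow_lt_pow_left₀ i (hd l) hkl).le
  exact pow_le_pow_left₀ (add_nonneg (hd k) hμ) (by gcongr) _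

theorem dotProduct_rankOne_pow_mul_pow_mulVec_nonneg (v : κ → ℝ) (j i : ℕ) :
    0 ≤ v ⬝ᵥ (((A + vecMulVec v v) ^ j * A ^ i) *ᵥ v) := by
  induction j generalizing i with
  | zero => simpa only [pow_zero, one_mul] using dotProduct_pow_mulVec_nonneg hA v i
  | succ j ih =>
    rw [dotProduct_rankOne_pow_succ_mul_pow_mulVec]
    refine add_nonneg (ih _) (mul_nonneg ?_ (dotProduct_pow_mulVec_nonneg hA v i))
    simpa only [pow_zero, mul_one] using ih 0

theorem dotProduct_rankOne_pow_mul_pow_mulVec_le {v : κ → ℝ} (hv : v ⬝ᵥ v ≤ μ) (j i : ℕ) :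
    v ⬝ᵥ (((A + vecMulVec v v) ^ j * A ^ i) *ᵥ v) ≤
      v ⬝ᵥ (((A + μ • (1 : Matrix κ κ ℝ)) ^ j * A ^ i) *ᵥ v) := by
  have hμ : 0 ≤ μ := (Finset.sum_nonneg fun l _ => mul_self_nonneg (v l)).trans hv
  induction j generalizing i with
  | zero => simp only [pow_zero, le_refl]
  | succ j ih =>
    have hih0 := ih 0
    simp only [pow_zero, mul_one] at hih0
    calc v ⬝ᵥ (((A + vecMulVec v v) ^ (j + 1) * A ^ i) *ᵥ v)
        = v ⬝ᵥ (((A + vecMulVec v v) ^ j * A ^ (i + 1)) *ᵥ v) +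
            (v ⬝ᵥ (((A + vecMulVec v v) ^ j) *ᵥ v)) * (v ⬝ᵥ ((A ^ i) *ᵥ v)) :=
          dotProduct_rankOne_pow_succ_mul_pow_mulVec A v j i
      _ ≤ v ⬝ᵥ (((A + μ • (1 : Matrix κ κ ℝ)) ^ j * A ^ (i + 1)) *ᵥ v) +
            (v ⬝ᵥ (((A + μ • (1 : Matrix κ κ ℝ)) ^ j) *ᵥ v)) * (v ⬝ᵥ ((A ^ i) *ᵥ v)) :=
          add_le_add (ih (i + 1))
            (mul_le_mul_of_nonneg_right hih0 (dotProduct_pow_mulVec_nonneg hA v i))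
      _ ≤ v ⬝ᵥ (((A + μ • (1 : Matrix κ κ ℝ)) ^ j * A ^ (i + 1)) *ᵥ v) +
            μ * (v ⬝ᵥ (((A + μ • (1 : Matrix κ κ ℝ)) ^ j * A ^ i) *ᵥ v)) := by
          refine add_le_add le_rfl ((dotProduct_shift_pow_mulVec_mul_le hA v hμ j i).trans ?_)
          exact mul_le_mul_of_nonneg_right hv
            (dotProduct_shift_pow_mul_pow_mulVec_nonneg hA v hμ j i)
      _ = v ⬝ᵥ (((A + μ • (1 : Matrix κ κ ℝ)) ^ (j + 1) * A ^ i) *ᵥ v) := by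
          rw [pow_succ (A + _), pow_succ' A, Matrix.mul_assoc _ (A + _),
 Matrix.add_mul, Matrix.mul_add,
            Matrix.add_mulVec, dotProduct_add, Matrix.smul_mul, Matrix.one_mul, Matrix.mul_smul,
            Matrix.smul_mulVec, dotProduct_smul, smul_eq_mul]

end RankOneUpdate

section TraceExp

theorem pow_sub_pow_eq_sum {R : Type*} [Ring R] (x y : R) (p : ℕ) :
    x ^ p - y ^ p = ∑ i ∈ Finset.range p, y ^ i * (x - y) * x ^ (p - 1 - i) := by
  have htelescope := Finset.sum_range_sub' (fun i => y ^ i * x ^ (p - i)) p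
  simp only [pow_zero, one_mul, Nat.sub_zero, Nat.sub_self, mul_one] at htelescope
  rw [← htelescope]
  refine Finset.sum_congr rfl fun i hi => ?_
  have hsub : p - i = (p - 1 - i) + 1 := by have := Finset.mem_range.mp hi; omega
  rw [hsub, show p - (i + 1) = p - 1 - i by omega, pow_succ' x, pow_succ y]
  noncomm_ring

theorem trace_rankOne_pow_sub (A : Matrix κ κ ℝ) (v : κ → ℝ) (p : ℕ) :
    ((A + vecMulVec v v) ^ p).trace - (A ^ p).trace = ∑ i ∈ Finset.range p,
      v ⬝ᵥ (((A + vecMulVec v v) ^ (p - 1 - i) * A ^ i) *ᵥ v) := by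
  rw [← Matrix.trace_sub, pow_sub_pow_eq_sum, Matrix.trace_sum, add_sub_cancel_left]
  refine Finset.sum_congr rfl fun i _ => ?_
  rw [dotProduct_mulVec_eq_trace, Matrix.mul_assoc, Matrix.trace_mul_comm, Matrix.mul_assoc,
    Matrix.trace_mul_comm]

theorem sum_trace_shift_pow_mul_pow (A : Matrix κ κ ℝ) (μ : ℝ) (p : ℕ) :
    μ * ∑ i ∈ Finset.range p, ((A + μ • (1 : Matrix κ κ ℝ)) ^ (p - 1 - i) * A ^ i).trace =
      ((A + μ • (1 : Matrix κ κ ℝ)) ^ p).trace - (A ^ p).trace := by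
  have hcomm : Commute A (A + μ • (1 : Matrix κ κ ℝ)) :=
    (Commute.refl A).add_right ((Commute.one_right A).smul_right μ)
  rw [← Matrix.trace_sub, pow_sub_pow_eq_sum, add_sub_cancel_left, ← Matrix.trace_sum,
    ← smul_eq_mul, ← Matrix.trace_smul, Finset.smul_sum]
  congr 1
  refine Finset.sum_congr rfl fun i _ => ?_
  rw [mul_smul_comm, smul_mul_assoc, mul_one, (hcomm.pow_pow i (p - 1 - i)).eq]

/-- The trace of `exp (t A)`, as a power series. -/
noncomputable def traceExp (t : ℝ) (A : Matrix κ κ ℝ) : ℝ :=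
  ∑' p : ℕ, t ^ p / p.factorial * (A ^ p).trace

theorem hasSum_conj_diagonal {P : Matrix κ κ ℝ} (hP : Pᵀ * P = 1) (d : κ → ℝ) (t : ℝ) :
    HasSum (fun p : ℕ => t ^ p / p.factorial * ((P * diagonal d * Pᵀ) ^ p).trace)
      (∑ l, Real.exp (t * d l)) := by
  simp_rw [conj_diagonal_pow hP, trace_conj_diagonal hP, Finset.mul_sum]
  refine hasSum_sum fun l _ => ?_
  simp_rw [div_mul_eq_mul_div, ← mul_pow, Real.exp_eq_exp_ℝ]
  exact NormedSpace.expSeries_div_hasSum_exp (t * d l)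

theorem traceExp_conj_diagonal {P : Matrix κ κ ℝ} (hP : Pᵀ * P = 1) (d : κ → ℝ) (t : ℝ) :
    traceExp t (P * diagonal d * Pᵀ) = ∑ l, Real.exp (t * d l) :=
  (hasSum_conj_diagonal hP d t).tsum_eq

theorem traceExp_zero (t : ℝ) : traceExp t (0 : Matrix κ κ ℝ) = Fintype.card κ := by
  simpa using traceExp_conj_diagonal (P := (1 : Matrix κ κ ℝ)) (by simp) 0 t

section PosSemidef

variable {A : Matrix κ κ ℝ} (hA : A.PosSemidef) {t : ℝ}
include hA

theorem hasSum_traceExp (t : ℝ) :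
    HasSum (fun p : ℕ => t ^ p / p.factorial * (A ^ p).trace) (traceExp t A) := by
  obtain ⟨P, d, hP, _, rfl⟩ := exists_eq_conj_diagonal hA
  exact (hasSum_conj_diagonal hP d t).summable.hasSum

theorem traceExp_nonneg (t : ℝ) : 0 ≤ traceExp t A := by
  obtain ⟨P, d, hP, _, rfl⟩ := exists_eq_conj_diagonal hA
  rw [traceExp_conj_diagonal hP]
  exact Finset.sum_nonneg fun l _ => (Real.exp_pos _).le

theorem traceExp_add_smul_one (t μ : ℝ) :
    traceExp t (A + μ • (1 : Matrix κ κ ℝ)) = Real.exp (t * μ) * traceExp t A := by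
  obtain ⟨P, d, hP, _, rfl⟩ := exists_eq_conj_diagonal hA
  rw [conj_diagonal_add_smul_one hP, traceExp_conj_diagonal hP, traceExp_conj_diagonal hP,
    Finset.mul_sum]
  exact Finset.sum_congr rfl fun l _ => by rw [← Real.exp_add]; ring_nf

theorem exp_le_traceExp_of_lt {τ : ℝ} (ht : 0 ≤ t) {x : κ → ℝ}
    (hx : τ * (x ⬝ᵥ x) < x ⬝ᵥ (A *ᵥ x)) : Real.exp (t * τ) ≤ traceExp t A := by
  obtain ⟨P, d, hP, _, rfl⟩ := exists_eq_conj_diagonal hA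
  rw [traceExp_conj_diagonal hP]
  obtain ⟨l, hl⟩ : ∃ l, τ < d l := by
    by_contra! hd
    have hxx := dotProduct_conj_diagonal_mulVec P (fun _ => 1) x
    rw [conj_diagonal_const hP, one_smul, Matrix.one_mulVec] at hxx
    rw [dotProduct_conj_diagonal_mulVec, hxx, Finset.mul_sum] at hx
    refine absurd hx (not_lt.mpr (Finset.sum_le_sum fun l _ => ?_))
    rw [one_mul]
    exact mul_le_mul_of_nonneg_right (hd l) (sq_nonneg _)
  calc Real.exp (t * τ) ≤ Real.exp (t * d l) := by gcongr
    _ ≤ ∑ l, Real.exp (t * d l) :=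
      Finset.single_le_sum (f := fun l => Real.exp (t * d l))
        (fun l _ => (Real.exp_pos _).le) (Finset.mem_univ l)

theorem traceExp_le_add_rankOne (v : κ → ℝ) (ht : 0 ≤ t) :
    traceExp t A ≤ traceExp t (A + vecMulVec v v) := by
  refine hasSum_le (fun p => ?_) (hasSum_traceExp hA t)
    (hasSum_traceExp (hA.add (posSemidef_vecMulVec_self v)) t)
  gcongr
  rw [← sub_nonneg, trace_rankOne_pow_sub]
  exact Finset.sum_nonneg fun i _ => dotProduct_rankOne_pow_mul_pow_mulVec_nonneg hA v _ _

section Resolution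

variable {ι : Type*} [Fintype ι] {v : ι → κ → ℝ}
  (hv : ∑ e, vecMulVec (v e) (v e) = (1 : Matrix κ κ ℝ)) {μ : ℝ} (hvμ : ∀ e, v e ⬝ᵥ v e ≤ μ)

omit hA in
include hv in
theorem sum_dotProduct_mulVec (M : Matrix κ κ ℝ) : ∑ e, v e ⬝ᵥ (M *ᵥ v e) = M.trace := by
  simp_rw [dotProduct_mulVec_eq_trace]
  rw [← Matrix.trace_sum, ← Matrix.mul_sum, hv, Matrix.mul_one]

include hv hvμ

theorem sum_trace_rankOne_pow_sub_le (hμ : 0 ≤ μ) (p : ℕ) :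
    μ * ∑ e, (((A + vecMulVec (v e) (v e)) ^ p).trace - (A ^ p).trace) ≤
      ((A + μ • (1 : Matrix κ κ ℝ)) ^ p).trace - (A ^ p).trace := by
  rw [← sum_trace_shift_pow_mul_pow]
  gcongr
  simp_rw [trace_rankOne_pow_sub, ← sum_dotProduct_mulVec hv]
  rw [Finset.sum_comm]
  gcongr with i _ e _
  exact dotProduct_rankOne_pow_mul_pow_mulVec_le hA (hvμ e) _ _

theorem sum_traceExp_rankOne_sub_le (hμ : 0 < μ) (ht : 0 ≤ t) :
    ∑ e, (traceExp t (A + vecMulVec (v e) (v e)) - traceExp t A) ≤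
      (Real.exp (t * μ) - 1) / μ * traceExp t A := by
  have hshift : (A + μ • (1 : Matrix κ κ ℝ)).PosSemidef :=
    hA.add (Matrix.PosSemidef.one.smul hμ.le)
  have hleft := (hasSum_sum (s := Finset.univ) fun e _ =>
    (hasSum_traceExp (hA.add (posSemidef_vecMulVec_self (v e))) t).sub
      (hasSum_traceExp hA t)).mul_left μ
  have hright := (hasSum_traceExp hshift t).sub (hasSum_traceExp hA t)
  have hle : μ * ∑ e, (traceExp t (A + vecMulVec (v e) (v e)) - traceExp t A) ≤
      traceExp t (A + μ • (1 : Matrix κ κ ℝ)) - traceExp t A := by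
    refine hasSum_le (fun p => ?_) hleft hright
    simp_rw [← mul_sub, ← Finset.mul_sum]
    rw [mul_left_comm]
    gcongr
    exact sum_trace_rankOne_pow_sub_le hA hv hvμ hμ.le p
  rw [traceExp_add_smul_one hA] at hle
  rw [div_mul_eq_mul_div, le_div_iff₀ hμ]
  linarith

end Resolution

end PosSemidef

end TraceExp

end MatrixChernoff

section SubsetAverages

variable {ι : Type*} [Fintype ι] [DecidableEq ι]

theorem sum_powersetCard_succ_sum (f : Finset ι → ι → ℝ) (k : ℕ) :
    ∑ S ∈ Finset.powersetCard (k + 1) Finset.univ, ∑ e ∈ S, f S e =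
      ∑ S ∈ Finset.powersetCard k Finset.univ, ∑ e ∈ Sᶜ, f (insert e S) e := by
  rw [Finset.sum_sigma', Finset.sum_sigma']
  refine Finset.sum_bij' (fun x _ => ⟨x.1.erase x.2, x.2⟩) (fun x _ => ⟨insert x.2 x.1, x.2⟩)
    ?_ ?_ ?_ ?_ ?_ <;> rintro ⟨S, e⟩ hx <;>
    simp only [Finset.mem_sigma, Finset.mem_powersetCard_univ, Finset.mem_compl] at hx
  · simp [Finset.card_erase_of_mem hx.2, hx.1]
  · simp [Finset.card_insert_of_notMem hx.2, hx.1]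
  · simp [Finset.insert_erase hx.2]
  · simp [Finset.erase_insert hx.2]
  · simp [Finset.insert_erase hx.2]

theorem succ_mul_sum_powersetCard_succ (f : Finset ι → ℝ) (k : ℕ) :
    (k + 1 : ℝ) * ∑ S ∈ Finset.powersetCard (k + 1) Finset.univ, f S =
      ∑ S ∈ Finset.powersetCard k Finset.univ, ∑ e ∈ Sᶜ, f (insert e S) := by
  rw [← sum_powersetCard_succ_sum fun S _ => f S, Finset.mul_sum]
  refine Finset.sum_congr rfl fun S hS => ?_
  rw [Finset.sum_const, Finset.mem_powersetCard_univ.mp hS, nsmul_eq_mul, Nat.cast_succ]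

section Recursion

variable {f : Finset ι → ℝ} {b C : ℝ} (hb : 0 ≤ b) (hf : ∀ S, 0 ≤ f S)
  (hstep : ∀ S, ∑ e ∈ Sᶜ, (f (insert e S) - f S) ≤ b * f S)
include hb hf hstep

theorem expect_powersetCard_succ_le {k : ℕ} (hk : 2 * (k + 1) ≤ Fintype.card ι) :
    𝔼 S ∈ Finset.powersetCard (k + 1) Finset.univ, f S ≤
      (1 + 2 * b / Fintype.card ι) * 𝔼 S ∈ Finset.powersetCard k Finset.univ, f S := by
  set N := Fintype.card ι with hN
  have hk' : (2 * (k + 1) : ℝ) ≤ N := by exact_mod_cast hk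
  have hNpos : (0 : ℝ) < N := by linarith [k.cast_nonneg (α := ℝ)]
  have hbN : b ≤ (N - k) * (2 * b / N) := by
    calc b = (N : ℝ) / 2 * (2 * b / N) := by field_simp
      _ ≤ _ := by gcongr; linarith
  have hsum : (k + 1 : ℝ) * ∑ S ∈ Finset.powersetCard (k + 1) Finset.univ, f S ≤
      (N - k) * (1 + 2 * b / N) * ∑ S ∈ Finset.powersetCard k Finset.univ, f S := by
    rw [succ_mul_sum_powersetCard_succ, Finset.mul_sum]
    refine Finset.sum_le_sum fun S hS => ?_
    have hS' := hstep S
    rw [Finset.sum_sub_distrib, Finset.sum_const, Finset.card_compl,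
      Finset.mem_powersetCard_univ.mp hS, nsmul_eq_mul, Nat.cast_sub (by omega)] at hS'
    nlinarith [mul_le_mul_of_nonneg_right hbN (hf S)]
  have hchoose : (N.choose (k + 1) : ℝ) * (k + 1) = N.choose k * (N - k) := by
    rw [← Nat.cast_sub (by omega)]
    exact_mod_cast Nat.choose_succ_right_eq N k
  have hck : (0 : ℝ) < N.choose k := by exact_mod_cast Nat.choose_pos (by omega)
  have hck' : (0 : ℝ) < N.choose (k + 1) := by exact_mod_cast Nat.choose_pos (by omega)
  rw [Finset.expect_eq_sum_div_card, Finset.expect_eq_sum_div_card, Finset.card_powersetCard,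
    Finset.card_powersetCard, Finset.card_univ, ← hN, ← mul_div_assoc, div_le_div_iff₀ hck' hck]
  refine le_of_mul_le_mul_left ?_ (by positivity : (0 : ℝ) < k + 1)
  linear_combination (N.choose k : ℝ) * hsum -
    (1 + 2 * b / N) * (∑ S ∈ Finset.powersetCard k Finset.univ, f S) * hchoose

theorem expect_powersetCard_le (m : ℕ) (hm : 2 * m ≤ Fintype.card ι) :
    𝔼 S ∈ Finset.powersetCard m Finset.univ, f S ≤
      (1 + 2 * b / Fintype.card ι) ^ m * f ∅ := by
  induction m with
  | zero => simp
  | succ k ih =>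
    calc _ ≤ (1 + 2 * b / Fintype.card ι) * 𝔼 S ∈ Finset.powersetCard k Finset.univ, f S :=
          expect_powersetCard_succ_le hb hf hstep hm
      _ ≤ (1 + 2 * b / Fintype.card ι) * ((1 + 2 * b / Fintype.card ι) ^ k * f ∅) := by
          gcongr
          exact ih (by omega)
      _ = _ := by ring

theorem expect_card_eq_le_exp {ρ : ℝ} (hρ0 : 0 ≤ ρ) {m : ℕ} (hm : 2 * m ≤ Fintype.card ι)
    (hρ : (m : ℝ) ≤ ρ * Fintype.card ι) :
    𝔼 Ω : {Ω : Finset ι // Ω.card = m}, f Ω.1 ≤ Real.exp (2 * b * ρ) * f ∅ := by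
  have hsubtype : 𝔼 Ω : {Ω : Finset ι // Ω.card = m}, f Ω.1 =
      𝔼 S ∈ Finset.powersetCard m Finset.univ, f S := by
    rw [Fintype.expect_eq_sum_div_card, Finset.expect_eq_sum_div_card, Fintype.card_finset_len,
      Finset.card_powersetCard, Finset.card_univ,
      Finset.sum_subtype _ (fun _ => Finset.mem_powersetCard_univ)]
  rw [hsubtype]
  refine (expect_powersetCard_le hb hf hstep m hm).trans
    (mul_le_mul_of_nonneg_right ?_ (hf ∅))
  calc (1 + 2 * b / Fintype.card ι) ^ m ≤ Real.exp (2 * b / Fintype.card ι) ^ m := by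
        gcongr
        rw [add_comm]
        exact Real.add_one_le_exp _
    _ = Real.exp (2 * b * (m / Fintype.card ι)) := by
        rw [← Real.exp_nat_mul]
        ring_nf
    _ ≤ Real.exp (2 * b * ρ) := by
        gcongr
        exact div_le_of_le_mul₀ (Nat.cast_nonneg _) hρ0 hρ

end Recursion

end SubsetAverages

section RankOneChernoff

variable {ι κ η : Type*}

theorem posSemidef_sum_vecMulVec_self [Finite κ] (v : ι → κ → ℝ) (S : Finset ι) :
    (∑ e ∈ S, vecMulVec (v e) (v e)).PosSemidef :=
  Finset.sum_induction _ Matrix.PosSemidef (fun _ _ => Matrix.PosSemidef.add)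
    Matrix.PosSemidef.zero fun e _ => posSemidef_vecMulVec_self (v e)

theorem sum_vecMulVec_rows [DecidableEq κ] [Fintype η] {U : Matrix η κ ℝ} (hU : Uᵀ * U = 1) :
    ∑ i, vecMulVec (U i) (U i) = 1 := by
  rw [← hU]
  ext k l
  simp [Matrix.sum_apply, Matrix.vecMulVec_apply, Matrix.mul_apply]

variable [Fintype κ]

theorem dotProduct_sum_vecMulVec_self_mulVec (v : ι → κ → ℝ) (S : Finset ι) (x : κ → ℝ) :
    x ⬝ᵥ ((∑ e ∈ S, vecMulVec (v e) (v e)) *ᵥ x) = ∑ e ∈ S, (v e ⬝ᵥ x) ^ 2 := by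
  rw [Matrix.sum_mulVec, dotProduct_sum]
  refine Finset.sum_congr rfl fun e _ => ?_
  rw [Matrix.vecMulVec_mulVec, op_smul_eq_smul, dotProduct_smul, smul_eq_mul,
    dotProduct_comm x, sq]

variable [DecidableEq κ] [Fintype ι]

theorem sum_compl_traceExp_insert_sub_le [DecidableEq ι] {v : ι → κ → ℝ}
    (hv : ∑ e, vecMulVec (v e) (v e) = (1 : Matrix κ κ ℝ)) {μ : ℝ} (hμ : 0 < μ)
    (hvμ : ∀ e, v e ⬝ᵥ v e ≤ μ) (S : Finset ι) :
    ∑ e ∈ Sᶜ, (traceExp μ⁻¹ (∑ a ∈ insert e S, vecMulVec (v a) (v a)) -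
        traceExp μ⁻¹ (∑ a ∈ S, vecMulVec (v a) (v a))) ≤
      2 / μ * traceExp μ⁻¹ (∑ a ∈ S, vecMulVec (v a) (v a)) := by
  set A := ∑ a ∈ S, vecMulVec (v a) (v a)
  have hA : A.PosSemidef := posSemidef_sum_vecMulVec_self v S
  have ht : 0 ≤ μ⁻¹ := by positivity
  calc ∑ e ∈ Sᶜ, (traceExp μ⁻¹ (∑ a ∈ insert e S, vecMulVec (v a) (v a)) - traceExp μ⁻¹ A)
      = ∑ e ∈ Sᶜ, (traceExp μ⁻¹ (A + vecMulVec (v e) (v e)) - traceExp μ⁻¹ A) :=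
        Finset.sum_congr rfl fun e he => by
          rw [Finset.sum_insert (Finset.mem_compl.mp he), add_comm (vecMulVec _ _)]
    _ ≤ ∑ e, (traceExp μ⁻¹ (A + vecMulVec (v e) (v e)) - traceExp μ⁻¹ A) :=
        Finset.sum_le_sum_of_subset_of_nonneg (Finset.subset_univ Sᶜ) fun e _ _ =>
          sub_nonneg.mpr (traceExp_le_add_rankOne hA (v e) ht)
    _ ≤ (Real.exp (μ⁻¹ * μ) - 1) / μ * traceExp μ⁻¹ A :=
        sum_traceExp_rankOne_sub_le hA hv hvμ hμ ht
    _ ≤ 2 / μ * traceExp μ⁻¹ A := by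
        rw [inv_mul_cancel₀ hμ.ne']
        gcongr
        · exact traceExp_nonneg hA _
        · linarith [Real.exp_one_lt_d9]

theorem unifProb_exists_lt_sum_sq_le {v : ι → κ → ℝ}
    (hv : ∑ e, vecMulVec (v e) (v e) = (1 : Matrix κ κ ℝ)) {μ τ ρ : ℝ} (hμ : 0 < μ)
    (hvμ : ∀ e, v e ⬝ᵥ v e ≤ μ) {m : ℕ} (hm : 2 * m ≤ Fintype.card ι) (hρ0 : 0 ≤ ρ)
    (hρ : (m : ℝ) ≤ ρ * Fintype.card ι) :
    unifProb (fun Ω : {Ω : Finset ι // Ω.card = m} =>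
      ∃ x : κ → ℝ, τ * (x ⬝ᵥ x) < ∑ e ∈ Ω.1, (v e ⬝ᵥ x) ^ 2) ≤
      Fintype.card κ * Real.exp ((4 * ρ - τ) / μ) := by
  classical
  have hpsd := posSemidef_sum_vecMulVec_self v
  have hnonneg : ∀ S, 0 ≤ traceExp μ⁻¹ (∑ e ∈ S, vecMulVec (v e) (v e)) := fun S =>
    traceExp_nonneg (hpsd S) _
  calc unifProb (fun Ω : {Ω : Finset ι // Ω.card = m} =>
        ∃ x : κ → ℝ, τ * (x ⬝ᵥ x) < ∑ e ∈ Ω.1, (v e ⬝ᵥ x) ^ 2)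
      ≤ 𝔼 Ω : {Ω : Finset ι // Ω.card = m}, Real.exp (-(μ⁻¹ * τ)) *
          traceExp μ⁻¹ (∑ e ∈ Ω.1, vecMulVec (v e) (v e)) := by
        refine unifProb_le_expect (fun Ω => mul_nonneg (Real.exp_pos _).le (hnonneg _)) ?_
        rintro Ω ⟨x, hx⟩
        rw [← dotProduct_sum_vecMulVec_self_mulVec] at hx
        have hexp := exp_le_traceExp_of_lt (hpsd Ω.1) (inv_pos.mpr hμ).le hx
        rwa [Real.exp_neg, ← div_eq_inv_mul, one_le_div (Real.exp_pos _)]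
    _ ≤ Real.exp (-(μ⁻¹ * τ)) * (Real.exp (2 * (2 / μ) * ρ) * Fintype.card κ) := by
        rw [← Finset.mul_expect]
        gcongr
        refine (expect_card_eq_le_exp (by positivity) hnonneg
          (sum_compl_traceExp_insert_sub_le hv hμ hvμ) hρ0 hm hρ).trans_eq ?_
        rw [Finset.sum_empty, traceExp_zero]
    _ = Fintype.card κ * Real.exp ((4 * ρ - τ) / μ) := by
        rw [← mul_assoc, ← Real.exp_add, mul_comm]
        congr 2
        ring

theorem unifProb_exists_lt_sum_ite_sq_le [DecidableEq ι] [Fintype η] {U : Matrix η κ ℝ}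
    (hU : Uᵀ * U = 1) {μ τ ρ : ℝ} (hμ : 0 < μ) (hUi : ∀ i, ∑ k, U i k ^ 2 ≤ μ) {m : ℕ}
    (hm : 2 * m ≤ Fintype.card ι) (hρ0 : 0 ≤ ρ) (hρ : (m : ℝ) ≤ ρ * Fintype.card ι)
    {g : η → ι} (hg : Function.Injective g) :
    unifProb (fun Ω : {Ω : Finset ι // Ω.card = m} => ∃ x : κ → ℝ,
      τ * ∑ k, x k ^ 2 < ∑ i, (if g i ∈ Ω.1 then (∑ k, U i k * x k) ^ 2 else 0)) ≤
      Fintype.card κ * Real.exp ((4 * ρ - τ) / μ) := by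
  set v : ι → κ → ℝ := Function.extend g (fun i => U i) 0
  have hvg : ∀ i, v (g i) = U i := hg.extend_apply _ _
  have hv0 : ∀ e ∉ Set.range g, v e = 0 := fun e he => Function.extend_apply' _ _ e he
  have hv : ∑ e, vecMulVec (v e) (v e) = (1 : Matrix κ κ ℝ) := by
    rw [← sum_vecMulVec_rows hU]
    exact (Fintype.sum_of_injective g hg _ _ (fun e he => by simp [hv0 e he])
      fun i => by rw [hvg]).symm
  have hvμ : ∀ e, v e ⬝ᵥ v e ≤ μ := by
    intro e
    by_cases he : e ∈ Set.range g
    · obtain ⟨i, rfl⟩ := he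
      rw [hvg]
      simpa only [dotProduct, ← sq] using hUi i
    · simpa [hv0 e he] using hμ.le
  refine (unifProb_mono fun Ω => ?_).trans (unifProb_exists_lt_sum_sq_le hv hμ hvμ hm hρ0 hρ)
  rintro ⟨x, hx⟩
  have hsum : ∑ e ∈ Ω.1, (v e ⬝ᵥ x) ^ 2 =
      ∑ i, (if g i ∈ Ω.1 then (∑ k, U i k * x k) ^ 2 else 0) := by
    rw [← Finset.sum_ite_mem_eq]
    exact (Fintype.sum_of_injective g hg _ _ (fun e he => by simp [hv0 e he])
      fun i => by rw [hvg, dotProduct]).symm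
  exact ⟨x, lt_of_eq_of_lt (by simp [dotProduct, sq]) (hx.trans_eq hsum.symm)⟩

end RankOneChernoff

section SupportGeometry

variable {n1 n2 r : ℕ} {U : Matrix (Fin n1) (Fin r) ℝ} {V : Matrix (Fin n2) (Fin r) ℝ}

theorem unifProb_not_frobSq_projS_tangentProj_le (hU : Uᵀ * U = 1) (hV : Vᵀ * V = 1)
    {μ τ ρ : ℝ} (hμ : 0 < μ) (hτ : 0 ≤ τ) (hUi : ∀ i, ∑ k, U i k ^ 2 ≤ μ)
    (hVj : ∀ j, ∑ k, V j k ^ 2 ≤ μ) {m : ℕ} (hm : 2 * m ≤ n1 * n2) (hρ0 : 0 ≤ ρ)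
    (hρ : (m : ℝ) ≤ ρ * (n1 * n2)) :
    unifProb (fun Ω : {Ω : Finset (Fin n1 × Fin n2) // Ω.card = m} =>
      ¬ ∀ M, frobSq (projS Ω.1 (tangentProj U V M)) ≤ 4 * τ * frobSq M) ≤
      (n1 + n2) * (r * Real.exp ((4 * ρ - τ) / μ)) := by
  have hm' : 2 * m ≤ Fintype.card (Fin n1 × Fin n2) := by simpa using hm
  have hρ' : (m : ℝ) ≤ ρ * Fintype.card (Fin n1 × Fin n2) := by simpa using hρ
  have hcol := unifProb_exists_le_card_mul (Finset.univ : Finset (Fin n2)) _ fun j _ =>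
    unifProb_exists_lt_sum_ite_sq_le (τ := τ) hU hμ hUi hm' hρ0 hρ' (Prod.mk_left_injective j)
  have hrow := unifProb_exists_le_card_mul (Finset.univ : Finset (Fin n1)) _ fun i _ =>
    unifProb_exists_lt_sum_ite_sq_le (τ := τ) hV hμ hVj hm' hρ0 hρ' (Prod.mk_right_injective i)
  rw [Finset.card_univ, Fintype.card_fin, Fintype.card_fin] at hcol hrow
  refine (unifProb_mono (F := fun Ω => _ ∨ _) fun Ω hΩ => ?_).trans
    ((unifProb_or_le _ _).trans ((add_le_add hcol hrow).trans_eq (by ring)))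
  contrapose! hΩ
  exact frobSq_projS_tangentProj_le hU hV hτ (fun j => hΩ.1 j (Finset.mem_univ j))
    fun i => hΩ.2 i (Finset.mem_univ i)

end SupportGeometry

section Golfing

open scoped Matrix.Norms.L2Operator

variable {n1 n2 r : ℕ} {U : Matrix (Fin n1) (Fin r) ℝ} {V : Matrix (Fin n2) (Fin r) ℝ} {K Q : ℕ}

/-- The rescaled sampling operator `Q P_Γ`, where `Γ` consists of the entries to which `γ` assigns
the label `0`. For uniform `γ` each entry is sampled with probability `1 / Q`. -/
def resample (γ : Fin n1 × Fin n2 → Fin Q) (Z : Matrix (Fin n1) (Fin n2) ℝ) :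
    Matrix (Fin n1) (Fin n2) ℝ :=
  Matrix.of fun i j => if (γ (i, j)).val = 0 then Q * Z i j else 0

theorem resample_sub_apply (γ : Fin n1 × Fin n2 → Fin Q) (Z : Matrix (Fin n1) (Fin n2) ℝ)
    (i : Fin n1) (j : Fin n2) : (resample γ Z - Z) i j = selector Q (γ (i, j)) * Z i j := by
  simp only [resample, selector, Matrix.sub_apply, Matrix.of_apply]
  split_ifs <;> ring

theorem abs_resample_apply_le (γ : Fin n1 × Fin n2 → Fin Q) {Z : Matrix (Fin n1) (Fin n2) ℝ}
    {i : Fin n1} {j : Fin n2} {β : ℝ} (hZ : |Z i j| ≤ β) : |resample γ Z i j| ≤ Q * β := by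
  have hQβ : |Q * Z i j| ≤ Q * β := by
    rw [abs_mul, Nat.abs_cast]
    gcongr
  rw [resample, Matrix.of_apply]
  split_ifs
  · exact hQβ
  · simpa using (abs_nonneg _).trans hQβ

theorem sub_tangentProj_resample_apply (γ : Fin n1 × Fin n2 → Fin Q)
    {Z : Matrix (Fin n1) (Fin n2) ℝ} (hZT : tangentProj U V Z = Z) (i : Fin n1) (j : Fin n2) :
    (Z - tangentProj U V (resample γ Z)) i j =
      -∑ p, selector Q (γ p) * (Z p.1 p.2 * tangentProj U V (Matrix.single i j 1) p.1 p.2) := by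
  have hdiff : Z - tangentProj U V (resample γ Z) = -tangentProj U V (resample γ Z - Z) := by
    rw [map_sub, hZT, neg_sub]
  simp_rw [hdiff, Matrix.neg_apply, tangentProj_apply_eq_sum _ i j, resample_sub_apply, mul_assoc]

theorem unifProb_lt_abs_sub_tangentProj_resample_le (hU : Uᵀ * U = 1) (hV : Vᵀ * V = 1) {μ : ℝ}
    (hμ : 0 < μ) (hUi : ∀ i, ∑ k, U i k ^ 2 ≤ μ) (hVj : ∀ j, ∑ k, V j k ^ 2 ≤ μ) (hQ : 0 < Q)
    {Z : Matrix (Fin n1) (Fin n2) ℝ} (hZT : tangentProj U V Z = Z) {β : ℝ} (hβ : 0 < β)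
    (hZ : ∀ i j, |Z i j| ≤ β) (i : Fin n1) (j : Fin n2) :
    unifProb (fun γ : Fin n1 × Fin n2 → Fin Q =>
      β / 2 < |(Z - tangentProj U V (resample γ Z)) i j|) ≤
      2 * Real.exp (-(1 / (32 * (Q * μ)))) := by
  set E := tangentProj U V (Matrix.single i j 1)
  have hle (p : Fin n1 × Fin n2) : |Z p.1 p.2 / β| ≤ 1 := by
    rw [abs_div, abs_of_pos hβ]
    exact div_le_one_of_le₀ (hZ _ _) hβ.le
  have habs (p : Fin n1 × Fin n2) : |Z p.1 p.2 / β * E p.1 p.2| ≤ |E p.1 p.2| := by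
    rw [abs_mul]
    exact mul_le_of_le_one_left (abs_nonneg _) (hle p)
  have hsq : ∑ p : Fin n1 × Fin n2, (Z p.1 p.2 / β * E p.1 p.2) ^ 2 ≤ 2 * μ := by
    refine le_trans ?_ (frobSq_tangentProj_single_le hU hV hUi hVj i j)
    rw [frobSq, ← Fintype.sum_prod_type']
    exact Finset.sum_le_sum fun p _ => sq_le_sq.mpr (habs p)
  have htail := unifProb_lt_abs_sum_selector_mul_le hQ (s := 1 / 2) (by positivity) (by norm_num)
    (by norm_num) hsq fun p => (habs p).trans
      (abs_tangentProj_single_le hU hV hUi hVj i p.1 j p.2)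
  refine (unifProb_mono fun γ hγ => ?_).trans (htail.trans_eq ?_)
  · have hscale : ∑ p, selector Q (γ p) * (Z p.1 p.2 / β * E p.1 p.2) =
        (∑ p, selector Q (γ p) * (Z p.1 p.2 * E p.1 p.2)) / β := by
      rw [Finset.sum_div]
      exact Finset.sum_congr rfl fun p _ => by ring
    rw [sub_tangentProj_resample_apply γ hZT, abs_neg] at hγ
    rw [hscale, abs_div, abs_of_pos hβ, lt_div_iff₀ hβ]
    linarith
  · ring_nf

theorem unifProb_lt_norm_resample_sub_le (hn : n2 ≤ n1) (hQ : 0 < Q)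
    {Z : Matrix (Fin n1) (Fin n2) ℝ} {β : ℝ} (hβ : 0 < β) (hZ : ∀ i j, |Z i j| ≤ β) :
    unifProb (fun γ : Fin n1 × Fin n2 → Fin Q =>
      20 * Q * √n1 * β < ‖resample γ Z - Z‖) ≤ Real.exp (-n1) := by
  have : (0 : ℝ) < Q := by exact_mod_cast hQ
  have : (n2 : ℝ) ≤ n1 := by exact_mod_cast hn
  have hnet (w) (hw : w ∈ ballNet (Fin n1)) (z) (hz : z ∈ ballNet (Fin n2)) :
      unifProb (fun γ : Fin n1 × Fin n2 → Fin Q =>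
        20 * Q * √n1 * β ≤ ∑ p : Fin n1 × Fin n2, (resample γ Z - Z) p.1 p.2 * (w p.1 * z p.2)) ≤
      Real.exp (-(25 / 2 * n1)) := by
    simp_rw [resample_sub_apply, mul_assoc (selector Q _)]
    have hsq : ∑ p : Fin n1 × Fin n2, (Z p.1 p.2 * (w p.1 * z p.2)) ^ 2 ≤ β ^ 2 * 16 :=
      calc ∑ p : Fin n1 × Fin n2, (Z p.1 p.2 * (w p.1 * z p.2)) ^ 2
          ≤ ∑ p : Fin n1 × Fin n2, β ^ 2 * (w p.1 * z p.2) ^ 2 := by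
            simp_rw [mul_pow (Z _ _)]
            exact Finset.sum_le_sum fun p _ => mul_le_mul_of_nonneg_right
              (sq_le_sq.mpr ((hZ _ _).trans (le_abs_self β))) (sq_nonneg _)
        _ ≤ β ^ 2 * 16 := by
            rw [← Finset.mul_sum]
            gcongr
            exact sum_mul_sq_le_of_mem_ballNet hw hz
    refine (unifProb_le_sum_selector_mul_le hQ _ (by positivity) (by positivity) hsq).trans_eq ?_
    rw [mul_pow, mul_pow, mul_pow, Real.sq_sqrt (Nat.cast_nonneg n1)]
    congr 2
    field_simp
    ring
  refine (unifProb_lt_norm_le (Real.exp_pos _).le hnet).trans ?_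
  rw [← Real.exp_add, Fintype.card_fin, Fintype.card_fin]
  gcongr
  linarith [(Nat.cast_nonneg n1 : (0 : ℝ) ≤ n1)]

/-- The failure probability of one golfing step: a union bound over the entries plus the tail of the
spectral norm. -/
noncomputable def golfError (n1 n2 Q : ℕ) (μ : ℝ) : ℝ :=
  n1 * n2 * (2 * Real.exp (-(1 / (32 * (Q * μ))))) + Real.exp (-n1)

theorem golfError_nonneg (n1 n2 Q : ℕ) (μ : ℝ) : 0 ≤ golfError n1 n2 Q μ := by
  unfold golfError
  positivity

theorem unifProb_not_golf_step_le (hU : Uᵀ * U = 1) (hV : Vᵀ * V = 1) {μ : ℝ} (hμ : 0 < μ)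
    (hUi : ∀ i, ∑ k, U i k ^ 2 ≤ μ) (hVj : ∀ j, ∑ k, V j k ^ 2 ≤ μ) (hn : n2 ≤ n1)
    (hQ : 0 < Q) {Z : Matrix (Fin n1) (Fin n2) ℝ} (hZT : tangentProj U V Z = Z) {β : ℝ}
    (hβ : 0 < β) (hZ : ∀ i j, |Z i j| ≤ β) :
    unifProb (fun γ : Fin n1 × Fin n2 → Fin Q =>
      ¬ ((∀ i j, |(Z - tangentProj U V (resample γ Z)) i j| ≤ β / 2) ∧
        ‖resample γ Z - Z‖ ≤ 20 * Q * √n1 * β)) ≤ golfError n1 n2 Q μ := by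
  have hentries := unifProb_exists_le_card_mul (Finset.univ : Finset (Fin n1 × Fin n2)) _
    fun p _ => unifProb_lt_abs_sub_tangentProj_resample_le hU hV hμ hUi hVj hQ hZT hβ hZ p.1 p.2
  rw [Finset.card_univ, Fintype.card_prod, Fintype.card_fin, Fintype.card_fin, Nat.cast_mul]
    at hentries
  have hnorm := unifProb_lt_norm_resample_sub_le hn hQ hβ hZ
  refine (unifProb_mono fun γ hγ => ?_).trans
    ((unifProb_or_le _ _).trans (add_le_add hentries hnorm))
  contrapose! hγ
  exact ⟨fun i j => hγ.1 (i, j) (Finset.mem_univ _), hγ.2⟩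

/-- Success of `K` golfing steps started at `Z`: some `Y` supported on the union of the sampled sets
has `P_T Y` close to `Z`, with entries and `P_{T⊥} Y` under control. -/
def GolfSuccess (U : Matrix (Fin n1) (Fin r) ℝ) (V : Matrix (Fin n2) (Fin r) ℝ)
    (g : Fin K → Fin n1 × Fin n2 → Fin Q) (Z : Matrix (Fin n1) (Fin n2) ℝ) (β : ℝ) : Prop :=
  ∃ Y : Matrix (Fin n1) (Fin n2) ℝ,
    (∀ i j, (∀ k, (g k (i, j)).val ≠ 0) → Y i j = 0) ∧
    (∀ i j, |Y i j| ≤ 2 * Q * β) ∧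
    (∀ i j, |(Z - tangentProj U V Y) i j| ≤ β / 2 ^ K) ∧
    ‖Y - tangentProj U V Y‖ ≤ 40 * Q * √n1 * β

theorem golfSuccess_zero_steps (g : Fin 0 → Fin n1 × Fin n2 → Fin Q)
    {Z : Matrix (Fin n1) (Fin n2) ℝ} {β : ℝ} (hβ : 0 ≤ β) (hZ : ∀ i j, |Z i j| ≤ β) :
    GolfSuccess U V g Z β := by
  refine ⟨0, fun _ _ _ => rfl, fun _ _ => ?_, fun i j => ?_, ?_⟩
  · rw [Matrix.zero_apply, abs_zero]
    positivity
  · simpa using hZ i j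
  · rw [map_zero, sub_zero, norm_zero]
    positivity

theorem golfSuccess_cons (hU : Uᵀ * U = 1) (hV : Vᵀ * V = 1)
    {γ : Fin n1 × Fin n2 → Fin Q} {g : Fin K → Fin n1 × Fin n2 → Fin Q}
    {Z : Matrix (Fin n1) (Fin n2) ℝ} (hZT : tangentProj U V Z = Z) {β : ℝ}
    (hZ : ∀ i j, |Z i j| ≤ β) (hnorm : ‖resample γ Z - Z‖ ≤ 20 * Q * √n1 * β)
    (hg : GolfSuccess U V g (Z - tangentProj U V (resample γ Z)) (β / 2)) :
    GolfSuccess U V (Fin.cons γ g : Fin (K + 1) → Fin n1 × Fin n2 → Fin Q) Z β := by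
  obtain ⟨Y, hsupp, hY, hres, hperp⟩ := hg
  refine ⟨resample γ Z + Y, fun i j hk => ?_, fun i j => ?_, fun i j => ?_, ?_⟩
  · have hk0 : (γ (i, j)).val ≠ 0 := hk 0
    rw [Matrix.add_apply, hsupp i j fun k => hk k.succ, resample, Matrix.of_apply, if_neg hk0,
      add_zero]
  · rw [Matrix.add_apply]
    linarith [abs_add_le (resample γ Z i j) (Y i j), abs_resample_apply_le γ (hZ i j), hY i j]
  · rw [map_add, ← sub_sub]
    exact (hres i j).trans_eq (by rw [pow_succ', div_div])
  · have hsplit : resample γ Z + Y - tangentProj U V (resample γ Z + Y) =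
        ((resample γ Z - Z) - tangentProj U V (resample γ Z - Z)) + (Y - tangentProj U V Y) := by
      rw [map_add, map_sub, hZT]
      abel
    rw [hsplit]
    linarith [norm_sub_tangentProj_le hU hV (resample γ Z - Z),
      norm_add_le ((resample γ Z - Z) - tangentProj U V (resample γ Z - Z))
        (Y - tangentProj U V Y)]

theorem unifProb_not_golfSuccess_le (hU : Uᵀ * U = 1) (hV : Vᵀ * V = 1) {μ : ℝ} (hμ : 0 < μ)
    (hUi : ∀ i, ∑ k, U i k ^ 2 ≤ μ) (hVj : ∀ j, ∑ k, V j k ^ 2 ≤ μ) (hn : n2 ≤ n1)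
    (hQ : 0 < Q) (K : ℕ) {Z : Matrix (Fin n1) (Fin n2) ℝ} (hZT : tangentProj U V Z = Z) {β : ℝ}
    (hβ : 0 < β) (hZ : ∀ i j, |Z i j| ≤ β) :
    unifProb (fun g : Fin K → Fin n1 × Fin n2 → Fin Q => ¬ GolfSuccess U V g Z β) ≤
      K * golfError n1 n2 Q μ := by
  induction K generalizing Z β with
  | zero => simp [unifProb, golfSuccess_zero_steps _ hβ.le hZ]
  | succ K ih =>
    rw [← unifProb_equiv (Fin.consEquiv fun _ : Fin (K + 1) => Fin n1 × Fin n2 → Fin Q)]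
    have hfirst := unifProb_not_golf_step_le hU hV hμ hUi hVj hn hQ hZT hβ hZ
    refine (unifProb_prod_le (δ := K * golfError n1 n2 Q μ)
      (mul_nonneg (Nat.cast_nonneg _) (golfError_nonneg _ _ _ _)) fun γ hγ => ?_).trans
      ((add_le_add_left hfirst _).trans_eq (by push_cast; ring))
    obtain ⟨hentries, hnorm⟩ := not_not.mp hγ
    have hresT : tangentProj U V (Z - tangentProj U V (resample γ Z)) =
        Z - tangentProj U V (resample γ Z) := by
      rw [map_sub, hZT, tangentProj_tangentProj hU hV]
    exact (unifProb_mono fun g hg hs => hg (golfSuccess_cons hU hV hZT hZ hnorm hs)).trans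
      (ih hresT (half_pos hβ) hentries)

end Golfing

section SupportTransfer

variable {ι : Type*}

/-- The action of a permutation on the subsets of cardinality `m`. -/
def permSubsets (σ : Equiv.Perm ι) (m : ℕ) : Equiv.Perm {Ω : Finset ι // Ω.card = m} :=
  σ.finsetCongr.subtypeEquiv fun Ω => by rw [Equiv.finsetCongr_apply, Finset.card_map]

theorem coe_permSubsets (σ : Equiv.Perm ι) {m : ℕ} (Ω : {Ω : Finset ι // Ω.card = m}) :
    (permSubsets σ m Ω).1 = Ω.1.map σ.toEmbedding := rfl

theorem exists_permSubsets_eq [Finite ι] {m : ℕ} (S T : {Ω : Finset ι // Ω.card = m}) :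
    ∃ τ : Equiv.Perm ι, permSubsets τ m S = T := by
  classical
  set e := Finset.equivOfCardEq (S.2.trans T.2.symm)
  refine ⟨e.extendSubtype, Subtype.ext (Finset.eq_of_subset_of_card_le (fun p hp => ?_) ?_)⟩
  · obtain ⟨q, hq, rfl⟩ := Finset.mem_map.mp hp
    exact e.extendSubtype_mem q hq
  · rw [coe_permSubsets, Finset.card_map, S.2, T.2]

variable [Fintype ι]

theorem unifProb_permSubsets [DecidableEq ι] {m : ℕ} (T : {Ω : Finset ι // Ω.card = m})
    (E : {Ω : Finset ι // Ω.card = m} → Prop) :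
    unifProb (fun σ : Equiv.Perm ι => E (permSubsets σ m T)) = unifProb E := by
  classical
  have : Nonempty {Ω : Finset ι // Ω.card = m} := ⟨T⟩
  have htrans (S : {Ω : Finset ι // Ω.card = m}) :
      unifProb (fun σ : Equiv.Perm ι => E (permSubsets σ m S)) =
        unifProb (fun σ : Equiv.Perm ι => E (permSubsets σ m T)) := by
    obtain ⟨τ, rfl⟩ := exists_permSubsets_eq T S
    rw [← unifProb_equiv (Equiv.mulRight τ) fun σ => E (permSubsets σ m T)]
    congr! 3 with σ
    exact Subtype.ext (Finset.map_map _ _ _)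
  calc unifProb (fun σ : Equiv.Perm ι => E (permSubsets σ m T))
      = 𝔼 S, unifProb fun σ : Equiv.Perm ι => E (permSubsets σ m S) := by
        simp_rw [htrans, Fintype.expect_const]
    _ = 𝔼 σ : Equiv.Perm ι, unifProb fun S => E (permSubsets σ m S) := by
        simp_rw [unifProb_eq_expect]
        exact Finset.expect_comm _ _ _
    _ = unifProb E := by simp_rw [unifProb_equiv (permSubsets _ m) E, Fintype.expect_const]

theorem unifProb_mul_unifProb_not_exists_disjoint_le {G : Type*} [Fintype G] (D : G → Finset ι)
    (hsymm : ∀ σ : Equiv.Perm ι, ∃ e : G ≃ G, ∀ g, D (e g) = (D g).map σ.toEmbedding)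
    (m : ℕ) (good : G → Prop) :
    unifProb (fun g => (D g).card + m ≤ Fintype.card ι) *
        unifProb (fun Ω : {Ω : Finset ι // Ω.card = m} => ¬ ∃ g, good g ∧ Disjoint (D g) Ω.1) ≤
      unifProb fun g => ¬ good g := by
  classical
  choose e he using hsymm
  set bad := fun Ω : {Ω : Finset ι // Ω.card = m} => ¬ ∃ g, good g ∧ Disjoint (D g) Ω.1
  -- A random translate `σ T` of a fixed `T` disjoint from `D g` is a uniform `m`-subset, and if it
  -- is bad then the translate `e σ g` of `g` cannot be good.
  have hfiber (g : G) : (if (D g).card + m ≤ Fintype.card ι then 1 else 0) * unifProb bad ≤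
      unifProb fun σ => ¬ good (e σ g) := by
    split_ifs with hg
    · obtain ⟨T, hTD, hT⟩ := Finset.exists_subset_card_eq (s := (D g)ᶜ) (n := m)
        (by rw [Finset.card_compl]; omega)
      have hdisj : Disjoint (D g) T := Finset.subset_compl_iff_disjoint_left.mp hTD
      rw [one_mul, ← unifProb_permSubsets ⟨T, hT⟩ bad]
      refine unifProb_mono fun σ hσ hgood => hσ ⟨e σ g, hgood, ?_⟩
      rwa [he, coe_permSubsets, Finset.disjoint_map]
    · rw [zero_mul]
      exact unifProb_nonneg _
  calc unifProb (fun g => (D g).card + m ≤ Fintype.card ι) * unifProb bad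
      ≤ 𝔼 g, unifProb fun σ => ¬ good (e σ g) := by
        rw [unifProb_eq_expect, Finset.expect_mul]
        exact Finset.expect_le_expect fun g _ => hfiber g
    _ = 𝔼 σ, unifProb fun g => ¬ good (e σ g) := by
        simp_rw [unifProb_eq_expect]
        exact Finset.expect_comm _ _ _
    _ = unifProb fun g => ¬ good g := by
        simp_rw [unifProb_equiv (e _) fun g => ¬ good g, Fintype.expect_const]

variable {K Q : ℕ}

/-- The set of indices sampled, i.e. labelled `0`, in at least one of the `K` rounds. -/
def sampled (g : Fin K → ι → Fin Q) : Finset ι :=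
  Finset.univ.filter fun p => ∃ k, (g k p).val = 0

theorem mem_sampled {g : Fin K → ι → Fin Q} {p : ι} :
    p ∈ sampled g ↔ ∃ k, (g k p).val = 0 := by
  simp [sampled]

theorem exists_equiv_sampled_eq_map (K Q : ℕ) (σ : Equiv.Perm ι) :
    ∃ e : (Fin K → ι → Fin Q) ≃ (Fin K → ι → Fin Q),
      ∀ g, sampled (e g) = (sampled g).map σ.toEmbedding := by
  refine ⟨Equiv.piCongrRight fun _ => Equiv.arrowCongr σ (Equiv.refl _), fun g => ?_⟩
  ext p
  simp [Finset.mem_map_equiv, mem_sampled]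

variable [DecidableEq ι]

theorem expect_card_sampled_le (hQ : 0 < Q) :
    𝔼 g : Fin K → ι → Fin Q, ((sampled g).card : ℝ) ≤ Fintype.card ι * (K / Q) := by
  have : Nonempty (Fin Q) := ⟨⟨0, hQ⟩⟩
  have hunion (g : Fin K → ι → Fin Q) :
      ((sampled g).card : ℝ) ≤ ∑ k, ∑ p, if (g k p).val = 0 then 1 else 0 := by
    have hsub : sampled g = Finset.univ.biUnion fun k => Finset.univ.filter fun p =>
        (g k p).val = 0 := by
      ext p
      simp [mem_sampled]
    rw [hsub]
    exact_mod_cast Finset.card_biUnion_le.trans_eq (by simp_rw [Finset.card_filter])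
  have hlabel (k : Fin K) (p : ι) :
      𝔼 g : Fin K → ι → Fin Q, (if (g k p).val = 0 then (1 : ℝ) else 0) = 1 / Q := by
    rw [expect_pi_eval (fun γ : ι → Fin Q => if (γ p).val = 0 then (1 : ℝ) else 0),
      expect_pi_eval (fun x : Fin Q => if x.val = 0 then (1 : ℝ) else 0),
      expect_ite_val_eq_zero hQ]
  refine (Finset.expect_le_expect fun g _ => hunion g).trans_eq ?_
  simp_rw [Finset.expect_sum_comm, hlabel, Finset.sum_const, Finset.card_univ, Fintype.card_fin,
    nsmul_eq_mul]
  ring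

theorem half_le_unifProb_card_sampled_add_le (hQ : 0 < Q) (hKQ : 4 * K ≤ Q) {m : ℕ}
    (hm : 2 * m ≤ Fintype.card ι) :
    1 / 2 ≤ unifProb fun g : Fin K → ι → Fin Q => (sampled g).card + m ≤ Fintype.card ι := by
  have : Nonempty (Fin Q) := ⟨⟨0, hQ⟩⟩
  have hQ' : (0 : ℝ) < Q := by exact_mod_cast hQ
  have hKQ' : (4 : ℝ) * K ≤ Q := by exact_mod_cast hKQ
  set N := Fintype.card ι
  have hmarkov : unifProb (fun g : Fin K → ι → Fin Q => ¬ (sampled g).card + m ≤ N) ≤ 1 / 2 :=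
    calc unifProb (fun g : Fin K → ι → Fin Q => ¬ (sampled g).card + m ≤ N)
        ≤ 𝔼 g : Fin K → ι → Fin Q, 2 / (N : ℝ) * (sampled g).card := by
          refine unifProb_le_expect (fun g => by positivity) fun g hg => ?_
          have hcard : (sampled g).card ≤ N := Finset.card_le_univ _
          have hN : (0 : ℝ) < N := by exact_mod_cast (by omega : 0 < N)
          have hhalf : (N : ℝ) ≤ 2 * (sampled g).card := by
            exact_mod_cast (by omega : N ≤ 2 * (sampled g).card)
          rwa [div_mul_eq_mul_div, le_div_iff₀ hN, one_mul]
      _ ≤ 2 / (N : ℝ) * (N * (K / Q)) := by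
          rw [← Finset.mul_expect]
          gcongr
          exact expect_card_sampled_le hQ
      _ = 2 * (K / Q) * (N / N) := by ring
      _ ≤ 2 * (K / Q) := mul_le_of_le_one_right (by positivity) (div_self_le_one _)
      _ ≤ 1 / 2 := by
          rw [← mul_div_assoc, div_le_iff₀ hQ']
          linarith
  linarith [unifProb_add_unifProb_not fun g : Fin K → ι → Fin Q => (sampled g).card + m ≤ N]

end SupportTransfer

section SignCertificate

open scoped Matrix.Norms.L2Operator

variable {n1 n2 r : ℕ}

section Resolvent

variable {A : Matrix (Fin n1) (Fin n2) ℝ →ₗ[ℝ] Matrix (Fin n1) (Fin n2) ℝ}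
  {G : Matrix (Fin n1) (Fin n2) ℝ → Matrix (Fin n1) (Fin n2) ℝ}

theorem eq_zero_of_frobSq_le_zero {M : Matrix (Fin n1) (Fin n2) ℝ} (hM : frobSq M ≤ 0) : M = 0 := by
  ext i j
  have hentry : M i j ^ 2 ≤ frobSq M :=
    (Finset.single_le_sum (f := fun j => M i j ^ 2) (fun _ _ => sq_nonneg _)
      (Finset.mem_univ j)).trans
      (Finset.single_le_sum (f := fun i => ∑ j, M i j ^ 2)
        (fun _ _ => Finset.sum_nonneg fun _ _ => sq_nonneg _) (Finset.mem_univ i))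
  exact sq_eq_zero_iff.mp (le_antisymm (hentry.trans hM) (sq_nonneg _))

theorem exists_eq_add_of_frobSq_le (hA : ∀ M, frobSq (A M) ≤ 1 / 4 * frobSq M) :
    ∃ G : Matrix (Fin n1) (Fin n2) ℝ → Matrix (Fin n1) (Fin n2) ℝ, ∀ M, G M = M + A (G M) := by
  have hinj : Function.Injective
      (LinearMap.id - A : Matrix (Fin n1) (Fin n2) ℝ →ₗ[ℝ] Matrix (Fin n1) (Fin n2) ℝ) := by
    rw [← LinearMap.ker_eq_bot, LinearMap.ker_eq_bot']
    intro M hM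
    have hfix : M = A M := sub_eq_zero.mp hM
    have hcontr := hA M
    rw [← hfix] at hcontr
    exact eq_zero_of_frobSq_le_zero (by linarith [frobSq_nonneg M])
  choose G hG using LinearMap.injective_iff_surjective.mp hinj
  exact ⟨G, fun M => sub_eq_iff_eq_add.mp (hG M)⟩

theorem frobSq_le_of_eq_add (hA : ∀ M, frobSq (A M) ≤ 1 / 4 * frobSq M)
    (hG : ∀ M, G M = M + A (G M)) (M : Matrix (Fin n1) (Fin n2) ℝ) :
    frobSq (G M) ≤ 4 * frobSq M := by
  have hsum : frobSq (G M) ≤ 2 * (frobSq M + frobSq (A (G M))) :=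
    (congrArg frobSq (hG M)).trans_le (frobSq_add_le _ _)
  linarith [hA (G M)]

theorem minner_left_comm_of_eq_add (hA : ∀ M N, minner (A M) N = minner M (A N))
    (hG : ∀ M, G M = M + A (G M)) (M N : Matrix (Fin n1) (Fin n2) ℝ) :
    minner (G M) N = minner M (G N) := by
  have hN : minner (G M) (G N) = minner (G M) N + minner (G M) (A (G N)) :=
    (congrArg _ (hG N)).trans (minner_add_right _ _ _)
  have hM : minner (G M) (G N) = minner M (G N) + minner (A (G M)) (G N) :=
    (congrArg (minner · (G N)) (hG M)).trans (minner_add_left _ _ _)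
  linarith [hA (G M) (G N)]

end Resolvent

section Compression

theorem projS_smul (Ω : Finset (Fin n1 × Fin n2)) (c : ℝ) (M : Matrix (Fin n1) (Fin n2) ℝ) :
    projS Ω (c • M) = c • projS Ω M := by
  ext i j
  simp [projS]

theorem projS_projS (Ω : Finset (Fin n1 × Fin n2)) (M : Matrix (Fin n1) (Fin n2) ℝ) :
    projS Ω (projS Ω M) = projS Ω M := by
  ext i j
  simp only [projS, Matrix.of_apply]
  split_ifs <;> rfl

theorem minner_projS_left (Ω : Finset (Fin n1 × Fin n2)) (M N : Matrix (Fin n1) (Fin n2) ℝ) :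
    minner (projS Ω M) N = minner M (projS Ω N) := by
  simp [minner, projS]

theorem frobSq_projS_le (Ω : Finset (Fin n1 × Fin n2)) (M : Matrix (Fin n1) (Fin n2) ℝ) :
    frobSq (projS Ω M) ≤ frobSq M := by
  refine Finset.sum_le_sum fun i _ => Finset.sum_le_sum fun j _ => ?_
  simp only [projS, Matrix.of_apply]
  split_ifs
  · exact le_rfl
  · rw [zero_pow two_ne_zero]
    positivity

/-- The compression `P_Ω P_T P_Ω` of the tangent projection to matrices supported on `Ω`. -/
noncomputable def compress (U : Matrix (Fin n1) (Fin r) ℝ) (V : Matrix (Fin n2) (Fin r) ℝ)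
    (Ω : Finset (Fin n1 × Fin n2)) :
    Matrix (Fin n1) (Fin n2) ℝ →ₗ[ℝ] Matrix (Fin n1) (Fin n2) ℝ where
  toFun M := projS Ω (tangentProj U V (projS Ω M))
  map_add' M N := by rw [projS_add, map_add, projS_add]
  map_smul' c M := by rw [projS_smul, map_smul, projS_smul, RingHom.id_apply]

variable {U : Matrix (Fin n1) (Fin r) ℝ} {V : Matrix (Fin n2) (Fin r) ℝ}
  {Ω : Finset (Fin n1 × Fin n2)}

theorem compress_apply (M : Matrix (Fin n1) (Fin n2) ℝ) :
    compress U V Ω M = projS Ω (tangentProj U V (projS Ω M)) := rfl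

theorem minner_compress_left (M N : Matrix (Fin n1) (Fin n2) ℝ) :
    minner (compress U V Ω M) N = minner M (compress U V Ω N) := by
  simp only [compress_apply, minner_projS_left, minner_tangentProj_left]

theorem frobSq_compress_le {α : ℝ} (hα : 0 ≤ α)
    (h : ∀ M, frobSq (projS Ω (tangentProj U V M)) ≤ α * frobSq M)
    (M : Matrix (Fin n1) (Fin n2) ℝ) : frobSq (compress U V Ω M) ≤ α * frobSq M :=
  (h _).trans (mul_le_mul_of_nonneg_left (frobSq_projS_le Ω M) hα)

end Compression

section RandomSigns

/-- The matrix with signs `ε` on `Ω` and zeros elsewhere. -/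
noncomputable def signOn (Ω : Finset (Fin n1 × Fin n2)) (ε : Fin n1 × Fin n2 → Bool) :
    Matrix (Fin n1) (Fin n2) ℝ :=
  projS Ω (Matrix.of fun i j => boolSign (ε (i, j)))

variable {Ω : Finset (Fin n1 × Fin n2)}

theorem minner_signOn (ε : Fin n1 × Fin n2 → Bool) (M : Matrix (Fin n1) (Fin n2) ℝ) :
    minner (signOn Ω ε) M = ∑ p : Fin n1 × Fin n2, boolSign (ε p) * projS Ω M p.1 p.2 := by
  rw [signOn, minner_projS_left, minner_eq_sum_prod]
  simp

theorem unifProb_le_minner_signOn_le (M : Matrix (Fin n1) (Fin n2) ℝ) {s v : ℝ} (hv : 0 < v)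
    (hs : 0 ≤ s) (hM : frobSq M ≤ v) :
    unifProb (fun ε : Fin n1 × Fin n2 → Bool => s ≤ minner (signOn Ω ε) M) ≤
      Real.exp (-(s ^ 2 / (2 * v))) := by
  simp_rw [minner_signOn]
  refine unifProb_le_sum_boolSign_mul_le _ hv hs ?_
  rw [Fintype.sum_prod_type' fun i j => projS Ω M i j ^ 2]
  exact (frobSq_projS_le Ω M).trans hM

theorem unifProb_lt_abs_minner_signOn_le (M : Matrix (Fin n1) (Fin n2) ℝ) {s v : ℝ} (hv : 0 < v)
    (hs : 0 ≤ s) (hM : frobSq M ≤ v) :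
    unifProb (fun ε : Fin n1 × Fin n2 → Bool => s < |minner (signOn Ω ε) M|) ≤
      2 * Real.exp (-(s ^ 2 / (2 * v))) := by
  have hpos := unifProb_le_minner_signOn_le (Ω := Ω) M hv hs hM
  have hneg := unifProb_le_minner_signOn_le (Ω := Ω) (-M) hv hs (by simpa [frobSq] using hM)
  refine (unifProb_mono fun ε hε => (lt_abs.mp hε).imp le_of_lt fun h => ?_).trans
    ((unifProb_or_le _ _).trans ((add_le_add hpos hneg).trans_eq (two_mul _).symm))
  simpa [minner] using h.le

/-- A moment-generating-function rate at which sparse random signs have spectral norm at most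
`√n1 / 16`. -/
noncomputable def sparseRate : ℝ := 1 / (16 * 208 ^ 2)

theorem sparseRate_pos : 0 < sparseRate := by
  unfold sparseRate
  norm_num

theorem expect_exp_sum_signOn_le {m : ℕ} {ρ : ℝ} (hρ0 : 0 ≤ ρ) (hρ1 : ρ ≤ 1)
    (hρ : ρ ≤ sparseRate * Real.exp (-(1 / (2 * sparseRate ^ 2)))) (hN : m ≤ n1 * n2)
    (hm : (m : ℝ) ≤ ρ * (n1 * n2)) (c : Fin n1 × Fin n2 → ℝ) :
    𝔼 ω : SampleSpace n1 n2 m, Real.exp (∑ p, signOn ω.1.1 ω.2 p.1 p.2 * c p) ≤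
      Real.exp (sparseRate * ∑ p, c p ^ 2) := by
  refine le_of_eq_of_le ?_ (expect_exp_sparse_boolSign_le c sparseRate_pos hρ0 hρ1 hρ
    (by simpa using hN) (by simpa using hm))
  refine Finset.expect_congr rfl fun ω _ =>
    congrArg Real.exp (Finset.sum_congr rfl fun p _ => ?_)
  simp only [signOn, projS, Matrix.of_apply]
  split_ifs <;> ring

theorem unifProb_lt_norm_signOn_le {m : ℕ} {ρ : ℝ} (hn : n2 ≤ n1) (hρ0 : 0 ≤ ρ) (hρ1 : ρ ≤ 1)
    (hρ : ρ ≤ sparseRate * Real.exp (-(1 / (2 * sparseRate ^ 2)))) (hN : m ≤ n1 * n2)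
    (hm : (m : ℝ) ≤ ρ * (n1 * n2)) :
    unifProb (fun ω : SampleSpace n1 n2 m => √n1 / 16 < ‖signOn ω.1.1 ω.2‖) ≤
      Real.exp (-n1) := by
  have hn0 : (0 : ℝ) ≤ n1 := Nat.cast_nonneg n1
  have : (n2 : ℝ) ≤ n1 := by exact_mod_cast hn
  have hnet (w) (hw : w ∈ ballNet (Fin n1)) (z) (hz : z ∈ ballNet (Fin n2)) :
      unifProb (fun ω : SampleSpace n1 n2 m =>
        √n1 / 16 ≤ ∑ p : Fin n1 × Fin n2, signOn ω.1.1 ω.2 p.1 p.2 * (w p.1 * z p.2)) ≤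
      Real.exp (-(12 * n1)) := by
    have hmgf : 𝔼 ω : SampleSpace n1 n2 m,
        Real.exp (208 * √n1 * ∑ p : Fin n1 × Fin n2,
          signOn ω.1.1 ω.2 p.1 p.2 * (w p.1 * z p.2)) ≤ Real.exp n1 := by
      simp_rw [Finset.mul_sum, mul_left_comm (208 * √n1) (signOn _ _ _ _)]
      refine (expect_exp_sum_signOn_le hρ0 hρ1 hρ hN hm _).trans (Real.exp_le_exp.mpr ?_)
      have hscale : ∑ p : Fin n1 × Fin n2, (208 * √n1 * (w p.1 * z p.2)) ^ 2 =
          208 ^ 2 * (n1 * ∑ p : Fin n1 × Fin n2, (w p.1 * z p.2) ^ 2) := by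
        rw [Finset.mul_sum, Finset.mul_sum]
        refine Finset.sum_congr rfl fun p _ => ?_
        rw [mul_pow, mul_pow 208, Real.sq_sqrt hn0, mul_assoc]
      have hwz := mul_le_mul_of_nonneg_left (sum_mul_sq_le_of_mem_ballNet hw hz) hn0
      rw [hscale]
      unfold sparseRate
      linarith
    refine (unifProb_le_exp_of_mgf_le (by positivity) hmgf).trans_eq ?_
    congr 1
    linear_combination -13 * Real.mul_self_sqrt hn0
  refine (unifProb_lt_norm_le (Real.exp_pos _).le hnet).trans ?_
  rw [← Real.exp_add, Fintype.card_fin, Fintype.card_fin]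
  gcongr
  linarith

end RandomSigns

section SignSuccess

variable {U : Matrix (Fin n1) (Fin r) ℝ} {V : Matrix (Fin n2) (Fin r) ℝ}
  {Ω : Finset (Fin n1 × Fin n2)}

/-- Success of the sign part of the certificate: some `P_{T⊥} X` of small spectral norm agrees with
the signs `ε` on `Ω` and is small off `Ω`. -/
def SignSuccess (U : Matrix (Fin n1) (Fin r) ℝ) (V : Matrix (Fin n2) (Fin r) ℝ)
    (Ω : Finset (Fin n1 × Fin n2)) (ε : Fin n1 × Fin n2 → Bool) : Prop :=
  ∃ X : Matrix (Fin n1) (Fin n2) ℝ,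
    (∀ i j, (i, j) ∈ Ω → (X - tangentProj U V X) i j = boolSign (ε (i, j))) ∧
    (∀ i j, (i, j) ∉ Ω → |(X - tangentProj U V X) i j| ≤ 1 / 4) ∧
    ‖X - tangentProj U V X‖ ≤ √n1 / 8

section FixedSupport

variable {G : Matrix (Fin n1) (Fin n2) ℝ → Matrix (Fin n1) (Fin n2) ℝ}
  (hG : ∀ M, G M = M + compress U V Ω (G M))
include hG

theorem projS_resolvent_signOn (ε : Fin n1 × Fin n2 → Bool) :
    projS Ω (G (signOn Ω ε)) = G (signOn Ω ε) := by
  rw [hG (signOn Ω ε), projS_add, compress_apply, projS_projS, signOn, projS_projS]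

/-- `X = (1 - P_Ω P_T P_Ω)⁻¹ sgn` is supported on `Ω`, and `P_Ω (X - P_T X) = sgn`. -/
theorem signSuccess_of_resolvent (hU : Uᵀ * U = 1) (hV : Vᵀ * V = 1) {ε : Fin n1 × Fin n2 → Bool}
    (hentry : ∀ i j,
      |minner (signOn Ω ε) (G (tangentProj U V (Matrix.single i j 1)))| ≤ 1 / 4)
    (hcompress : ‖compress U V Ω (G (signOn Ω ε))‖ ≤ √n1 / 16)
    (hsign : ‖signOn Ω ε‖ ≤ √n1 / 16) : SignSuccess U V Ω ε := by
  have hsupp := projS_resolvent_signOn hG ε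
  refine ⟨G (signOn Ω ε), fun i j hij => ?_, fun i j hij => ?_, ?_⟩
  · have hfix := congrFun₂ (hG (signOn Ω ε)) i j
    rw [compress_apply, hsupp, Matrix.add_apply] at hfix
    rw [Matrix.sub_apply, hfix]
    simp [projS, signOn, hij]
  · have hzero : G (signOn Ω ε) i j = 0 := by
      rw [← hsupp]
      simp [projS, hij]
    rw [Matrix.sub_apply, hzero, zero_sub, abs_neg, ← minner_single (tangentProj U V _),
      minner_tangentProj_left, minner_left_comm_of_eq_add minner_compress_left hG]
    exact hentry i j
  · refine (norm_sub_tangentProj_le hU hV _).trans ?_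
    rw [hG (signOn Ω ε)]
    linarith [norm_add_le (signOn Ω ε) (compress U V Ω (G (signOn Ω ε)))]

theorem unifProb_exists_lt_abs_minner_resolvent_le (hU : Uᵀ * U = 1) (hV : Vᵀ * V = 1) {μ : ℝ}
    (hμ : 0 < μ) (hUi : ∀ i, ∑ k, U i k ^ 2 ≤ μ) (hVj : ∀ j, ∑ k, V j k ^ 2 ≤ μ)
    (hA : ∀ M, frobSq (compress U V Ω M) ≤ 1 / 4 * frobSq M) :
    unifProb (fun ε : Fin n1 × Fin n2 → Bool =>
      ∃ p ∈ (Finset.univ : Finset (Fin n1 × Fin n2)),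
        1 / 4 < |minner (signOn Ω ε) (G (tangentProj U V (Matrix.single p.1 p.2 1)))|) ≤
      n1 * n2 * (2 * Real.exp (-(1 / (256 * μ)))) := by
  refine (unifProb_exists_le_card_mul _ _ fun p _ => unifProb_lt_abs_minner_signOn_le _
    (v := 8 * μ) (by positivity) (by norm_num) ?_).trans_eq ?_
  · linarith [frobSq_tangentProj_single_le hU hV hUi hVj p.1 p.2,
      frobSq_le_of_eq_add hA hG (tangentProj U V (Matrix.single p.1 p.2 1))]
  · rw [Finset.card_univ, Fintype.card_prod, Fintype.card_fin, Fintype.card_fin, Nat.cast_mul]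
    ring_nf

theorem unifProb_lt_norm_compress_resolvent_signOn_le (hn : n2 ≤ n1)
    (hA : ∀ M, frobSq (compress U V Ω M) ≤ 1 / 1000000 * frobSq M) :
    unifProb (fun ε : Fin n1 × Fin n2 → Bool =>
      √n1 / 16 < ‖compress U V Ω (G (signOn Ω ε))‖) ≤ Real.exp (-n1) := by
  have hn0 : (0 : ℝ) ≤ n1 := Nat.cast_nonneg n1
  have : (n2 : ℝ) ≤ n1 := by exact_mod_cast hn
  have hA' (M) : frobSq (compress U V Ω M) ≤ 1 / 4 * frobSq M := by
    linarith [hA M, frobSq_nonneg M]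
  have hnet (w) (hw : w ∈ ballNet (Fin n1)) (z) (hz : z ∈ ballNet (Fin n2)) :
      unifProb (fun ε : Fin n1 × Fin n2 → Bool => √n1 / 16 ≤ ∑ p : Fin n1 × Fin n2,
        compress U V Ω (G (signOn Ω ε)) p.1 p.2 * (w p.1 * z p.2)) ≤
      Real.exp (-(30 * n1)) := by
    set C : Matrix (Fin n1) (Fin n2) ℝ := Matrix.of fun i j => w i * z j
    have hadjoint (ε : Fin n1 × Fin n2 → Bool) : ∑ p : Fin n1 × Fin n2,
        compress U V Ω (G (signOn Ω ε)) p.1 p.2 * (w p.1 * z p.2) =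
          minner (signOn Ω ε) (G (compress U V Ω C)) := by
      rw [← minner_left_comm_of_eq_add minner_compress_left hG, ← minner_compress_left,
        minner_eq_sum_prod]
      rfl
    have hC : frobSq C ≤ 16 := by
      rw [frobSq, ← Fintype.sum_prod_type']
      exact sum_mul_sq_le_of_mem_ballNet hw hz
    have hGC : frobSq (G (compress U V Ω C)) ≤ 64 / 1000000 := by
      linarith [hA C, frobSq_le_of_eq_add hA' hG (compress U V Ω C)]
    simp_rw [hadjoint]
    refine (unifProb_le_minner_signOn_le _ (by norm_num) (by positivity) hGC).trans ?_
    rw [div_pow, Real.sq_sqrt hn0, Real.exp_le_exp, neg_le_neg_iff,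
      show (n1 : ℝ) / 16 ^ 2 / (2 * (64 / 1000000)) = 15625 / 512 * n1 by ring]
    linarith
  refine (unifProb_lt_norm_le (Real.exp_pos _).le hnet).trans ?_
  rw [← Real.exp_add, Fintype.card_fin, Fintype.card_fin]
  gcongr
  linarith

end FixedSupport

theorem unifProb_not_signSuccess_and_norm_signOn_le (hU : Uᵀ * U = 1) (hV : Vᵀ * V = 1) {μ : ℝ}
    (hμ : 0 < μ) (hUi : ∀ i, ∑ k, U i k ^ 2 ≤ μ) (hVj : ∀ j, ∑ k, V j k ^ 2 ≤ μ)
    (hn : n2 ≤ n1)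
    (hΩ : ∀ M, frobSq (projS Ω (tangentProj U V M)) ≤ 1 / 1000000 * frobSq M) :
    unifProb (fun ε : Fin n1 × Fin n2 → Bool =>
      ¬ SignSuccess U V Ω ε ∧ ‖signOn Ω ε‖ ≤ √n1 / 16) ≤
      n1 * n2 * (2 * Real.exp (-(1 / (256 * μ)))) + Real.exp (-n1) := by
  have hA := frobSq_compress_le (α := 1 / 1000000) (by norm_num) hΩ
  have hA' (M) : frobSq (compress U V Ω M) ≤ 1 / 4 * frobSq M := by
    linarith [hA M, frobSq_nonneg M]
  obtain ⟨G, hG⟩ := exists_eq_add_of_frobSq_le hA'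
  have hentry := unifProb_exists_lt_abs_minner_resolvent_le hG hU hV hμ hUi hVj hA'
  have hcompress := unifProb_lt_norm_compress_resolvent_signOn_le hG hn hA
  refine le_trans (unifProb_mono fun ε hε => ?_)
    ((unifProb_or_le _ _).trans (add_le_add hentry hcompress))
  obtain ⟨hfail, hsign⟩ := hε
  contrapose! hfail
  exact signSuccess_of_resolvent hG hU hV (fun i j => hfail.1 (i, j) (Finset.mem_univ _))
    hfail.2 hsign

theorem unifProb_not_forall_frobSq_projS_tangentProj_le (hU : Uᵀ * U = 1) (hV : Vᵀ * V = 1) {μ : ℝ}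
    (hμ : 0 < μ) (hUi : ∀ i, ∑ k, U i k ^ 2 ≤ μ) (hVj : ∀ j, ∑ k, V j k ^ 2 ≤ μ)
    {m : ℕ} {ρ : ℝ} (hρ0 : 0 ≤ ρ) (hρτ : ρ ≤ 1 / 32000000) (hm2 : 2 * m ≤ n1 * n2)
    (hm : (m : ℝ) ≤ ρ * (n1 * n2)) :
    unifProb (fun Ω : {Ω : Finset (Fin n1 × Fin n2) // Ω.card = m} =>
      ¬ ∀ M, frobSq (projS Ω.1 (tangentProj U V M)) ≤ 1 / 1000000 * frobSq M) ≤
      (n1 + n2) * (r * Real.exp (-(1 / (8000000 * μ)))) := by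
  have hgeom := unifProb_not_frobSq_projS_tangentProj_le hU hV hμ (τ := 1 / 4000000)
    (by norm_num) hUi hVj hm2 hρ0 hm
  norm_num only at hgeom
  refine hgeom.trans ?_
  gcongr
  rw [div_le_iff₀ hμ, neg_mul, one_div_mul_eq_div, div_mul_cancel_right₀ hμ.ne']
  linarith

theorem unifProb_not_signSuccess_le (hU : Uᵀ * U = 1) (hV : Vᵀ * V = 1) {μ : ℝ} (hμ : 0 < μ)
    (hUi : ∀ i, ∑ k, U i k ^ 2 ≤ μ) (hVj : ∀ j, ∑ k, V j k ^ 2 ≤ μ) (hn : n2 ≤ n1)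
    {m : ℕ} {ρ : ℝ} (hρ0 : 0 ≤ ρ) (hρ : ρ ≤ sparseRate * Real.exp (-(1 / (2 * sparseRate ^ 2))))
    (hρτ : ρ ≤ 1 / 32000000) (hm2 : 2 * m ≤ n1 * n2) (hm : (m : ℝ) ≤ ρ * (n1 * n2)) :
    unifProb (fun ω : SampleSpace n1 n2 m => ¬ SignSuccess U V ω.1.1 ω.2) ≤
      (n1 + n2) * (r * Real.exp (-(1 / (8000000 * μ)))) +
        (n1 * n2 * (2 * Real.exp (-(1 / (256 * μ)))) + Real.exp (-n1)) + Real.exp (-n1) := by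
  have hsupport := unifProb_not_forall_frobSq_projS_tangentProj_le hU hV hμ hUi hVj hρ0 hρτ hm2 hm
  have hfixed : unifProb (fun ω : SampleSpace n1 n2 m =>
        ¬ SignSuccess U V ω.1.1 ω.2 ∧ ‖signOn ω.1.1 ω.2‖ ≤ √n1 / 16) ≤
      unifProb (fun Ω : {Ω : Finset (Fin n1 × Fin n2) // Ω.card = m} =>
        ¬ ∀ M, frobSq (projS Ω.1 (tangentProj U V M)) ≤ 1 / 1000000 * frobSq M) +
        (n1 * n2 * (2 * Real.exp (-(1 / (256 * μ)))) + Real.exp (-n1)) := by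
    refine unifProb_prod_le (by positivity) fun Ω hΩ => ?_
    have hΩ' := not_not.mp hΩ
    exact unifProb_not_signSuccess_and_norm_signOn_le (Ω := Ω.1) hU hV hμ hUi hVj hn hΩ'
  have hnorm := unifProb_lt_norm_signOn_le (m := m) hn hρ0 (by linarith) hρ (by omega) hm
  refine le_trans (unifProb_mono fun ω hω => ?_) ((unifProb_or_le _ _).trans
    (add_le_add (hfixed.trans (add_le_add hsupport le_rfl)) hnorm))
  exact (le_or_gt ‖signOn ω.1.1 ω.2‖ (√n1 / 16)).imp (fun h => ⟨hω, h⟩) id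

end SignSuccess

end SignCertificate

section DualCertificate

open scoped Matrix.Norms.L2Operator

variable {n1 n2 r : ℕ} {U : Matrix (Fin n1) (Fin r) ℝ} {V : Matrix (Fin n2) (Fin r) ℝ}
  {Ω : Finset (Fin n1 × Fin n2)}

/-- Existence of a dual certificate `(W, F, H)` at the weight `1 / √n1` for a sparse component with
support `Ω` and sign matrix `S`. -/
def HasDualCertificate (U : Matrix (Fin n1) (Fin r) ℝ) (V : Matrix (Fin n2) (Fin r) ℝ)
    (Ω : Finset (Fin n1 × Fin n2)) (S : Matrix (Fin n1) (Fin n2) ℝ) : Prop :=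
  ∃ W F H : Matrix (Fin n1) (Fin n2) ℝ,
    U * Vᵀ + W = (√n1)⁻¹ • (S + F + projS Ω H) ∧
    memTperp U V W ∧ spec W ≤ 1 / 2 ∧
    projS Ω F = 0 ∧ (∀ i j, |F i j| ≤ 1 / 2) ∧
    frob (projS Ω H) ≤ 1 / (260 * √2)

section Deterministic

theorem projS_add_projS_compl (Ω : Finset (Fin n1 × Fin n2)) (M : Matrix (Fin n1) (Fin n2) ℝ) :
    projS Ω M + projS Ωᶜ M = M := by
  ext i j
  by_cases hij : (i, j) ∈ Ω <;> simp [projS, hij]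

theorem projS_projS_compl (Ω : Finset (Fin n1 × Fin n2)) (M : Matrix (Fin n1) (Fin n2) ℝ) :
    projS Ω (projS Ωᶜ M) = 0 := by
  ext i j
  by_cases hij : (i, j) ∈ Ω <;> simp [projS, hij]

theorem frob_le_sqrt_mul {M : Matrix (Fin n1) (Fin n2) ℝ} {b : ℝ} (hb : 0 ≤ b)
    (hM : ∀ i j, |M i j| ≤ b) : frob M ≤ √(n1 * n2) * b := by
  have hsq : ∑ i, ∑ j, M i j ^ 2 ≤ ∑ _i : Fin n1, ∑ _j : Fin n2, b ^ 2 :=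
    Finset.sum_le_sum fun i _ => Finset.sum_le_sum fun j _ =>
      sq_le_sq.mpr ((hM i j).trans (le_abs_self b))
  refine (Real.sqrt_le_sqrt hsq).trans_eq ?_
  simp [← mul_assoc, Real.sqrt_mul' _ (sq_nonneg b), Real.sqrt_sq hb]

/-- The certificate is `W = P_{T⊥} (Y + X / √n1)`. With `M = √n1 (U Vᵀ + W)`, `F` is the part of `M`
off `Ω`, and the part of `M` on `Ω` exceeds `S` by `P_Ω H` for `H = √n1 (U Vᵀ - P_T Y)`. -/
theorem hasDualCertificate_of_approx (hU : Uᵀ * U = 1) (hV : Vᵀ * V = 1) (hn1 : 0 < n1)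
    {X Y S : Matrix (Fin n1) (Fin n2) ℝ} (hX : projS Ω (X - tangentProj U V X) = S)
    (hY : projS Ω Y = 0)
    (hoff : ∀ i j, (i, j) ∉ Ω → √n1 * |Y i j| + √n1 * |(U * Vᵀ - tangentProj U V Y) i j| +
      |(X - tangentProj U V X) i j| ≤ 1 / 2)
    (hnorm : √n1 * ‖Y - tangentProj U V Y‖ + ‖X - tangentProj U V X‖ ≤ √n1 / 2)
    (hfrob : frob (projS Ω (√n1 • (U * Vᵀ - tangentProj U V Y))) ≤ 1 / (260 * √2)) :
    HasDualCertificate U V Ω S := by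
  have hs : 0 < √(n1 : ℝ) := Real.sqrt_pos.mpr (by exact_mod_cast hn1)
  set s := √(n1 : ℝ)
  set Z := U * Vᵀ - tangentProj U V Y with hZ
  set M := s • Y + s • Z + (X - tangentProj U V X) with hM
  have hMΩ : projS Ω M = projS Ω (s • Z) + S := by
    rw [hM, projS_add, projS_add, projS_smul Ω s Y, hY, smul_zero, zero_add, hX]
  have hsplit : S + projS Ωᶜ M + projS Ω (s • Z) = M := by
    conv_rhs => rw [← projS_add_projS_compl Ω M, hMΩ]
    abel
  refine ⟨Y - tangentProj U V Y + s⁻¹ • (X - tangentProj U V X), projS Ωᶜ M, s • Z,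
    ?_, ?_, ?_, projS_projS_compl Ω M, fun i j => ?_, hfrob⟩
  · rw [hsplit, eq_inv_smul_iff₀ hs.ne', hM, hZ]
    simp only [smul_add, smul_sub, smul_inv_smul₀ hs.ne']
    abel
  · convert memTperp_sub_tangentProj hU hV (Y + s⁻¹ • X) using 1
    rw [map_add, map_smul, smul_sub]
    abel
  · rw [spec_eq_l2_opNorm]
    calc ‖Y - tangentProj U V Y + s⁻¹ • (X - tangentProj U V X)‖
        ≤ ‖Y - tangentProj U V Y‖ + s⁻¹ * ‖X - tangentProj U V X‖ := by
          refine (norm_add_le _ _).trans_eq ?_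
          rw [norm_smul, Real.norm_of_nonneg (inv_nonneg.mpr hs.le)]
      _ = s⁻¹ * (s * ‖Y - tangentProj U V Y‖ + ‖X - tangentProj U V X‖) := by field_simp
      _ ≤ s⁻¹ * (s / 2) := by gcongr
      _ = 1 / 2 := by field_simp
  · by_cases hij : (i, j) ∈ Ω
    · simp [projS, hij]
    · have hentry : projS Ωᶜ M i j = s * Y i j + s * Z i j + (X - tangentProj U V X) i j := by
        simp [projS, hij, hM]
      have htriangle := abs_add_three (s * Y i j) (s * Z i j) ((X - tangentProj U V X) i j)
      rw [abs_mul, abs_mul, abs_of_pos hs] at htriangle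
      exact hentry ▸ htriangle.trans (hoff i j hij)

theorem frob_projS_smul_le_of_abs_le_div {μ : ℝ} (hμ : 0 ≤ μ) (hn1 : 0 < n1) (hn : n2 ≤ n1)
    {N : ℝ} (hN : n1 ≤ N) {Z : Matrix (Fin n1) (Fin n2) ℝ}
    (hZ : ∀ i j, |Z i j| ≤ √(μ / n1) / N) : frob (projS Ω (√n1 • Z)) ≤ √μ := by
  have hn1' : (0 : ℝ) < n1 := by exact_mod_cast hn1
  have hN0 : 0 < N := hn1'.trans_le hN
  have hentry (i j) : |(√n1 • Z) i j| ≤ √μ / N := by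
    rw [Matrix.smul_apply, smul_eq_mul, abs_mul, abs_of_nonneg (Real.sqrt_nonneg _)]
    refine (mul_le_mul_of_nonneg_left (hZ i j) (Real.sqrt_nonneg _)).trans_eq ?_
    rw [Real.sqrt_div hμ]
    field_simp
  have hsize : √(n1 * n2) ≤ N := by
    refine Real.sqrt_le_iff.mpr ⟨hN0.le, ?_⟩
    have hn' : (n2 : ℝ) ≤ n1 := by exact_mod_cast hn
    nlinarith
  calc frob (projS Ω (√n1 • Z)) ≤ frob (√n1 • Z) := Real.sqrt_le_sqrt (frobSq_projS_le Ω _)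
    _ ≤ √(n1 * n2) * (√μ / N) := frob_le_sqrt_mul (by positivity) hentry
    _ ≤ N * (√μ / N) := by gcongr
    _ = √μ := mul_div_cancel₀ _ hN0.ne'

theorem hasDualCertificate_of_golfSuccess_of_signSuccess (hU : Uᵀ * U = 1) (hV : Vᵀ * V = 1)
    {μ : ℝ} (hμ : 0 ≤ μ) (hn1 : 0 < n1) (hn : n2 ≤ n1) {K Q : ℕ} (hK : n1 ≤ 2 ^ K) (hQ : 0 < Q)
    (hQμ : Q * √μ ≤ 1 / 1000) {g : Fin K → Fin n1 × Fin n2 → Fin Q}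
    {ε : Fin n1 × Fin n2 → Bool} (hg : GolfSuccess U V g (U * Vᵀ) √(μ / n1))
    (hdisj : Disjoint (sampled g) Ω) (hsign : SignSuccess U V Ω ε) :
    HasDualCertificate U V Ω (signOn Ω ε) := by
  obtain ⟨Y, hYsupp, hYentry, hZ, hYnorm⟩ := hg
  obtain ⟨X, hXon, hXoff, hXnorm⟩ := hsign
  have hn1' : (1 : ℝ) ≤ n1 := by exact_mod_cast hn1
  have hK' : (n1 : ℝ) ≤ 2 ^ K := by exact_mod_cast hK
  have hs : 0 ≤ √(n1 : ℝ) := Real.sqrt_nonneg _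
  have hsβ : √n1 * √(μ / n1) = √μ := by
    rw [Real.sqrt_div hμ, mul_div_cancel₀ _ (Real.sqrt_pos.mpr (by linarith)).ne']
  have hμ' : √μ ≤ 1 / 1000 :=
    (le_mul_of_one_le_left (Real.sqrt_nonneg _) (by exact_mod_cast hQ)).trans hQμ
  refine hasDualCertificate_of_approx hU hV hn1 (X := X) (Y := Y) ?_ ?_ (fun i j hij => ?_) ?_ ?_
  · ext i j
    by_cases hij : (i, j) ∈ Ω
    · simp only [projS, signOn, Matrix.of_apply, if_pos hij, hXon i j hij]
    · simp only [projS, signOn, Matrix.of_apply, if_neg hij]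
  · ext i j
    simp only [projS, Matrix.of_apply, Matrix.zero_apply, ite_eq_right_iff]
    exact fun hij => hYsupp i j fun k hk =>
      Finset.disjoint_left.mp hdisj (mem_sampled.mpr ⟨k, hk⟩) hij
  · have hYij : √n1 * |Y i j| ≤ 2 * (Q * √μ) :=
      (mul_le_mul_of_nonneg_left (hYentry i j) hs).trans_eq (by rw [← hsβ]; ring)
    have hZij : √n1 * |(U * Vᵀ - tangentProj U V Y) i j| ≤ √μ := by
      refine (mul_le_mul_of_nonneg_left (hZ i j) hs).trans ?_
      rw [← mul_div_assoc, hsβ]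
      exact div_le_self (Real.sqrt_nonneg _) (hn1'.trans hK')
    linarith [hXoff i j hij]
  · have hYs : ‖Y - tangentProj U V Y‖ ≤ 40 * (Q * √μ) :=
      hYnorm.trans_eq (by rw [← hsβ]; ring)
    nlinarith
  · refine (frob_projS_smul_le_of_abs_le_div hμ hn1 hn hK' hZ).trans (hμ'.trans ?_)
    gcongr
    nlinarith [Real.sq_sqrt (zero_le_two : (0 : ℝ) ≤ 2), Real.sqrt_nonneg 2]

end Deterministic

section Probability

theorem signM_sparseOf {m : ℕ} {a : Fin n1 × Fin n2 → ℝ} (ha : ∀ p, 0 < a p)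
    (ω : SampleSpace n1 n2 m) : signM (sparseOf a ω) = signOn ω.1.1 ω.2 := by
  ext i j
  simp only [signM, sparseOf, signOn, projS, Matrix.of_apply, boolSign]
  split_ifs
  · exact Real.sign_of_pos (ha _)
  · exact Real.sign_of_neg (neg_neg_of_pos (ha _))
  · exact Real.sign_zero

theorem nonempty_sampleSpace {m : ℕ} (hm : m ≤ n1 * n2) : Nonempty (SampleSpace n1 n2 m) := by
  obtain ⟨Ω, -, hΩ⟩ := Finset.exists_subset_card_eq
    (s := (Finset.univ : Finset (Fin n1 × Fin n2))) (n := m) (by simpa using hm)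
  exact ⟨⟨⟨Ω, hΩ⟩, fun _ => true⟩⟩

theorem unifProb_not_exists_golfSuccess_disjoint_le (hU : Uᵀ * U = 1) (hV : Vᵀ * V = 1) {μ : ℝ}
    (hμ : 0 < μ) (hUi : ∀ i, ∑ k, U i k ^ 2 ≤ μ) (hVj : ∀ j, ∑ k, V j k ^ 2 ≤ μ) (hn : n2 ≤ n1)
    {m : ℕ} (hm : 2 * m ≤ n1 * n2) {K Q : ℕ} (hQ : 0 < Q) (hKQ : 4 * K ≤ Q) {β : ℝ} (hβ : 0 < β)
    (hUV : ∀ i j, |(U * Vᵀ) i j| ≤ β) :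
    unifProb (fun Ω : {Ω : Finset (Fin n1 × Fin n2) // Ω.card = m} =>
      ¬ ∃ g : Fin K → Fin n1 × Fin n2 → Fin Q,
        GolfSuccess U V g (U * Vᵀ) β ∧ Disjoint (sampled g) Ω.1) ≤
      2 * (K * golfError n1 n2 Q μ) := by
  have hgolf := unifProb_not_golfSuccess_le hU hV hμ hUi hVj hn hQ K
    (tangentProj_of_memT hU hV ⟨V, 0, by simp⟩) hβ hUV
  have htransfer := unifProb_mul_unifProb_not_exists_disjoint_le sampled
    (exists_equiv_sampled_eq_map K Q) m fun g => GolfSuccess U V g (U * Vᵀ) β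
  have hhalf := mul_le_mul_of_nonneg_right (half_le_unifProb_card_sampled_add_le
      (ι := Fin n1 × Fin n2) hQ hKQ (by simpa using hm))
    (unifProb_nonneg fun Ω : {Ω : Finset (Fin n1 × Fin n2) // Ω.card = m} =>
      ¬ ∃ g : Fin K → Fin n1 × Fin n2 → Fin Q,
        GolfSuccess U V g (U * Vᵀ) β ∧ Disjoint (sampled g) Ω.1)
  linarith

/-- The support density `ρ_s`, small enough for sparse random signs to have spectral norm at most
`√n1 / 16` and for `P_Ω P_T` to be a strict contraction. -/
noncomputable def supportRate : ℝ :=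
  min (sparseRate * Real.exp (-(1 / (2 * sparseRate ^ 2)))) (1 / 32000000)

theorem supportRate_pos : 0 < supportRate :=
  lt_min (mul_pos sparseRate_pos (Real.exp_pos _)) (by norm_num)

theorem two_mul_le_of_le_supportRate_mul {m : ℕ} (hm : (m : ℝ) ≤ supportRate * (n1 * n2)) :
    2 * m ≤ n1 * n2 := by
  have hhalf : supportRate * (n1 * n2) ≤ 1 / 2 * (n1 * n2) :=
    mul_le_mul_of_nonneg_right ((min_le_right _ _).trans (by norm_num)) (by positivity)
  exact_mod_cast (by linarith : (2 : ℝ) * m ≤ n1 * n2)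

theorem unifProb_not_hasDualCertificate_le (hU : Uᵀ * U = 1) (hV : Vᵀ * V = 1) {μ : ℝ}
    (hμ : 0 < μ) (hUi : ∀ i, ∑ k, U i k ^ 2 ≤ μ) (hVj : ∀ j, ∑ k, V j k ^ 2 ≤ μ)
    (hUV : ∀ i j, |(U * Vᵀ) i j| ≤ √(μ / n1)) (hn1 : 0 < n1) (hn : n2 ≤ n1) {m : ℕ}
    (hm : (m : ℝ) ≤ supportRate * (n1 * n2)) {K Q : ℕ} (hK : n1 ≤ 2 ^ K) (hQ : 0 < Q)
    (hKQ : 4 * K ≤ Q) (hQμ : Q * √μ ≤ 1 / 1000) :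
    unifProb (fun ω : SampleSpace n1 n2 m =>
      ¬ HasDualCertificate U V ω.1.1 (signOn ω.1.1 ω.2)) ≤
      2 * (K * golfError n1 n2 Q μ) +
        ((n1 + n2) * (r * Real.exp (-(1 / (8000000 * μ)))) +
          (n1 * n2 * (2 * Real.exp (-(1 / (256 * μ)))) + Real.exp (-n1)) + Real.exp (-n1)) := by
  have hm2 := two_mul_le_of_le_supportRate_mul hm
  have hβ : 0 < √(μ / n1) := Real.sqrt_pos.mpr (div_pos hμ (by exact_mod_cast hn1))
  have hgolf := unifProb_not_exists_golfSuccess_disjoint_le hU hV hμ hUi hVj hn hm2 hQ hKQ hβ hUV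
  have hsign := unifProb_not_signSuccess_le hU hV hμ hUi hVj hn supportRate_pos.le
    (min_le_left _ _) (min_le_right _ _) hm2 hm
  have hsupport : unifProb (fun ω : SampleSpace n1 n2 m =>
      ¬ HasDualCertificate U V ω.1.1 (signOn ω.1.1 ω.2) ∧ SignSuccess U V ω.1.1 ω.2) ≤
      unifProb (fun Ω : {Ω : Finset (Fin n1 × Fin n2) // Ω.card = m} =>
        ¬ ∃ g : Fin K → Fin n1 × Fin n2 → Fin Q,
          GolfSuccess U V g (U * Vᵀ) √(μ / n1) ∧ Disjoint (sampled g) Ω.1) + 0 := by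
    refine unifProb_prod_le le_rfl fun Ω hΩ => ?_
    obtain ⟨g, hg, hdisj⟩ := not_not.mp hΩ
    have himpossible (ε : Fin n1 × Fin n2 → Bool) :
        ¬ (¬ HasDualCertificate U V Ω.1 (signOn Ω.1 ε) ∧ SignSuccess U V Ω.1 ε) := fun h =>
      h.1 (hasDualCertificate_of_golfSuccess_of_signSuccess hU hV hμ.le hn1 hn hK hQ hQμ hg hdisj
        h.2)
    simp [unifProb, himpossible]
  refine le_trans (unifProb_mono fun ω hω => ?_) ((unifProb_or_le _ _).trans
    (add_le_add ((hsupport.trans_eq (add_zero _)).trans hgolf) hsign))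
  exact (em (SignSuccess U V ω.1.1 ω.2)).imp (fun h => ⟨hω, h⟩) id

end Probability

section FailureProbability

theorem le_mul_of_transpose_mul_self_eq_one (hU : Uᵀ * U = 1) {μ : ℝ}
    (hUi : ∀ i, ∑ k, U i k ^ 2 ≤ μ) : (r : ℝ) ≤ n1 * μ := by
  have htrace : (Uᵀ * U).trace = r := by rw [hU, Matrix.trace_one, Fintype.card_fin]
  have hsum : (Uᵀ * U).trace = ∑ i, ∑ k, U i k ^ 2 := by
    rw [Finset.sum_comm]
    simp [Matrix.trace, Matrix.mul_apply, sq]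
  rw [← htrace, hsum]
  exact (Finset.sum_le_sum fun i _ => hUi i).trans_eq (by simp)

theorem clog_le_three_mul_log {n : ℕ} (hn : 1 < n) (hL : 1 ≤ Real.log n) :
    (Nat.clog 2 n : ℝ) ≤ 3 * Real.log n := by
  have hpow : (2 : ℝ) ^ (Nat.clog 2 n).pred ≤ n := by
    exact_mod_cast (Nat.pow_pred_clog_lt_self one_lt_two hn).le
  have hlog := Real.log_le_log (by positivity) hpow
  rw [Real.log_pow] at hlog
  have hpred : (Nat.clog 2 n : ℝ) ≤ (Nat.clog 2 n).pred + 1 := by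
    exact_mod_cast Nat.le_succ_of_pred_le le_rfl
  have : (0 : ℝ) ≤ (Nat.clog 2 n).pred := Nat.cast_nonneg _
  nlinarith [Real.log_two_gt_d9]

theorem exp_neg_one_div_le_inv_pow {n : ℕ} (hn : 0 < n) {a : ℝ} (ha : 0 < a)
    (h : 20 * Real.log n * a ≤ 1) : Real.exp (-(1 / a)) ≤ ((n : ℝ) ^ 20)⁻¹ := by
  have hn' : (0 : ℝ) < n := by exact_mod_cast hn
  rw [Real.exp_neg]
  gcongr
  calc (n : ℝ) ^ 20 = Real.exp (20 * Real.log n) := by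
        rw [mul_comm, Real.exp_mul, Real.exp_log hn']
        norm_cast
    _ ≤ Real.exp (1 / a) := Real.exp_le_exp.mpr ((le_div_iff₀ ha).mpr h)

theorem exp_neg_natCast_le {n : ℕ} (hn : 0 < n) :
    Real.exp (-n) ≤ 479001600 * ((n : ℝ) ^ 12)⁻¹ := by
  have hn' : (0 : ℝ) < n := by exact_mod_cast hn
  have htaylor := Real.pow_div_factorial_le_exp (n : ℝ) hn'.le 12
  rw [show ((Nat.factorial 12 : ℕ) : ℝ) = 479001600 by norm_num [Nat.factorial]] at htaylor
  rw [Real.exp_neg, inv_le_comm₀ (Real.exp_pos _) (by positivity), mul_inv, inv_inv]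
  linarith

theorem pow_mul_inv_pow_le {x : ℝ} (hx : 1 ≤ x) {k l d : ℕ} (h : k + d ≤ l) :
    x ^ k * (x ^ l)⁻¹ ≤ (x ^ d)⁻¹ := by
  have : 0 < x := by linarith
  rw [← div_eq_mul_inv, div_le_iff₀ (by positivity), inv_mul_eq_div, le_div_iff₀ (by positivity),
    ← pow_add]
  exact pow_le_pow_right₀ hx h

variable {μ : ℝ} (hn1 : 0 < n1) (hn : n2 ≤ n1) (hμ : 0 < μ) (hL : 1 ≤ Real.log n1)
  (hμL : μ * Real.log n1 ^ 2 ≤ 1 / 10000000000)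
include hn1 hn hμ hL hμL

theorem golf_failure_le {K : ℕ} (hK0 : 0 < K) (hK : (K : ℝ) ≤ 3 * Real.log n1) :
    2 * (K * golfError n1 n2 (8 * K) μ) ≤ 2874009612 * ((n1 : ℝ) ^ 10)⁻¹ := by
  have hN : (1 : ℝ) ≤ n1 := by exact_mod_cast hn1
  have hn' : (n2 : ℝ) ≤ n1 := by exact_mod_cast hn
  have : (0 : ℝ) < K := by exact_mod_cast hK0
  have hKn : (K : ℝ) ≤ 3 * n1 := by
    linarith [Real.log_le_sub_one_of_pos (by linarith : (0 : ℝ) < n1)]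
  have hexp : Real.exp (-(1 / (32 * ((8 * K : ℕ) * μ)))) ≤ ((n1 : ℝ) ^ 20)⁻¹ := by
    refine exp_neg_one_div_le_inv_pow hn1 (by push_cast; positivity) ?_
    have hKμ : K * (Real.log n1 * μ) ≤ 3 * Real.log n1 * (Real.log n1 * μ) :=
      mul_le_mul_of_nonneg_right hK (by positivity)
    push_cast
    linarith
  have hentries : n1 * n2 * (2 * Real.exp (-(1 / (32 * ((8 * K : ℕ) * μ))))) ≤
      n1 * n1 * (2 * ((n1 : ℝ) ^ 20)⁻¹) := by gcongr
  calc 2 * (K * golfError n1 n2 (8 * K) μ)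
      ≤ 2 * (3 * n1 * (n1 * n1 * (2 * ((n1 : ℝ) ^ 20)⁻¹) + 479001600 * ((n1 : ℝ) ^ 12)⁻¹)) := by
        have herror := add_le_add hentries (exp_neg_natCast_le hn1)
        have hK0' := golfError_nonneg n1 n2 (8 * K) μ
        gcongr
        exact herror
    _ = 12 * ((n1 : ℝ) ^ 3 * ((n1 : ℝ) ^ 20)⁻¹) +
        2874009600 * ((n1 : ℝ) ^ 1 * ((n1 : ℝ) ^ 12)⁻¹) := by ring
    _ ≤ 12 * ((n1 : ℝ) ^ 10)⁻¹ + 2874009600 * ((n1 : ℝ) ^ 10)⁻¹ := by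
        gcongr <;> exact pow_mul_inv_pow_le hN (by norm_num)
    _ = 2874009612 * ((n1 : ℝ) ^ 10)⁻¹ := by ring

theorem sign_failure_le (hr : (r : ℝ) ≤ n1) :
    (n1 + n2) * (r * Real.exp (-(1 / (8000000 * μ)))) +
      (n1 * n2 * (2 * Real.exp (-(1 / (256 * μ)))) + Real.exp (-n1)) + Real.exp (-n1) ≤
      958003204 * ((n1 : ℝ) ^ 10)⁻¹ := by
  have hN : (1 : ℝ) ≤ n1 := by exact_mod_cast hn1
  have hn' : (n2 : ℝ) ≤ n1 := by exact_mod_cast hn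
  have hlogμ : Real.log n1 * μ ≤ 1 / 10000000000 := by nlinarith
  have hsupport : Real.exp (-(1 / (8000000 * μ))) ≤ ((n1 : ℝ) ^ 20)⁻¹ :=
    exp_neg_one_div_le_inv_pow hn1 (by positivity) (by linarith)
  have hentries : Real.exp (-(1 / (256 * μ))) ≤ ((n1 : ℝ) ^ 20)⁻¹ :=
    exp_neg_one_div_le_inv_pow hn1 (by positivity) (by linarith)
  have hnorm := exp_neg_natCast_le hn1
  calc (n1 + n2) * (r * Real.exp (-(1 / (8000000 * μ)))) +
        (n1 * n2 * (2 * Real.exp (-(1 / (256 * μ)))) + Real.exp (-n1)) + Real.exp (-n1)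
      ≤ (n1 + n1) * (n1 * ((n1 : ℝ) ^ 20)⁻¹) + (n1 * n1 * (2 * ((n1 : ℝ) ^ 20)⁻¹) +
        479001600 * ((n1 : ℝ) ^ 12)⁻¹) + 479001600 * ((n1 : ℝ) ^ 12)⁻¹ := by gcongr
    _ = 4 * ((n1 : ℝ) ^ 2 * ((n1 : ℝ) ^ 20)⁻¹) +
        958003200 * ((n1 : ℝ) ^ 0 * ((n1 : ℝ) ^ 12)⁻¹) := by ring
    _ ≤ 4 * ((n1 : ℝ) ^ 10)⁻¹ + 958003200 * ((n1 : ℝ) ^ 10)⁻¹ := by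
        gcongr <;> exact pow_mul_inv_pow_le hN (by norm_num)
    _ = 958003204 * ((n1 : ℝ) ^ 10)⁻¹ := by ring

end FailureProbability

theorem unifProb_not_hasDualCertificate_le_inv_pow (hU : Uᵀ * U = 1) (hV : Vᵀ * V = 1) {μ : ℝ}
    (hμ : 0 < μ) (hUi : ∀ i, ∑ k, U i k ^ 2 ≤ μ) (hVj : ∀ j, ∑ k, V j k ^ 2 ≤ μ)
    (hUV : ∀ i j, |(U * Vᵀ) i j| ≤ √(μ / n1)) (hn1 : 3 ≤ n1) (hn : n2 ≤ n1) {m : ℕ}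
    (hm : (m : ℝ) ≤ supportRate * (n1 * n2))
    (hμL : μ * Real.log n1 ^ 2 ≤ 1 / 10000000000) :
    unifProb (fun ω : SampleSpace n1 n2 m =>
      ¬ HasDualCertificate U V ω.1.1 (signOn ω.1.1 ω.2)) ≤
      3832012816 * ((n1 : ℝ) ^ 10)⁻¹ := by
  have hn1' : (3 : ℝ) ≤ n1 := by exact_mod_cast hn1
  have hL : 1 ≤ Real.log n1 := by
    rw [Real.le_log_iff_exp_le (by linarith)]
    linarith [Real.exp_one_lt_three]
  set K := Nat.clog 2 n1
  have hK0 : 0 < K := Nat.clog_pos one_lt_two (by omega)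
  have hK : (K : ℝ) ≤ 3 * Real.log n1 := clog_le_three_mul_log (by omega) hL
  have hQμ : (8 * K : ℕ) * √μ ≤ 1 / 1000 := by
    have hsqrt : √μ * Real.log n1 ≤ 1 / 100000 := by
      refine (abs_le_of_sq_le_sq' ?_ (by norm_num)).2
      rw [mul_pow, Real.sq_sqrt hμ.le]
      linarith
    have hKsqrt := mul_le_mul_of_nonneg_right hK (Real.sqrt_nonneg μ)
    push_cast
    linarith
  have hr : (r : ℝ) ≤ n1 := by
    have hμ1 : μ ≤ 1 := by nlinarith
    nlinarith [le_mul_of_transpose_mul_self_eq_one hU hUi]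
  have hfail := unifProb_not_hasDualCertificate_le hU hV hμ hUi hVj hUV (by omega) hn hm
    (Nat.le_pow_clog one_lt_two n1) (by omega : 0 < 8 * K) (by omega) hQμ
  have hgolf := golf_failure_le (by omega) hn hμ hL hμL hK0 hK
  have hsign := sign_failure_le (by omega) hn hμ hL hμL hr
  linarith

theorem mul_div_le_div_sq_of_le {ν n x L ρ : ℝ} (hν : 0 < ν) (hn : 0 < n)
    (hx : x ≤ ρ * n * ν⁻¹ * (L ^ 2)⁻¹) : ν * x / n ≤ ρ / L ^ 2 := by
  rw [div_le_iff₀ hn]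
  refine (mul_le_mul_of_nonneg_left hx hν.le).trans_eq ?_
  field_simp

theorem unifProb_not_hasDualCertificate_le_of_incoherent (hU : Uᵀ * U = 1) (hV : Vᵀ * V = 1)
    {ν : ℝ} (hν : 0 < ν) (hUν : ∀ i, ∑ k, U i k ^ 2 ≤ ν * r / n1)
    (hVν : ∀ j, ∑ k, V j k ^ 2 ≤ ν * r / n2)
    (hUVν : ∀ i j, |∑ k, U i k * V j k| ≤ √(ν * r / (n1 * n2)))
    (hn1 : 3 ≤ n1) (hn2 : 0 < n2) (hn : n2 ≤ n1)
    (hr : (r : ℝ) ≤ 1 / 10000000000 * n2 * ν⁻¹ * (Real.log n1 ^ 2)⁻¹) {m : ℕ}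
    (hm : (m : ℝ) ≤ supportRate * (n1 * n2)) :
    unifProb (fun ω : SampleSpace n1 n2 m =>
      ¬ HasDualCertificate U V ω.1.1 (signOn ω.1.1 ω.2)) ≤
      3832012816 * ((n1 : ℝ) ^ 10)⁻¹ := by
  have hn2' : (0 : ℝ) < n2 := by exact_mod_cast hn2
  have hn' : (n2 : ℝ) ≤ n1 := by exact_mod_cast hn
  have hlog : 0 < Real.log n1 := Real.log_pos (by exact_mod_cast (by omega : 1 < n1))
  set μ : ℝ := 1 / 10000000000 / Real.log n1 ^ 2
  have hVμ : ν * r / n2 ≤ μ := mul_div_le_div_sq_of_le hν hn2' hr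
  have hUμ : ν * r / n1 ≤ μ :=
    (div_le_div_of_nonneg_left (by positivity) hn2' hn').trans hVμ
  have hUV (i j) : |(U * Vᵀ) i j| ≤ √(μ / n1) := by
    refine (hUVν i j).trans (Real.sqrt_le_sqrt ?_)
    rw [mul_comm (n1 : ℝ), ← div_div]
    gcongr
  exact unifProb_not_hasDualCertificate_le_inv_pow hU hV (by positivity)
    (fun i => (hUν i).trans hUμ) (fun j => (hVν j).trans hVμ) hUV hn1 hn hm
    (div_mul_cancel₀ _ (pow_pos hlog 2).ne').le

theorem one_le_mul_inv_pow_of_lt_three {n : ℕ} (hn0 : 0 < n) (hn : n < 3) :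
    1 ≤ 3832012816 * ((n : ℝ) ^ 10)⁻¹ := by
  interval_cases n <;> norm_num

end DualCertificate

/-- existence of a dual certificate (W, F, H) with
UVᵀ + W = λ(sign(S0) + F + P_Ω H), W ∈ T⊥, ‖W‖ ≤ 1/2, P_Ω F = 0, ‖F‖_∞ ≤ 1/2,
‖P_Ω H‖_F ≤ 1/(260√2), with probability ≥ 1 − c·n1⁻¹⁰. -/
theorem dual_certificate_existence :
    ∃ ρr ρs c : ℝ, 0 < ρr ∧ ρr ≤ 1 / 10 ∧ 0 < ρs ∧ 0 < c ∧
      ∀ (n1 n2 r m : ℕ) (ν : ℝ), 0 < n2 → n2 ≤ n1 → 0 < ν →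
        ∀ (U : Matrix (Fin n1) (Fin r) ℝ) (V : Matrix (Fin n2) (Fin r) ℝ)
          (σ : Fin r → ℝ) (a : Fin n1 × Fin n2 → ℝ),
          Uᵀ * U = 1 → Vᵀ * V = 1 → (∀ k, 0 < σ k) → (∀ p, 0 < a p) →
          (∀ i : Fin n1, (∑ k, U i k ^ 2) ≤ ν * r / n1) →
          (∀ j : Fin n2, (∑ k, V j k ^ 2) ≤ ν * r / n2) →
          (∀ i j, |∑ k, U i k * V j k| ≤ Real.sqrt (ν * r / (n1 * n2))) →
          (r : ℝ) ≤ ρr * n2 * ν⁻¹ * ((Real.log n1) ^ 2)⁻¹ →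
          (m : ℝ) ≤ ρs * n1 * n2 →
          1 - c * ((n1 : ℝ) ^ 10)⁻¹ ≤
            unifProb (fun ω : SampleSpace n1 n2 m =>
              ∃ W F H : Matrix (Fin n1) (Fin n2) ℝ,
                U * Vᵀ + W =
                    (Real.sqrt n1)⁻¹ • (signM (sparseOf a ω) + F + projS ω.1.1 H) ∧
                memTperp U V W ∧ spec W ≤ 1 / 2 ∧
                projS ω.1.1 F = 0 ∧ (∀ i j, |F i j| ≤ 1 / 2) ∧
                frob (projS ω.1.1 H) ≤ 1 / (260 * Real.sqrt 2)) := by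
  refine ⟨1 / 10000000000, supportRate, 3832012816, by norm_num, by norm_num, supportRate_pos,
    by norm_num, ?_⟩
  intro n1 n2 r m ν hn2 hn hν U V _ a hU hV _ ha hUν hVν hUVν hr hm
  rcases Nat.lt_or_ge n1 3 with hsmall | hlarge
  · exact (sub_nonpos.mpr (one_le_mul_inv_pow_of_lt_three (by omega) hsmall)).trans
      (unifProb_nonneg _)
  have hm' : (m : ℝ) ≤ supportRate * (n1 * n2) := by rwa [← mul_assoc]
  have hfail := unifProb_not_hasDualCertificate_le_of_incoherent hU hV hν hUν hVν hUVν hlarge hn2 hn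
    hr hm'
  have : Nonempty (SampleSpace n1 n2 m) :=
    nonempty_sampleSpace (by linarith [two_mul_le_of_le_supportRate_mul hm'])
  simp_rw [signM_sparseOf ha]
  exact (sub_le_sub_left hfail 1).trans
    (sub_le_iff_le_add.mpr (unifProb_add_unifProb_not _).ge)
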